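/- arXiv:2412.14016 — 3 statements merged into one kernel-verified Lean document; each statement's English description precedes it below -/
import Mathlib

section
/- Let q ≥ 1, let {X_{i,j} : i ≥ 1, j ≥ 1} be a double array of integrable random variables satisfying Condition (H_{2q}), let {b_n : n ≥ 1} be an increasing sequence of positive constants, and let {λ_{m,n,i,j}} be positive constants with a_{m,n} = ∑_{s=1}^{m} ∑_{t=1}^{n} λ_{m,n,s,t} and X_{s,m,n} = −b_{2^s}·1(X_{m,n} < −b_{2^s}) + X_{m,n}·1(|X_{m,n}| ≤ b_{2^s}) + b_{2^s}·1(X_{m,n} > b_{2^s}). Then there exists a finite constant C(q) depending only on q such that for all ε > 0, m ≥ 1, n ≥ 1: if ∑_{i=1}^{2^m} ∑_{j=1}^{2^n} E( |X_{i,j}|·1(|X_{i,j}| > b_{2^{m+n}}) ) ≤ ε a_{m,n} and 6 ∑_{s=1}^{m} ∑_{t=1}^{n} 2^{s+t} b_{2^{s+t}} max_{1≤i<2^m, 1≤j<2^n} P(|X_{i,j}| > b_{2^{s+t−2}}) ≤ ε a_{m,n}, then P( max_{1≤u<2^m, 1≤v<2^n} |∑_{i=1}^{u} ∑_{j=1}^{v}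 (X_{i,j} − E X_{i,j})| ≥ 6 a_{m,n} ε ) ≤ ∑_{i=1}^{2^m} ∑_{j=1}^{2^n} P(|X_{i,j}| > b_{2^{m+n}}) + C(q) ε^{−2q} ∑_{s=1}^{m} ∑_{t=1}^{n} 2^{m+n} λ_{m,n,s,t}^{−2q} ( max_{1≤i<2^m, 1≤j<2^n} E|X_{s+t,i,j}|^{2q} + 2^{(s+t)(q−1)} max_{1≤i<2^m, 1≤j<2^n} (E X_{s+t,i,j}^2)^q ). -/
/-!
The proof is a dyadic chaining with adaptive truncation, after Rio. For `u < 2 ^ m` and `v < 2 ^ n`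
the binary expansions of `u` and `v` split `[1, u] × [1, v]` into cells `A_s × A_t`, where `A_s` is
empty or a dyadic interval of length `2 ^ (s - 1)`. On such a cell the variables are truncated at
the level `b (2 ^ (s + t))`. Passing from the top level `m + n` down to `s + t` one scale at a time,
first in the first coordinate and then in the second, and summing by parts, the corrections become
sums of `clampTwo (b (2 ^ c)) - clampTwo (b (2 ^ (c - 1)))` over the remainders of `[1, u]` and
`[1, v]` beyond a dyadic point (`abs_sum_le_chain`).

Such an increment is the sum of a nonnegative and a nonpositive nondecreasing function of the
variable (`clampTwo_sub`). By constancy of sign, a sum over a remainder is dominated by the sum over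
a full dyadic interval, up to the means (`abs_partial_sum_le`); the means are at most
`b (2 ^ c) * P(|X| > b (2 ^ (c - 1)))`, which the second smallness hypothesis controls. So the
maximum over `(u, v)` reduces to at most `4 * 2 ^ (m + n) / 2 ^ (s + t)` pairs of dyadic positions at
each pair of scales. For each of them Condition (H_{2q}) and Markov's inequality apply
(`tail_block`), because all the functions involved are nondecreasing and dominated in absolute value
by the truncation at level `s + t`.

With deviation threshold `ε * lam m n s t / 2` on each cell, the chaining sum is at most
`(5 / 2 + 4 / 6) * ε * a`, and replacing `X` by its top-level truncation costs a further `ε * a`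
outside the tail events (`truncation_cost`), for a total below `6 * ε * a`.
-/

open MeasureTheory ProbabilityTheory Finset Filter
open scoped NNReal ENNReal

noncomputable section

/-- `rlog x` is the natural logarithm of `max x 2`. -/
def rlog (x : ℝ) : ℝ := Real.log (max x 2)

/-- `itlog k x` is the `k`-fold iterate of `rlog` applied to `x`. -/
def itlog : ℕ → ℝ → ℝ
  | 0, x => x
  | k + 1, x => rlog (itlog k x)

/-- `logNu2 ν x = (log x)(log log x) ⋯ (log ⋯ log x)²`, the product of the first `ν`
iterated logarithms of `x`, with the last (`ν`-fold iterated) factor squared. -/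
def logNu2 (ν : ℕ) (x : ℝ) : ℝ := (∏ k ∈ Finset.Icc 1 ν, itlog k x) * itlog ν x

/-- The maximum of the (nonnegative) values `g i j` over `1 ≤ i ≤ M`, `1 ≤ j ≤ N`. -/
def maxNN (M N : ℕ) (g : ℕ → ℕ → ℝ) : ℝ :=
  (((Finset.Icc 1 M ×ˢ Finset.Icc 1 N).sup fun p => Real.toNNReal (g p.1 p.2) : ℝ≥0) : ℝ)

/-- `maxDS f m n = max_{1 ≤ u ≤ m, 1 ≤ v ≤ n} |∑_{i=1}^{u} ∑_{j=1}^{v} f i j|`. -/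
def maxDS (f : ℕ → ℕ → ℝ) (m n : ℕ) : ℝ :=
  maxNN m n fun u v => |∑ i ∈ Finset.Icc 1 u, ∑ j ∈ Finset.Icc 1 v, f i j|

/-- Index set of a doubly-indexed array: pairs of indices that are both at least `1`. -/
abbrev PIdx : Type := {k : ℕ × ℕ // 1 ≤ k.1 ∧ 1 ≤ k.2}

/-- Condition (H_{2q}) with a given constant `C`: for every finite subfamily and every
family of nondecreasing functions (whose relevant expectations are finite),
`E|∑ (f_λ(X_λ) - E f_λ(X_λ))|^{2q}
   ≤ C (|I| max E|f_λ(X_λ)|^{2q} + |I|^q max (E f_λ(X_λ)²)^q)`. -/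
def CondHWith {Ω : Type*} [MeasureSpace Ω] {Λ : Type*} (q C : ℝ) (X : Λ → Ω → ℝ) : Prop :=
  ∀ (I : Finset Λ) (hI : I.Nonempty) (f : Λ → ℝ → ℝ),
    (∀ l ∈ I, Monotone (f l)) →
    (∀ l ∈ I, Integrable fun ω => f l (X l ω)) →
    (∀ l ∈ I, Integrable fun ω => (f l (X l ω)) ^ 2) →
    (∀ l ∈ I, Integrable fun ω => |f l (X l ω)| ^ (2 * q)) →
    (Integrable fun ω => |∑ l ∈ I, (f l (X l ω) - ∫ ω', f l (X l ω'))| ^ (2 * q)) →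
    ∫ ω, |∑ l ∈ I, (f l (X l ω) - ∫ ω', f l (X l ω'))| ^ (2 * q) ≤
      C * ((I.card : ℝ) * I.sup' hI (fun l => ∫ ω, |f l (X l ω)| ^ (2 * q)) +
           (I.card : ℝ) ^ q * I.sup' hI fun l => (∫ ω, (f l (X l ω)) ^ 2) ^ q)

/-- Condition (H_{2q}): there is a finite constant for which `CondHWith` holds. -/
def CondH {Ω : Type*} [MeasureSpace Ω] {Λ : Type*} (q : ℝ) (X : Λ → Ω → ℝ) : Prop :=
  ∃ C : ℝ, CondHWith q C X

/-- The family `X` is stochastically dominated by the random variable `Y`: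
`sup_λ P(|X_λ| > x) ≤ P(|Y| > x)` for every real `x`. -/
def StochDom {Ω : Type*} [MeasureSpace Ω] {Λ : Type*} (X : Λ → Ω → ℝ) (Y : Ω → ℝ) : Prop :=
  ∀ x : ℝ, ∀ l : Λ, volume {ω | x < |X l ω|} ≤ volume {ω | x < |Y ω|}

/-- Uniform integrability: `sup_λ E(|Y_λ| 1(|Y_λ| > a)) → 0` as `a → ∞`. -/
def UnifInt {Ω : Type*} [MeasureSpace Ω] {Λ : Type*} (Y : Λ → Ω → ℝ) : Prop :=
  (∀ l, Integrable (Y l)) ∧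
  ∀ ε : ℝ, 0 < ε → ∃ a : ℝ, ∀ l, ∫ ω, (if a < |Y l ω| then |Y l ω| else 0) ≤ ε

/-- A slowly varying function: positive and measurable on `[0,∞)` with
`L(cx)/L(x) → 1` as `x → ∞` for every `c > 0`. -/
def SlowlyVarying (L : ℝ → ℝ) : Prop :=
  Measurable L ∧ (∀ x : ℝ, 0 ≤ x → 0 < L x) ∧
  ∀ c : ℝ, 0 < c → Tendsto (fun x => L (c * x) / L x) atTop (nhds 1)

/-- `Lt` is a de Bruijn conjugate of `L`. -/
def DeBruijnConjugate (L Lt : ℝ → ℝ) : Prop :=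
  SlowlyVarying Lt ∧
  Tendsto (fun x => L x * Lt (x * L x)) atTop (nhds 1) ∧
  Tendsto (fun x => Lt x * L (x * Lt x)) atTop (nhds 1)

/-- Truncation from above at level `b (2^s)`:
`X_{i,j} 1(X_{i,j} ≤ b_{2^s}) + b_{2^s} 1(X_{i,j} > b_{2^s})`. -/
def truncUp {Ω : Type*} (X : ℕ → ℕ → Ω → ℝ) (b : ℕ → ℝ) (s i j : ℕ) (ω : Ω) : ℝ :=
  if X i j ω ≤ b (2 ^ s) then X i j ω else b (2 ^ s)

/-- Two-sided truncation at level `b (2^s)`: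
`-b_{2^s} 1(X < -b_{2^s}) + X 1(|X| ≤ b_{2^s}) + b_{2^s} 1(X > b_{2^s})`. -/
def truncTwo {Ω : Type*} (X : ℕ → ℕ → Ω → ℝ) (b : ℕ → ℝ) (s i j : ℕ) (ω : Ω) : ℝ :=
  if X i j ω < -b (2 ^ s) then -b (2 ^ s)
  else if b (2 ^ s) < X i j ω then b (2 ^ s) else X i j ω

/-! ### Truncation and its increments -/

/-- The two-sided clamp of `x` to `[-β, β]`, so that `truncTwo X b s i j ω` unfolds to
`clampTwo (b (2 ^ s)) (X i j ω)`. -/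
def clampTwo (β x : ℝ) : ℝ := if x < -β then -β else if β < x then β else x

/-- The part of `x` lying between the levels `α` and `β`. -/
def incUp (α β x : ℝ) : ℝ := max 0 (min x β - α)

/-- The part of `x` lying between the levels `-β` and `-α`, counted negatively. -/
def incDn (α β x : ℝ) : ℝ := min 0 (max x (-β) + α)

lemma clampTwo_eq {β : ℝ} (hβ : 0 ≤ β) (x : ℝ) : clampTwo β x = max (-β) (min x β) := by
  unfold clampTwo
  split_ifs with h1 h2
  · rw [max_eq_left]; exact (min_le_left _ _).trans h1.le
  · rw [min_eq_right h2.le, max_eq_right (by linarith)]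
  · push Not at h1 h2
    rw [min_eq_left h2, max_eq_right h1]

lemma clampTwo_mono {β : ℝ} (hβ : 0 ≤ β) : Monotone (clampTwo β) := by
  intro x y h
  rw [clampTwo_eq hβ, clampTwo_eq hβ]
  gcongr

lemma abs_clampTwo_le {β : ℝ} (hβ : 0 ≤ β) (x : ℝ) : |clampTwo β x| ≤ β := by
  unfold clampTwo
  rw [abs_le]
  split_ifs <;> constructor <;> linarith

lemma incUp_mono (α β : ℝ) : Monotone (incUp α β) := by
  intro x y h; unfold incUp; gcongr

lemma incDn_mono (α β : ℝ) : Monotone (incDn α β) := by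
  intro x y h; unfold incDn; gcongr

lemma incUp_nonneg (α β x : ℝ) : 0 ≤ incUp α β x := le_max_left _ _

lemma incDn_nonpos (α β x : ℝ) : incDn α β x ≤ 0 := min_le_left _ _

lemma incDn_eq_neg (α β x : ℝ) : incDn α β x = - incUp α β (-x) := by
  unfold incDn incUp
  rcases le_total x (-β) with h | h
  · rw [max_eq_right h, min_eq_right (by linarith : β ≤ -x)]
    rcases le_total 0 (-β + α) with h' | h'
    · rw [min_eq_left h', max_eq_left (by linarith)]; simp
    · rw [min_eq_right h', max_eq_right (by linarith)]; ring
  · rw [max_eq_left h, min_eq_left (by linarith : -x ≤ β)]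
    rcases le_total 0 (x + α) with h' | h'
    · rw [min_eq_left h', max_eq_left (by linarith)]; simp
    · rw [min_eq_right h', max_eq_right (by linarith)]; ring

lemma clampTwo_neg {β : ℝ} (hβ : 0 ≤ β) (x : ℝ) : clampTwo β (-x) = - clampTwo β x := by
  unfold clampTwo
  split_ifs <;> linarith

lemma abs_incUp_le {α β : ℝ} (hα : 0 < α) (h : α ≤ β) (x : ℝ) :
    |incUp α β x| ≤ |clampTwo β x| := by
  rw [abs_of_nonneg (incUp_nonneg _ _ _)]
  unfold incUp
  refine max_le (abs_nonneg _) (le_trans ?_ (le_abs_self _))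
  rw [clampTwo_eq (by linarith)]
  exact le_trans (by linarith) (le_max_right _ _)

lemma abs_incDn_le {α β : ℝ} (hα : 0 < α) (h : α ≤ β) (x : ℝ) :
    |incDn α β x| ≤ |clampTwo β x| := by
  rw [incDn_eq_neg, abs_neg, ← abs_neg (clampTwo β x), ← clampTwo_neg (by linarith)]
  exact abs_incUp_le hα h _

lemma abs_incUp_le_ind {α β : ℝ} (hα : 0 < α) (h : α ≤ β) (x : ℝ) :
    |incUp α β x| ≤ if α < |x| then β else 0 := by
  rw [abs_of_nonneg (incUp_nonneg _ _ _)]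
  unfold incUp
  split_ifs with h1
  · exact max_le (by linarith) (by linarith [min_le_right x β])
  · exact max_le le_rfl (by linarith [min_le_left x β, le_abs_self x])

lemma abs_incDn_le_ind {α β : ℝ} (hα : 0 < α) (h : α ≤ β) (x : ℝ) :
    |incDn α β x| ≤ if α < |x| then β else 0 := by
  rw [incDn_eq_neg, abs_neg, ← abs_neg x]
  exact abs_incUp_le_ind hα h _

lemma clampTwo_sub {α β : ℝ} (hα : 0 < α) (h : α ≤ β) (x : ℝ) :
    clampTwo β x - clampTwo α x = incUp α β x + incDn α β x := by
  unfold clampTwo incUp incDn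
  rcases le_total x 0 with hx | hx
  · rw [min_eq_left (by linarith : x ≤ β), max_eq_left (by linarith : x - α ≤ 0)]
    split_ifs <;> first
      | (exfalso; linarith)
      | (rcases le_total x (-β) with h1 | h1 <;> simp only [max_eq_right, max_eq_left, h1] <;>
          first | (rw [min_eq_right (by linarith)]; linarith) | (rw [min_eq_left (by linarith)]; linarith))
  · rw [max_eq_left (by linarith : -β ≤ x), min_eq_left (by linarith : 0 ≤ x + α)]
    split_ifs <;> first
      | (exfalso; linarith)
      | (rcases le_total x β with h1 | h1 <;> simp only [min_eq_right, min_eq_left, h1] <;>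
          first | (rw [max_eq_right (by linarith)]; linarith) | (rw [max_eq_left (by linarith)]; linarith))

lemma abs_clampTwo_sub_le {β : ℝ} (hβ : 0 ≤ β) (x : ℝ) :
    |clampTwo β x - x| ≤ if β < |x| then |x| else 0 := by
  unfold clampTwo
  rcases abs_cases x with ⟨h, h'⟩ | ⟨h, h'⟩ <;> rw [h] <;> split_ifs <;> rw [abs_le] <;>
    constructor <;> linarith

/-! ### Maxima over a rectangle -/

lemma maxNN_nonneg (M N : ℕ) (g : ℕ → ℕ → ℝ) : 0 ≤ maxNN M N g := NNReal.coe_nonneg _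

lemma le_maxNN {M N : ℕ} (g : ℕ → ℕ → ℝ) {p : ℕ × ℕ}
    (hp : p ∈ Finset.Icc 1 M ×ˢ Finset.Icc 1 N) : g p.1 p.2 ≤ maxNN M N g := by
  refine (Real.le_coe_toNNReal _).trans ?_
  unfold maxNN
  rw [NNReal.coe_le_coe]
  exact Finset.le_sup (f := fun p : ℕ × ℕ => Real.toNNReal (g p.1 p.2)) hp

lemma exists_of_le_maxNN {M N : ℕ} {g : ℕ → ℕ → ℝ} {y : ℝ} (hy : 0 < y)
    (h : y ≤ maxNN M N g) :
    ∃ p ∈ Finset.Icc 1 M ×ˢ Finset.Icc 1 N, y ≤ g p.1 p.2 := by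
  by_contra! hc
  apply absurd h
  rw [not_le]
  have : (Finset.Icc 1 M ×ˢ Finset.Icc 1 N).sup
      (fun p : ℕ × ℕ => Real.toNNReal (g p.1 p.2)) < Real.toNNReal y := by
    rw [Finset.sup_lt_iff (by simpa using hy)]
    intro p hp
    exact (Real.toNNReal_lt_toNNReal_iff hy).2 (hc p hp)
  have h2 := NNReal.coe_lt_coe.2 this
  rwa [Real.coe_toNNReal _ hy.le] at h2

/-! ### Dyadic blocks -/

/-- With `k = u / 2 ^ (s - 1)`, the block of indices between the roundings of `u` down to a
multiple of `2 ^ s` and of `2 ^ (s - 1)`. -/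
def dyA (s k : ℕ) : Finset ℕ := Finset.Ioc (2 ^ s * (k / 2)) (2 ^ (s - 1) * k)

/-- With `k = u / 2 ^ (s - 1)`, a superset of `(2 ^ (s - 1) * k, u]` depending on `u` only
through `k`. -/
def dyE (s k : ℕ) : Finset ℕ := Finset.Ioo (2 ^ (s - 1) * k) (2 ^ (s - 1) * (k + 1))

lemma sum_chain_aux (y : ℕ → ℕ → ℝ) (u M : ℕ) :
    ∑ i ∈ Finset.Ioc (2 ^ M * (u / 2 ^ M)) u, y M i =
      ∑ s ∈ Finset.Icc 1 M, (∑ i ∈ dyA s (u / 2 ^ (s - 1)), y s i +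
        ∑ i ∈ Finset.Ioc (2 ^ (s - 1) * (u / 2 ^ (s - 1))) u, (y s i - y (s - 1) i)) := by
  induction M with
  | zero => simp
  | succ M ih =>
    rw [Finset.sum_Icc_succ_top (by omega), ← ih, Finset.sum_sub_distrib]
    simp only [dyA, Nat.add_sub_cancel, Nat.div_div_eq_div_mul, ← pow_succ]
    have h1 : 2 ^ (M + 1) * (u / 2 ^ (M + 1)) ≤ 2 ^ M * (u / 2 ^ M) := by
      rw [pow_succ, mul_assoc, ← Nat.div_div_eq_div_mul]
      exact Nat.mul_le_mul_left _ (Nat.mul_div_le _ _)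
    have h2 : 2 ^ M * (u / 2 ^ M) ≤ u := Nat.mul_div_le _ _
    rw [← Finset.sum_Ioc_consecutive _ h1 h2]
    ring

lemma sum_chain (y : ℕ → ℕ → ℝ) {u M : ℕ} (hu : u < 2 ^ M) :
    ∑ i ∈ Finset.Icc 1 u, y M i =
      ∑ s ∈ Finset.Icc 1 M, (∑ i ∈ dyA s (u / 2 ^ (s - 1)), y s i +
        ∑ i ∈ Finset.Ioc (2 ^ (s - 1) * (u / 2 ^ (s - 1))) u, (y s i - y (s - 1) i)) := by
  rw [← sum_chain_aux, Nat.div_eq_of_lt hu]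
  rfl

lemma card_dyA (s k : ℕ) (hs : 1 ≤ s) : (dyA s k).card ≤ 2 ^ (s - 1) := by
  obtain ⟨s, rfl⟩ := Nat.exists_eq_add_of_le' hs
  simp only [dyA, Nat.card_Ioc, Nat.add_sub_cancel, pow_succ]
  rw [mul_assoc, ← Nat.mul_sub]
  calc _ ≤ 2 ^ s * 1 := Nat.mul_le_mul_left _ (by omega)
    _ = _ := by simp

lemma card_dyE (s k : ℕ) : (dyE s k).card ≤ 2 ^ (s - 1) := by
  simp only [dyE, Nat.card_Ioo, mul_add]
  omega

lemma div_lt_pow {u m s : ℕ} (hu : u < 2 ^ m) (hs : 1 ≤ s) (hsm : s ≤ m) :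
    u / 2 ^ (s - 1) < 2 ^ (m - s + 1) := by
  rw [Nat.div_lt_iff_lt_mul (by positivity), ← pow_add]
  rwa [show m - s + 1 + (s - 1) = m by omega]

lemma block_le {m s k : ℕ} (hs : 1 ≤ s) (hsm : s ≤ m) (hk : k < 2 ^ (m - s + 1)) :
    2 ^ (s - 1) * (k + 1) ≤ 2 ^ m := by
  calc _ ≤ 2 ^ (s - 1) * 2 ^ (m - s + 1) := Nat.mul_le_mul_left _ hk
    _ = _ := by rw [← pow_add]; congr 1; omega

lemma dyA_subset {m s k : ℕ} (hs : 1 ≤ s) (hsm : s ≤ m) (hk : k < 2 ^ (m - s + 1)) :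
    dyA s k ⊆ Finset.Icc 1 (2 ^ m - 1) := by
  intro i hi
  have := block_le hs hsm hk
  have h2 : 0 < 2 ^ (s - 1) := by positivity
  rw [mul_add] at this
  simp only [dyA, Finset.mem_Ioc, Finset.mem_Icc] at hi ⊢
  omega

lemma dyE_subset {m s k : ℕ} (hs : 1 ≤ s) (hsm : s ≤ m) (hk : k < 2 ^ (m - s + 1)) :
    dyE s k ⊆ Finset.Icc 1 (2 ^ m - 1) := by
  intro i hi
  have := block_le hs hsm hk
  simp only [dyE, Finset.mem_Ioo, Finset.mem_Icc] at hi ⊢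
  omega

lemma Ioc_subset_dyE (u s : ℕ) :
    Finset.Ioc (2 ^ (s - 1) * (u / 2 ^ (s - 1))) u ⊆ dyE s (u / 2 ^ (s - 1)) := by
  intro i hi
  have := Nat.lt_mul_div_succ u (b := 2 ^ (s - 1)) (by positivity)
  simp only [dyE, Finset.mem_Ioo, Finset.mem_Ioc] at hi ⊢
  omega

/-- Two-dimensional chaining: the level used on the dyadic cell `(s, t)` is `s + t`. -/
lemma abs_sum_le_chain (x U D : ℕ → ℕ × ℕ → ℝ)
    (hx : ∀ c p, 1 ≤ c → 1 ≤ p.1 → 1 ≤ p.2 → x c p - x (c - 1) p = U c p + D c p)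
    {m n u v : ℕ} (hu : u < 2 ^ m) (hv : v < 2 ^ n) :
    |∑ p ∈ Finset.Icc 1 u ×ˢ Finset.Icc 1 v, x (m + n) p| ≤
      ∑ s ∈ Finset.Icc 1 m, ∑ t ∈ Finset.Icc 1 n,
        (|∑ p ∈ dyA s (u / 2 ^ (s - 1)) ×ˢ dyA t (v / 2 ^ (t - 1)), x (s + t) p| +
          |∑ p ∈ dyA s (u / 2 ^ (s - 1)) ×ˢ Finset.Ioc (2 ^ (t - 1) * (v / 2 ^ (t - 1))) v,
            U (s + t) p| +
          |∑ p ∈ dyA s (u / 2 ^ (s - 1)) ×ˢ Finset.Ioc (2 ^ (t - 1) * (v / 2 ^ (t - 1))) v,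
            D (s + t) p|) +
      ∑ s ∈ Finset.Icc 1 m,
        (|∑ p ∈ Finset.Ioc (2 ^ (s - 1) * (u / 2 ^ (s - 1))) u ×ˢ Finset.Icc 1 v,
            U (s + n) p| +
          |∑ p ∈ Finset.Ioc (2 ^ (s - 1) * (u / 2 ^ (s - 1))) u ×ˢ Finset.Icc 1 v,
            D (s + n) p|) := by
  have h1 := sum_chain (fun s i => ∑ j ∈ Finset.Icc 1 v, x (s + n) (i, j)) hu
  rw [Finset.sum_product, h1, Finset.sum_add_distrib]
  refine (abs_add_le _ _).trans (add_le_add ?_ ?_)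
  · refine (Finset.abs_sum_le_sum_abs _ _).trans (Finset.sum_le_sum fun s hs => ?_)
    have h2 := sum_chain
      (fun t j => ∑ i ∈ dyA s (u / 2 ^ (s - 1)), x (s + t) (i, j)) hv
    rw [Finset.sum_comm, h2]
    refine (Finset.abs_sum_le_sum_abs _ _).trans (Finset.sum_le_sum fun t ht => ?_)
    rw [add_assoc]
    refine (abs_add_le _ _).trans (add_le_add ?_ ?_)
    · rw [Finset.sum_product_right]
    · refine le_trans (le_of_eq ?_) (abs_add_le _ _)
      rw [← Finset.sum_add_distrib, Finset.sum_product_right]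
      congr 1
      refine Finset.sum_congr rfl fun j hj => ?_
      rw [← Finset.sum_sub_distrib]
      refine Finset.sum_congr rfl fun i hi => ?_
      simp only [dyA, Finset.mem_Ioc] at hi hj
      rw [← hx _ _ (by simp at ht; omega) (by simp; omega) (by simp; omega), Nat.add_sub_assoc (by simp at ht; omega)]
  · refine (Finset.abs_sum_le_sum_abs _ _).trans (Finset.sum_le_sum fun s hs => ?_)
    refine le_trans (le_of_eq ?_) (abs_add_le _ _)
    rw [← Finset.sum_add_distrib, Finset.sum_product]
    congr 1
    refine Finset.sum_congr rfl fun i hi => ?_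
    rw [← Finset.sum_sub_distrib]
    refine Finset.sum_congr rfl fun j hj => ?_
    simp only [Finset.mem_Icc, Finset.mem_Ioc] at hi hj
    rw [← hx _ _ (by simp at hs; omega) (by simp; omega) (by simp; omega), Nat.sub_add_comm (by simp at hs; omega)]

/-- Replacing a partial block by a full one costs only the means, since the summands have a
constant sign. -/
lemma abs_partial_sum_le {ι : Type*} {I J : Finset ι} (hJ : J ⊆ I) (g e : ι → ℝ) (δ : ℝ) (K : ℕ)
    (hg : (∀ p, 0 ≤ g p ∧ 0 ≤ e p) ∨ ∀ p, g p ≤ 0 ∧ e p ≤ 0) (he : ∀ p ∈ I, |e p| ≤ δ)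
    (hδ : 0 ≤ δ) (hK : I.card ≤ K) :
    |∑ p ∈ J, (g p - e p)| ≤ |∑ p ∈ I, (g p - e p)| + K * δ := by
  have hE : ∑ p ∈ I, |e p| ≤ K * δ :=
    calc _ ≤ ∑ p ∈ I, δ := Finset.sum_le_sum he
      _ = I.card * δ := by simp
      _ ≤ _ := by gcongr
  simp only [Finset.sum_sub_distrib]
  rcases hg with hg | hg
  · have a1 := Finset.sum_le_sum_of_subset_of_nonneg hJ (fun p _ _ => (hg p).1)
    have a2 := Finset.sum_le_sum_of_subset_of_nonneg hJ (fun p _ _ => (hg p).2)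
    have a3 : ∑ p ∈ I, |e p| = ∑ p ∈ I, e p :=
      Finset.sum_congr rfl fun p _ => abs_of_nonneg ((hg p).2)
    have a4 : 0 ≤ ∑ p ∈ J, g p := Finset.sum_nonneg fun p _ => (hg p).1
    have a5 : 0 ≤ ∑ p ∈ J, e p := Finset.sum_nonneg fun p _ => (hg p).2
    have a6 := le_abs_self (∑ p ∈ I, g p - ∑ p ∈ I, e p)
    have a7 := abs_nonneg (∑ p ∈ I, g p - ∑ p ∈ I, e p)
    rw [abs_le]
    constructor <;> linarith
  · have a1 := Finset.sum_le_sum_of_subset_of_nonneg hJ (fun p _ _ => neg_nonneg.2 (hg p).1)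
    have a2 := Finset.sum_le_sum_of_subset_of_nonneg hJ (fun p _ _ => neg_nonneg.2 (hg p).2)
    have a3 : ∑ p ∈ I, |e p| = ∑ p ∈ I, - e p :=
      Finset.sum_congr rfl fun p _ => abs_of_nonpos ((hg p).2)
    have a4 : 0 ≤ ∑ p ∈ J, - g p := Finset.sum_nonneg fun p _ => neg_nonneg.2 (hg p).1
    have a5 : 0 ≤ ∑ p ∈ J, - e p := Finset.sum_nonneg fun p _ => neg_nonneg.2 (hg p).2
    have a6 := neg_le_abs (∑ p ∈ I, g p - ∑ p ∈ I, e p)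
    have a7 := abs_nonneg (∑ p ∈ I, g p - ∑ p ∈ I, e p)
    simp only [Finset.sum_neg_distrib] at *
    rw [abs_le]
    constructor <;> linarith

/-! ### Moment bounds and the union bound -/

/-- Condition (H_{2q}) and Markov's inequality for one block of truncated variables. -/
lemma tail_block {Ω : Type} [MeasureSpace Ω] [IsProbabilityMeasure (volume : Measure Ω)]
    {q C₀ : ℝ} (hq : 1 ≤ q) {X : ℕ → ℕ → Ω → ℝ}
    (hX : ∀ i j : ℕ, 1 ≤ i → 1 ≤ j → Measurable (X i j))
    (hC : CondHWith q C₀ (fun k : PIdx => X k.1.1 k.1.2))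
    (b : ℕ → ℝ) (c : ℕ) (hb : 0 < b (2 ^ c)) (g : ℝ → ℝ) (hg : Monotone g)
    (hgb : ∀ x, |g x| ≤ |clampTwo (b (2 ^ c)) x|) {M N : ℕ} (I : Finset (ℕ × ℕ))
    (hI : I ⊆ Finset.Icc 1 M ×ˢ Finset.Icc 1 N) {K y : ℝ} (hK : (I.card : ℝ) ≤ K) (hy : 0 < y) :
    (volume : Measure Ω).real
        {ω | y ≤ |∑ p ∈ I, (g (X p.1 p.2 ω) - ∫ ω', g (X p.1 p.2 ω'))|} ≤
      |C₀| * y ^ (-(2 * q)) *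
        (K * maxNN M N (fun i j => ∫ ω, |truncTwo X b c i j ω| ^ (2 * q)) +
          K ^ q * maxNN M N (fun i j => (∫ ω, truncTwo X b c i j ω ^ 2) ^ q)) := by
  set A := maxNN M N (fun i j => ∫ ω, |truncTwo X b c i j ω| ^ (2 * q)) with hA
  set B := maxNN M N (fun i j => (∫ ω, truncTwo X b c i j ω ^ 2) ^ q) with hB
  have hA0 : 0 ≤ A := maxNN_nonneg _ _ _
  have hB0 : 0 ≤ B := maxNN_nonneg _ _ _
  have hK0 : 0 ≤ K := (Nat.cast_nonneg _).trans hK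
  have h2q : 0 < 2 * q := by linarith
  rcases I.eq_empty_or_nonempty with rfl | hne
  · simp only [Finset.sum_empty, abs_zero, not_le.2 hy, Set.ofPred_false, measureReal_empty]
    positivity
  set β := b (2 ^ c) with hβ
  have hgβ : ∀ x, |g x| ≤ β := fun x => (hgb x).trans (abs_clampTwo_le hb.le x)
  have hpos : ∀ p ∈ I, 1 ≤ p.1 ∧ 1 ≤ p.2 := fun p hp => by
    have := hI hp; simp at this; omega
  have hgm : ∀ p ∈ I, Measurable fun ω => g (X p.1 p.2 ω) := fun p hp =>
    hg.measurable.comp (hX _ _ (hpos p hp).1 (hpos p hp).2)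
  have hcm : ∀ p ∈ I, Measurable fun ω => clampTwo β (X p.1 p.2 ω) := fun p hp =>
    (clampTwo_mono hb.le).measurable.comp (hX _ _ (hpos p hp).1 (hpos p hp).2)
  -- every function integrated below is bounded and measurable
  have hbd : ∀ (f : Ω → ℝ) (R : ℝ), Measurable f → (∀ ω, |f ω| ≤ R) → Integrable f :=
    fun f R hf hR => Integrable.of_bound hf.aestronglyMeasurable R
      (Eventually.of_forall fun ω => by simpa using hR ω)
  have hpw : ∀ (f : Ω → ℝ) (R : ℝ), Measurable f → (∀ ω, |f ω| ≤ R) →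
      Integrable fun ω => |f ω| ^ (2 * q) := fun f R hf hR =>
    hbd _ (R ^ (2 * q)) (by fun_prop) (fun ω => by
      rw [abs_of_nonneg (by positivity)]
      exact Real.rpow_le_rpow (abs_nonneg _) (hR ω) h2q.le)
  have hsq : ∀ (f : Ω → ℝ) (R : ℝ), Measurable f → (∀ ω, |f ω| ≤ R) →
      Integrable fun ω => f ω ^ 2 := fun f R hf hR =>
    hbd _ (R ^ 2) (by fun_prop) (fun ω => by
      rw [abs_pow]
      exact pow_le_pow_left₀ (abs_nonneg _) (hR ω) 2)
  set S : Ω → ℝ := fun ω => ∑ p ∈ I, (g (X p.1 p.2 ω) - ∫ ω', g (X p.1 p.2 ω')) with hS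
  have hSm : Measurable S :=
    Finset.measurable_sum _ fun p hp => (hgm p hp).sub measurable_const
  have hSb : ∀ ω, |S ω| ≤ ∑ p ∈ I, (β + |∫ ω', g (X p.1 p.2 ω')|) := fun ω =>
    (Finset.abs_sum_le_sum_abs _ _).trans (Finset.sum_le_sum fun p _ =>
      (abs_sub _ _).trans (add_le_add (hgβ _) le_rfl))
  have hSint := hpw S _ hSm hSb
  let I' : Finset PIdx := I.subtype (fun k => 1 ≤ k.1 ∧ 1 ≤ k.2)
  have hsum : ∀ F : ℕ × ℕ → ℝ, ∑ k ∈ I', F k.1 = ∑ p ∈ I, F p := fun F =>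
    Finset.sum_subtype_of_mem F hpos
  have hcard : I'.card = I.card := by
    have := hsum (fun _ => 1); simpa using this
  have hne' : I'.Nonempty := by
    rw [← Finset.card_pos, hcard]; exact hne.card_pos
  have hmem : ∀ k ∈ I', k.1 ∈ I := fun k hk => by simpa [I'] using hk
  have hS' : ∀ ω, ∑ k ∈ I', (g (X k.1.1 k.1.2 ω) - ∫ ω', g (X k.1.1 k.1.2 ω')) = S ω :=
    fun ω => hsum (fun p => g (X p.1 p.2 ω) - ∫ ω', g (X p.1 p.2 ω'))
  have key := hC I' hne' (fun _ => g) (fun _ _ => hg)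
    (fun k hk => hbd _ β (hgm _ (hmem k hk)) fun _ => hgβ _)
    (fun k hk => hsq _ β (hgm _ (hmem k hk)) fun _ => hgβ _)
    (fun k hk => hpw _ β (hgm _ (hmem k hk)) fun _ => hgβ _)
    (by simp only [hS']; exact hSint)
  simp only [hS', hcard] at key
  have hsup1 : I'.sup' hne' (fun k => ∫ ω, |g (X k.1.1 k.1.2 ω)| ^ (2 * q)) ≤ A := by
    refine Finset.sup'_le _ _ fun k hk => ?_
    refine le_trans ?_ (le_maxNN (fun i j => ∫ ω, |truncTwo X b c i j ω| ^ (2 * q))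
      (hI (hmem k hk)))
    refine integral_mono (hpw _ β (hgm _ (hmem k hk)) fun _ => hgβ _)
      (hpw _ β (hcm _ (hmem k hk)) fun _ => abs_clampTwo_le hb.le _) fun ω => ?_
    exact Real.rpow_le_rpow (abs_nonneg _) (hgb _) h2q.le
  have hsup2 : I'.sup' hne' (fun k => (∫ ω, (g (X k.1.1 k.1.2 ω)) ^ 2) ^ q) ≤ B := by
    refine Finset.sup'_le _ _ fun k hk => ?_
    refine le_trans ?_ (le_maxNN (fun i j => (∫ ω, truncTwo X b c i j ω ^ 2) ^ q)
      (hI (hmem k hk)))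
    refine Real.rpow_le_rpow (integral_nonneg fun _ => sq_nonneg _) ?_ (by linarith)
    refine integral_mono (hsq _ β (hgm _ (hmem k hk)) fun _ => hgβ _)
      (hsq _ β (hcm _ (hmem k hk)) fun _ => abs_clampTwo_le hb.le _) fun ω => ?_
    exact sq_le_sq.2 (hgb _)
  have hsup1' : 0 ≤ I'.sup' hne' (fun k => ∫ ω, |g (X k.1.1 k.1.2 ω)| ^ (2 * q)) := by
    obtain ⟨k, hk⟩ := hne'
    exact le_trans (integral_nonneg fun _ => by positivity)
      (Finset.le_sup' (fun k : PIdx => ∫ ω, |g (X k.1.1 k.1.2 ω)| ^ (2 * q)) hk)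
  have hsup2' : 0 ≤ I'.sup' hne' (fun k => (∫ ω, (g (X k.1.1 k.1.2 ω)) ^ 2) ^ q) := by
    obtain ⟨k, hk⟩ := hne'
    exact le_trans (Real.rpow_nonneg (integral_nonneg fun _ => sq_nonneg _) _)
      (Finset.le_sup' (fun k : PIdx => (∫ ω, (g (X k.1.1 k.1.2 ω)) ^ 2) ^ q) hk)
  have hmom : ∫ ω, |S ω| ^ (2 * q) ≤ |C₀| * (K * A + K ^ q * B) := by
    refine key.trans ((mul_le_mul_of_nonneg_right (le_abs_self C₀) (by positivity)).trans ?_)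
    gcongr
  have hmk := mul_meas_ge_le_integral_of_nonneg (μ := (volume : Measure Ω))
    (Eventually.of_forall fun ω => by positivity) hSint (y ^ (2 * q))
  have hset : {ω | y ≤ |S ω|} ⊆ {ω | y ^ (2 * q) ≤ |S ω| ^ (2 * q)} := fun ω hω =>
    Real.rpow_le_rpow hy.le hω h2q.le
  have hyq : 0 < y ^ (2 * q) := Real.rpow_pos_of_pos hy _
  have h3 := mul_le_mul_of_nonneg_left
    (measureReal_mono (μ := (volume : Measure Ω)) hset) hyq.le
  have h4 : y ^ (2 * q) * (volume : Measure Ω).real {ω | y ≤ |S ω|} ≤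
      |C₀| * (K * A + K ^ q * B) := h3.trans (hmk.trans hmom)
  rw [Real.rpow_neg hy.le, mul_right_comm, mul_comm, inv_mul_eq_div, le_div_iff₀ hyq]
  linarith

/-- The event that the centred sum of `g (X i j)` over the cell `I` is at least `y`. -/
def devEv {Ω : Type} [MeasureSpace Ω] (X : ℕ → ℕ → Ω → ℝ) (g : ℝ → ℝ)
    (y : ℝ) (I : Finset (ℕ × ℕ)) : Set Ω :=
  {ω | y ≤ |∑ p ∈ I, (g (X p.1 p.2 ω) - ∫ ω', g (X p.1 p.2 ω'))|}

/-- The bad event attached to a pair `k`, `l` of dyadic positions at scales `s`, `t`. -/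
def badEv {Ω : Type} [MeasureSpace Ω] (X : ℕ → ℕ → Ω → ℝ) (b : ℕ → ℝ)
    (y : ℝ) (s t k l : ℕ) : Set Ω :=
  devEv X (clampTwo (b (2 ^ (s + t)))) y (dyA s k ×ˢ dyA t l) ∪
  devEv X (incUp (b (2 ^ (s + t - 1))) (b (2 ^ (s + t)))) y (dyA s k ×ˢ dyE t l) ∪
  devEv X (incDn (b (2 ^ (s + t - 1))) (b (2 ^ (s + t)))) y (dyA s k ×ˢ dyE t l) ∪
  devEv X (incUp (b (2 ^ (s + t - 1))) (b (2 ^ (s + t)))) y (dyE s k ×ˢ Finset.Icc 1 (2 ^ t - 1)) ∪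
  devEv X (incDn (b (2 ^ (s + t - 1))) (b (2 ^ (s + t)))) y (dyE s k ×ˢ Finset.Icc 1 (2 ^ t - 1))

lemma card_prod_le {I J : Finset ℕ} {s t : ℕ} (hI : I.card ≤ 2 ^ s) (hJ : J.card ≤ 2 ^ t) :
    (I ×ˢ J).card ≤ 2 ^ (s + t) := by
  rw [Finset.card_product, pow_add]; exact Nat.mul_le_mul hI hJ

lemma card_dyA' (s k : ℕ) (hs : 1 ≤ s) : (dyA s k).card ≤ 2 ^ s :=
  (card_dyA s k hs).trans (Nat.pow_le_pow_right (by norm_num) (Nat.sub_le _ _))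

lemma card_dyE' (s k : ℕ) : (dyE s k).card ≤ 2 ^ s :=
  (card_dyE s k).trans (Nat.pow_le_pow_right (by norm_num) (Nat.sub_le _ _))

lemma card_Icc_pow (t : ℕ) : (Finset.Icc 1 (2 ^ t - 1)).card ≤ 2 ^ t := by simp

lemma Icc_pow_subset {t n : ℕ} (h : t ≤ n) :
    Finset.Icc 1 (2 ^ t - 1) ⊆ Finset.Icc 1 (2 ^ n - 1) := by
  have : 2 ^ t ≤ 2 ^ n := Nat.pow_le_pow_right (by norm_num) h
  exact Finset.Icc_subset_Icc_right (by omega)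

lemma badEv_le {Ω : Type} [MeasureSpace Ω] [IsProbabilityMeasure (volume : Measure Ω)]
    {q C₀ : ℝ} (hq : 1 ≤ q) {X : ℕ → ℕ → Ω → ℝ}
    (hX : ∀ i j : ℕ, 1 ≤ i → 1 ≤ j → Measurable (X i j))
    (hC : CondHWith q C₀ (fun k : PIdx => X k.1.1 k.1.2))
    {b : ℕ → ℝ} (hbm : Monotone b) (hb : ∀ n : ℕ, 1 ≤ n → 0 < b n) {y : ℝ} (hy : 0 < y)
    {m n s t k l : ℕ} (hs : 1 ≤ s) (hsm : s ≤ m) (ht : 1 ≤ t) (htn : t ≤ n)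
    (hk : k < 2 ^ (m - s + 1)) (hl : l < 2 ^ (n - t + 1)) :
    (volume : Measure Ω).real (badEv X b y s t k l) ≤
      5 * (|C₀| * y ^ (-(2 * q)) *
        ((2 : ℝ) ^ (s + t) * maxNN (2 ^ m - 1) (2 ^ n - 1)
            (fun i j => ∫ ω, |truncTwo X b (s + t) i j ω| ^ (2 * q)) +
          ((2 : ℝ) ^ (s + t)) ^ q * maxNN (2 ^ m - 1) (2 ^ n - 1)
            (fun i j => (∫ ω, truncTwo X b (s + t) i j ω ^ 2) ^ q))) := by
  have hβ : ∀ c, 0 < b (2 ^ c) := fun c => hb _ Nat.one_le_two_pow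
  have hαβ : b (2 ^ (s + t - 1)) ≤ b (2 ^ (s + t)) :=
    hbm (Nat.pow_le_pow_right (by norm_num) (Nat.sub_le _ _))
  have T := fun g hg hgb I hI (hK : Finset.card I ≤ 2 ^ (s + t)) =>
    tail_block hq hX hC b (s + t) (hβ _) g hg hgb (M := 2 ^ m - 1) (N := 2 ^ n - 1) I hI
    (K := (2 : ℝ) ^ (s + t)) (y := y) (by exact_mod_cast hK) hy
  have hA := dyA_subset hs hsm hk
  have hE := dyE_subset hs hsm hk
  have hA' := dyA_subset ht htn hl
  have hE' := dyE_subset ht htn hl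
  have e1 := T _ (clampTwo_mono (hβ _).le) (fun _ => le_rfl) (dyA s k ×ˢ dyA t l)
    (Finset.product_subset_product hA hA') (card_prod_le (card_dyA' _ _ hs) (card_dyA' _ _ ht))
  have e2 := T _ (incUp_mono _ _) (abs_incUp_le (hβ _) hαβ) (dyA s k ×ˢ dyE t l)
    (Finset.product_subset_product hA hE') (card_prod_le (card_dyA' _ _ hs) (card_dyE' _ _))
  have e3 := T _ (incDn_mono _ _) (abs_incDn_le (hβ _) hαβ) (dyA s k ×ˢ dyE t l)
    (Finset.product_subset_product hA hE') (card_prod_le (card_dyA' _ _ hs) (card_dyE' _ _))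
  have e4 := T _ (incUp_mono _ _) (abs_incUp_le (hβ _) hαβ) (dyE s k ×ˢ Finset.Icc 1 (2 ^ t - 1))
    (Finset.product_subset_product hE (Icc_pow_subset htn))
    (card_prod_le (card_dyE' _ _) (card_Icc_pow _))
  have e5 := T _ (incDn_mono _ _) (abs_incDn_le (hβ _) hαβ) (dyE s k ×ˢ Finset.Icc 1 (2 ^ t - 1))
    (Finset.product_subset_product hE (Icc_pow_subset htn))
    (card_prod_le (card_dyE' _ _) (card_Icc_pow _))
  unfold badEv
  refine (measureReal_union_le _ _).trans ?_
  refine (add_le_add_left (measureReal_union_le _ _) _).trans ?_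
  refine (add_le_add_left (add_le_add_left (measureReal_union_le _ _) _) _).trans ?_
  refine (add_le_add_left (add_le_add_left (add_le_add_left
    (measureReal_union_le _ _) _) _) _).trans ?_
  unfold devEv
  linarith

/-- There are `4 * 2 ^ (m + n) / 2 ^ (s + t)` pairs of positions at scales `s`, `t`, which turns
the moment bound for single cells into the summand of the maximal inequality. -/
lemma sum_badEv_le {Ω : Type} [MeasureSpace Ω] [IsProbabilityMeasure (volume : Measure Ω)]
    {q C₀ : ℝ} (hq : 1 ≤ q) {X : ℕ → ℕ → Ω → ℝ}
    (hX : ∀ i j : ℕ, 1 ≤ i → 1 ≤ j → Measurable (X i j))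
    (hC : CondHWith q C₀ (fun k : PIdx => X k.1.1 k.1.2))
    {b : ℕ → ℝ} (hbm : Monotone b) (hb : ∀ n : ℕ, 1 ≤ n → 0 < b n) {ε L : ℝ} (hε : 0 < ε)
    (hL : 0 < L) {m n s t : ℕ} (hs : 1 ≤ s) (hsm : s ≤ m) (ht : 1 ≤ t) (htn : t ≤ n) :
    ∑ k ∈ Finset.range (2 ^ (m - s + 1)), ∑ l ∈ Finset.range (2 ^ (n - t + 1)),
      (volume : Measure Ω).real (badEv X b (ε * L / 2) s t k l) ≤
      20 * |C₀| * 2 ^ (2 * q) * ε ^ (-(2 * q)) * ((2 : ℝ) ^ (m + n) * L ^ (-(2 * q)) *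
        (maxNN (2 ^ m - 1) (2 ^ n - 1)
            (fun i j => ∫ ω, |truncTwo X b (s + t) i j ω| ^ (2 * q)) +
          (2 : ℝ) ^ (((s + t : ℕ) : ℝ) * (q - 1)) * maxNN (2 ^ m - 1) (2 ^ n - 1)
            (fun i j => (∫ ω, truncTwo X b (s + t) i j ω ^ 2) ^ q))) := by
  have hy : 0 < ε * L / 2 := by positivity
  refine (Finset.sum_le_sum fun k hk => Finset.sum_le_sum fun l hl =>
    badEv_le hq hX hC hbm hb hy hs hsm ht htn (Finset.mem_range.1 hk)
      (Finset.mem_range.1 hl)).trans (le_of_eq ?_)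
  generalize maxNN (2 ^ m - 1) (2 ^ n - 1)
    (fun i j => ∫ ω, |truncTwo X b (s + t) i j ω| ^ (2 * q)) = A
  generalize maxNN (2 ^ m - 1) (2 ^ n - 1)
    (fun i j => (∫ ω, truncTwo X b (s + t) i j ω ^ 2) ^ q) = B
  simp only [Finset.sum_const, Finset.card_range, nsmul_eq_mul]
  have h1 : (ε * L / 2) ^ (-(2 * q)) = ε ^ (-(2 * q)) * L ^ (-(2 * q)) * 2 ^ (2 * q) := by
    rw [Real.div_rpow (by positivity) (by norm_num), Real.mul_rpow hε.le hL.le,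
      Real.rpow_neg (by norm_num : (0 : ℝ) ≤ 2), div_inv_eq_mul]
  have h2 : ((2 : ℝ) ^ (s + t)) ^ q =
      (2 : ℝ) ^ (s + t) * (2 : ℝ) ^ (((s + t : ℕ) : ℝ) * (q - 1)) := by
    rw [← Real.rpow_natCast, ← Real.rpow_mul (by norm_num), ← Real.rpow_add (by norm_num)]
    congr 1; ring
  have h3 : (2 : ℝ) ^ (m - s + 1) * (2 : ℝ) ^ (n - t + 1) * (2 : ℝ) ^ (s + t) =
      4 * (2 : ℝ) ^ (m + n) := by
    rw [← pow_add, ← pow_add, show m - s + 1 + (n - t + 1) + (s + t) = 2 + (m + n) by omega,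
      pow_add]
    norm_num
  rw [h1, h2]
  push_cast
  linear_combination (5 * |C₀| * 2 ^ (2 * q) * ε ^ (-(2 * q)) * L ^ (-(2 * q)) *
    (A + (2 : ℝ) ^ (((s : ℝ) + t) * (q - 1)) * B)) * h3

/-! ### The maximal sum outside the bad events -/

/-- Truncating at the top level changes neither the summands, outside the tail events, nor the
means by more than the truncated first moments. -/
lemma truncation_cost {Ω : Type} [MeasureSpace Ω] [IsProbabilityMeasure (volume : Measure Ω)]
    {X : ℕ → ℕ → Ω → ℝ} (hX : ∀ i j : ℕ, 1 ≤ i → 1 ≤ j → Measurable (X i j))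
    (hXi : ∀ i j : ℕ, 1 ≤ i → 1 ≤ j → Integrable (X i j)) {β : ℝ} (hβ : 0 ≤ β) {ω : Ω}
    {M N u v : ℕ} (hu : u ≤ M) (hv : v ≤ N)
    (hω : ∀ i ∈ Finset.Icc 1 M, ∀ j ∈ Finset.Icc 1 N, |X i j ω| ≤ β) :
    |∑ i ∈ Finset.Icc 1 u, ∑ j ∈ Finset.Icc 1 v, (X i j ω - ∫ ω', X i j ω')| ≤
      |∑ i ∈ Finset.Icc 1 u, ∑ j ∈ Finset.Icc 1 v,
        (clampTwo β (X i j ω) - ∫ ω', clampTwo β (X i j ω'))| +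
      ∑ i ∈ Finset.Icc 1 M, ∑ j ∈ Finset.Icc 1 N,
        ∫ ω', (if β < |X i j ω'| then |X i j ω'| else 0) := by
  have hnn : ∀ i j, 0 ≤ ∫ ω', (if β < |X i j ω'| then |X i j ω'| else 0) := fun i j =>
    integral_nonneg fun ω' => by dsimp; split_ifs <;> positivity
  have hcell : ∀ i ∈ Finset.Icc 1 u, ∀ j ∈ Finset.Icc 1 v,
      |(X i j ω - ∫ ω', X i j ω') - (clampTwo β (X i j ω) - ∫ ω', clampTwo β (X i j ω'))| ≤
        ∫ ω', (if β < |X i j ω'| then |X i j ω'| else 0) := by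
    intro i hi j hj
    rw [Finset.mem_Icc] at hi hj
    have hm := hX i j hi.1 hj.1
    have hI := hXi i j hi.1 hj.1
    have hcl : clampTwo β (X i j ω) = X i j ω := by
      have := abs_clampTwo_sub_le hβ (X i j ω)
      rw [if_neg (not_lt.2 (hω i (by simp; omega) j (by simp; omega)))] at this
      linarith [abs_nonpos_iff.1 this]
    have hcI : Integrable fun ω' => clampTwo β (X i j ω') :=
      Integrable.of_bound ((clampTwo_mono hβ).measurable.comp hm).aestronglyMeasurable β
        (Eventually.of_forall fun ω' => abs_clampTwo_le hβ _)
    have hT : Integrable fun ω' => (if β < |X i j ω'| then |X i j ω'| else 0) := by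
      have := hI.abs.indicator (measurableSet_lt measurable_const hm.abs :
        MeasurableSet {ω' | β < |X i j ω'|})
      refine this.congr (Eventually.of_forall fun ω' => ?_)
      simp [Set.indicator_apply]
    rw [hcl, show ∀ p r s : ℝ, (p - r) - (p - s) = s - r by intros; ring, ← integral_sub hcI hI]
    refine (abs_integral_le_integral_abs).trans
      (integral_mono (hcI.sub hI).abs hT fun ω' => abs_clampTwo_sub_le hβ _)
  have hdiff := calc
    |∑ i ∈ Finset.Icc 1 u, ∑ j ∈ Finset.Icc 1 v, ((X i j ω - ∫ ω', X i j ω') -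
        (clampTwo β (X i j ω) - ∫ ω', clampTwo β (X i j ω')))|
      ≤ ∑ i ∈ Finset.Icc 1 u, ∑ j ∈ Finset.Icc 1 v,
          ∫ ω', (if β < |X i j ω'| then |X i j ω'| else 0) := by
        refine (Finset.abs_sum_le_sum_abs _ _).trans (Finset.sum_le_sum fun i hi => ?_)
        exact (Finset.abs_sum_le_sum_abs _ _).trans (Finset.sum_le_sum fun j hj => hcell i hi j hj)
    _ ≤ ∑ i ∈ Finset.Icc 1 u, ∑ j ∈ Finset.Icc 1 N,
          ∫ ω', (if β < |X i j ω'| then |X i j ω'| else 0) :=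
        Finset.sum_le_sum fun i _ => Finset.sum_le_sum_of_subset_of_nonneg
          (Finset.Icc_subset_Icc_right hv) fun j _ _ => hnn i j
    _ ≤ _ := Finset.sum_le_sum_of_subset_of_nonneg
          (Finset.Icc_subset_Icc_right hu) fun i _ _ => Finset.sum_nonneg fun j _ => hnn i j
  rw [Finset.sum_congr rfl fun i _ => Finset.sum_sub_distrib _ _, Finset.sum_sub_distrib] at hdiff
  have := abs_sub_abs_le_abs_sub
    (∑ i ∈ Finset.Icc 1 u, ∑ j ∈ Finset.Icc 1 v, (X i j ω - ∫ ω', X i j ω'))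
    (∑ i ∈ Finset.Icc 1 u, ∑ j ∈ Finset.Icc 1 v,
        (clampTwo β (X i j ω) - ∫ ω', clampTwo β (X i j ω')))
  linarith

/-- A level increment is supported where `|X i j|` exceeds the lower level, so its mean is at most
the higher level times a tail probability. -/
lemma abs_mean_le {Ω : Type} [MeasureSpace Ω] [IsProbabilityMeasure (volume : Measure Ω)]
    {X : ℕ → ℕ → Ω → ℝ} (hX : ∀ i j : ℕ, 1 ≤ i → 1 ≤ j → Measurable (X i j))
    {α α' β : ℝ} (hα : α' ≤ α) (hβ : 0 ≤ β) {g : ℝ → ℝ} (hg : Monotone g)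
    (hgb : ∀ x, |g x| ≤ if α < |x| then β else 0) {M N : ℕ} {p : ℕ × ℕ}
    (hp : p ∈ Finset.Icc 1 M ×ˢ Finset.Icc 1 N) :
    |∫ ω, g (X p.1 p.2 ω)| ≤
      β * maxNN M N (fun i j => (volume {ω | α' < |X i j ω|}).toReal) := by
  have hp' : 1 ≤ p.1 ∧ 1 ≤ p.2 := by simp at hp; omega
  have hm := hX _ _ hp'.1 hp'.2
  have hms : MeasurableSet {ω | α' < |X p.1 p.2 ω|} := measurableSet_lt measurable_const hm.abs
  have hle : ∀ ω, |g (X p.1 p.2 ω)| ≤ Set.indicator {ω | α' < |X p.1 p.2 ω|} (fun _ => β) ω := by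
    intro ω
    refine (hgb _).trans ?_
    rw [Set.indicator_apply]
    by_cases h : α < |X p.1 p.2 ω|
    · rw [if_pos h, if_pos (show ω ∈ {ω | α' < |X p.1 p.2 ω|} from hα.trans_lt h)]
    · rw [if_neg h]; split_ifs <;> linarith
  have hint : Integrable fun ω => g (X p.1 p.2 ω) :=
    Integrable.of_bound (hg.measurable.comp hm).aestronglyMeasurable β
      (Eventually.of_forall fun ω => (hgb _).trans (by split_ifs <;> linarith))
  calc _ ≤ ∫ ω, |g (X p.1 p.2 ω)| := abs_integral_le_integral_abs
    _ ≤ ∫ ω, Set.indicator {ω | α' < |X p.1 p.2 ω|} (fun _ => β) ω :=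
        integral_mono hint.abs ((integrable_const β).indicator hms) hle
    _ = β * (volume {ω | α' < |X p.1 p.2 ω|}).toReal := by
        rw [integral_indicator_const _ hms, smul_eq_mul, mul_comm]; rfl
    _ ≤ _ := mul_le_mul_of_nonneg_left
        (le_maxNN (fun i j => (volume {ω | α' < |X i j ω|}).toReal) hp) hβ

/-- Outside the bad events, the five sums attached to a dyadic cell each contribute at most
`ε * L s t / 2`, and the four that are extended to full cells also contribute their means. The two
sums with the second coordinate unrestricted occur only at the scale `t = n`. -/
lemma clamped_sum_le {Ω : Type} [MeasureSpace Ω] [IsProbabilityMeasure (volume : Measure Ω)]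
    {X : ℕ → ℕ → Ω → ℝ} (hX : ∀ i j : ℕ, 1 ≤ i → 1 ≤ j → Measurable (X i j))
    {b : ℕ → ℝ} (hbm : Monotone b) (hb : ∀ n : ℕ, 1 ≤ n → 0 < b n) {ε : ℝ} (hε : 0 < ε)
    {m n : ℕ} {L : ℕ → ℕ → ℝ}
    (hL : ∀ s ∈ Finset.Icc 1 m, ∀ t ∈ Finset.Icc 1 n, 0 < L s t) (hn : 1 ≤ n)
    {ω : Ω} {u v : ℕ} (hu : u < 2 ^ m) (hv : v < 2 ^ n)
    (hω : ∀ s ∈ Finset.Icc 1 m, ∀ t ∈ Finset.Icc 1 n, ∀ k < 2 ^ (m - s + 1),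
      ∀ l < 2 ^ (n - t + 1), ω ∉ badEv X b (ε * L s t / 2) s t k l) :
    |∑ p ∈ Finset.Icc 1 u ×ˢ Finset.Icc 1 v, (clampTwo (b (2 ^ (m + n))) (X p.1 p.2 ω) -
        ∫ ω', clampTwo (b (2 ^ (m + n))) (X p.1 p.2 ω'))| ≤
      5 / 2 * (ε * ∑ s ∈ Finset.Icc 1 m, ∑ t ∈ Finset.Icc 1 n, L s t) +
      4 * ∑ s ∈ Finset.Icc 1 m, ∑ t ∈ Finset.Icc 1 n,
          (2 : ℝ) ^ (s + t) * b (2 ^ (s + t)) *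
            maxNN (2 ^ m - 1) (2 ^ n - 1)
              (fun i j => (volume {ω | b (2 ^ (s + t - 2)) < |X i j ω|}).toReal) := by
  have hβ : ∀ c, 0 < b (2 ^ c) := fun c => hb _ Nat.one_le_two_pow
  have hbp : ∀ {c d : ℕ}, c ≤ d → b (2 ^ c) ≤ b (2 ^ d) := fun h =>
    hbm (Nat.pow_le_pow_right (by norm_num) h)
  set G : (ℝ → ℝ) → ℕ × ℕ → ℝ := fun g p => g (X p.1 p.2 ω) - ∫ ω', g (X p.1 p.2 ω') with hG
  set P : ℕ → ℝ := fun c => maxNN (2 ^ m - 1) (2 ^ n - 1)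
    (fun i j => (volume {ω | b (2 ^ (c - 2)) < |X i j ω|}).toReal) with hP
  have hP0 : ∀ c, 0 ≤ P c := fun c => maxNN_nonneg _ _ _
  have hchain := abs_sum_le_chain (fun c => G (clampTwo (b (2 ^ c))))
    (fun c => G (incUp (b (2 ^ (c - 1))) (b (2 ^ c))))
    (fun c => G (incDn (b (2 ^ (c - 1))) (b (2 ^ c)))) ?_ hu hv
  swap
  · intro c p hc h1 h2
    have hm := hX _ _ h1 h2
    have hαβ : b (2 ^ (c - 1)) ≤ b (2 ^ c) := hbp (Nat.sub_le _ _)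
    have hI : ∀ g : ℝ → ℝ, Monotone g → (∀ x, |g x| ≤ b (2 ^ c)) →
        Integrable fun ω' => g (X p.1 p.2 ω') := fun g hg hgb =>
      Integrable.of_bound (hg.measurable.comp hm).aestronglyMeasurable _
        (Eventually.of_forall fun ω => hgb _)
    have i1 := hI _ (clampTwo_mono (hβ c).le) (abs_clampTwo_le (hβ c).le)
    have i2 := hI _ (clampTwo_mono (hβ (c - 1)).le)
      fun x => (abs_clampTwo_le (hβ (c - 1)).le x).trans hαβ
    have i3 := hI _ (incUp_mono (b (2 ^ (c - 1))) (b (2 ^ c)))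
      fun x => (abs_incUp_le (hβ _) hαβ x).trans (abs_clampTwo_le (hβ c).le x)
    have i4 := hI _ (incDn_mono (b (2 ^ (c - 1))) (b (2 ^ c)))
      fun x => (abs_incDn_le (hβ _) hαβ x).trans (abs_clampTwo_le (hβ c).le x)
    have e1 := clampTwo_sub (hβ _) hαβ (X p.1 p.2 ω)
    have e2 : (∫ ω', clampTwo (b (2 ^ c)) (X p.1 p.2 ω')) -
        (∫ ω', clampTwo (b (2 ^ (c - 1))) (X p.1 p.2 ω')) =
        (∫ ω', incUp (b (2 ^ (c - 1))) (b (2 ^ c)) (X p.1 p.2 ω')) +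
        (∫ ω', incDn (b (2 ^ (c - 1))) (b (2 ^ c)) (X p.1 p.2 ω')) := by
      rw [← integral_sub i1 i2, ← integral_add i3 i4]
      exact integral_congr_ae (Eventually.of_forall fun ω' => clampTwo_sub (hβ _) hαβ _)
    simp only [hG]
    linarith
  refine hchain.trans ?_
  -- a partial cell is dominated by the full cell, whose deviation is below `y`
  have hpart : ∀ (s t : ℕ) (g : ℝ → ℝ), 1 ≤ s → 1 ≤ t → Monotone g →
      ((∀ x, 0 ≤ g x) ∨ ∀ x, g x ≤ 0) →
      (∀ x, |g x| ≤ if b (2 ^ (s + t - 1)) < |x| then b (2 ^ (s + t)) else 0) →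
      ∀ (I J : Finset (ℕ × ℕ)) (y : ℝ), J ⊆ I →
        I ⊆ Finset.Icc 1 (2 ^ m - 1) ×ˢ Finset.Icc 1 (2 ^ n - 1) → I.card ≤ 2 ^ (s + t) →
        ω ∉ devEv X g y I →
        |∑ p ∈ J, G g p| ≤ y + (2 : ℝ) ^ (s + t) * b (2 ^ (s + t)) * P (s + t) := by
    intro s t g hs ht hg hsgn hgb I J y hJ hI hK hy
    have hy' : |∑ p ∈ I, G g p| < y := not_le.1 hy
    have := abs_partial_sum_le hJ (fun p => g (X p.1 p.2 ω)) (fun p => ∫ ω', g (X p.1 p.2 ω'))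
      (b (2 ^ (s + t)) * P (s + t)) (2 ^ (s + t))
      (hsgn.imp (fun h p => ⟨h _, integral_nonneg fun _ => h _⟩)
        (fun h p => ⟨h _, integral_nonpos fun _ => h _⟩))
      (fun p hp => abs_mean_le hX (hbp (by omega)) (hβ _).le hg hgb (hI hp))
      (mul_nonneg (hβ _).le (hP0 _)) hK
    push_cast at this
    simp only [hG] at hy' ⊢
    rw [mul_assoc]
    linarith
  set δ : ℕ → ℕ → ℝ := fun s t => (2 : ℝ) ^ (s + t) * b (2 ^ (s + t)) * P (s + t) with hδ
  have hδ0 : ∀ s t, 0 ≤ δ s t := fun s t =>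
    mul_nonneg (mul_nonneg (by positivity) (hβ _).le) (hP0 _)
  have hu' : ∀ s ∈ Finset.Icc 1 m, u / 2 ^ (s - 1) < 2 ^ (m - s + 1) := fun s hs =>
    div_lt_pow hu (Finset.mem_Icc.1 hs).1 (Finset.mem_Icc.1 hs).2
  have hv' : ∀ t ∈ Finset.Icc 1 n, v / 2 ^ (t - 1) < 2 ^ (n - t + 1) := fun t ht =>
    div_lt_pow hv (Finset.mem_Icc.1 ht).1 (Finset.mem_Icc.1 ht).2
  have hgood : ∀ s ∈ Finset.Icc 1 m, ∀ t ∈ Finset.Icc 1 n, _ := fun s hs t ht => by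
    have := hω s hs t ht _ (hu' s hs) _ (hv' t ht)
    unfold badEv at this
    simp only [Set.mem_union, not_or] at this
    exact this
  have hUD := fun s t => (hbp (Nat.sub_le (s + t) 1) : b (2 ^ (s + t - 1)) ≤ b (2 ^ (s + t)))
  have hfirst : ∀ s ∈ Finset.Icc 1 m, ∀ t ∈ Finset.Icc 1 n,
      |∑ p ∈ dyA s (u / 2 ^ (s - 1)) ×ˢ dyA t (v / 2 ^ (t - 1)),
          G (clampTwo (b (2 ^ (s + t)))) p| +
        |∑ p ∈ dyA s (u / 2 ^ (s - 1)) ×ˢ Finset.Ioc (2 ^ (t - 1) * (v / 2 ^ (t - 1))) v,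
          G (incUp (b (2 ^ (s + t - 1))) (b (2 ^ (s + t)))) p| +
        |∑ p ∈ dyA s (u / 2 ^ (s - 1)) ×ˢ Finset.Ioc (2 ^ (t - 1) * (v / 2 ^ (t - 1))) v,
          G (incDn (b (2 ^ (s + t - 1))) (b (2 ^ (s + t)))) p| ≤
      3 / 2 * (ε * L s t) + 2 * δ s t := by
    intro s hs t ht
    obtain ⟨⟨⟨⟨g1, g2⟩, g3⟩, -⟩, -⟩ := hgood s hs t ht
    have hs' := Finset.mem_Icc.1 hs
    have ht' := Finset.mem_Icc.1 ht
    have hsub : dyA s (u / 2 ^ (s - 1)) ×ˢ dyE t (v / 2 ^ (t - 1)) ⊆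
        Finset.Icc 1 (2 ^ m - 1) ×ˢ Finset.Icc 1 (2 ^ n - 1) :=
      Finset.product_subset_product (dyA_subset hs'.1 hs'.2 (hu' s hs))
        (dyE_subset ht'.1 ht'.2 (hv' t ht))
    have hcard := card_prod_le (card_dyA' s (u / 2 ^ (s - 1)) hs'.1)
      (card_dyE' t (v / 2 ^ (t - 1)))
    have hJ := Finset.product_subset_product (Finset.Subset.refl (dyA s (u / 2 ^ (s - 1))))
      (Ioc_subset_dyE v t)
    have r1 : |∑ p ∈ dyA s (u / 2 ^ (s - 1)) ×ˢ dyA t (v / 2 ^ (t - 1)),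
          G (clampTwo (b (2 ^ (s + t)))) p| < ε * L s t / 2 := not_le.1 g1
    have r2 := hpart s t _ hs'.1 ht'.1 (incUp_mono _ _) (Or.inl (incUp_nonneg _ _))
      (abs_incUp_le_ind (hβ _) (hUD s t)) _ _ _ hJ hsub hcard g2
    have r3 := hpart s t _ hs'.1 ht'.1 (incDn_mono _ _) (Or.inr (incDn_nonpos _ _))
      (abs_incDn_le_ind (hβ _) (hUD s t)) _ _ _ hJ hsub hcard g3
    simp only [hδ]
    linarith
  have hnn : n ∈ Finset.Icc 1 n := by simpa using hn
  have hsecond : ∀ s ∈ Finset.Icc 1 m,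
      |∑ p ∈ Finset.Ioc (2 ^ (s - 1) * (u / 2 ^ (s - 1))) u ×ˢ Finset.Icc 1 v,
          G (incUp (b (2 ^ (s + n - 1))) (b (2 ^ (s + n)))) p| +
        |∑ p ∈ Finset.Ioc (2 ^ (s - 1) * (u / 2 ^ (s - 1))) u ×ˢ Finset.Icc 1 v,
          G (incDn (b (2 ^ (s + n - 1))) (b (2 ^ (s + n)))) p| ≤
      ∑ t ∈ Finset.Icc 1 n, (ε * L s t + 2 * δ s t) := by
    intro s hs
    refine le_trans ?_ (Finset.single_le_sum (f := fun t => ε * L s t + 2 * δ s t)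
      (fun t ht => ?_) hnn)
    swap
    · have := hL s hs t ht
      have := hδ0 s t
      positivity
    obtain ⟨⟨-, g4⟩, g5⟩ := hgood s hs n hnn
    have hs' := Finset.mem_Icc.1 hs
    have hsub : dyE s (u / 2 ^ (s - 1)) ×ˢ Finset.Icc 1 (2 ^ n - 1) ⊆
        Finset.Icc 1 (2 ^ m - 1) ×ˢ Finset.Icc 1 (2 ^ n - 1) :=
      Finset.product_subset_product (dyE_subset hs'.1 hs'.2 (hu' s hs)) (Finset.Subset.refl _)
    have hcard := card_prod_le (card_dyE' s (u / 2 ^ (s - 1))) (card_Icc_pow n)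
    have hJ := Finset.product_subset_product (Ioc_subset_dyE u s)
      (Finset.Icc_subset_Icc_right (a := 1) (by omega : v ≤ 2 ^ n - 1))
    have r4 := hpart s n _ hs'.1 hn (incUp_mono _ _) (Or.inl (incUp_nonneg _ _))
      (abs_incUp_le_ind (hβ _) (hUD s n)) _ _ _ hJ hsub hcard g4
    have r5 := hpart s n _ hs'.1 hn (incDn_mono _ _) (Or.inr (incDn_nonpos _ _))
      (abs_incDn_le_ind (hβ _) (hUD s n)) _ _ _ hJ hsub hcard g5
    simp only [hδ]
    linarith
  refine (add_le_add (Finset.sum_le_sum fun s hs => Finset.sum_le_sum fun t ht => hfirst s hs t ht)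
    (Finset.sum_le_sum hsecond)).trans (le_of_eq ?_)
  simp only [Finset.sum_add_distrib, ← Finset.mul_sum]
  ring

/-- Maximal inequality for the tail probability of the maximum of double sums of
integrable (not necessarily nonnegative) dependent random variables, with a
constant depending only on `q` (and on the constant in Condition (H_{2q})). -/
theorem maximal_inequality_tail_probability_signed
    (q C₀ : ℝ) (hq : 1 ≤ q) :
    ∃ C : ℝ, ∀ (Ω : Type) [MeasureSpace Ω] [IsProbabilityMeasure (volume : Measure Ω)],
      ∀ X : ℕ → ℕ → Ω → ℝ,
      (∀ i j : ℕ, 1 ≤ i → 1 ≤ j → Measurable (X i j)) →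
      (∀ i j : ℕ, 1 ≤ i → 1 ≤ j → Integrable (X i j)) →
      CondHWith q C₀ (fun k : PIdx => X k.1.1 k.1.2) →
      ∀ b : ℕ → ℝ, Monotone b → (∀ n : ℕ, 1 ≤ n → 0 < b n) →
      ∀ lam : ℕ → ℕ → ℕ → ℕ → ℝ,
      (∀ m n i j : ℕ, 1 ≤ i → i ≤ m → 1 ≤ j → j ≤ n → 0 < lam m n i j) →
      ∀ ε : ℝ, 0 < ε → ∀ m n : ℕ, 1 ≤ m → 1 ≤ n →
      (∑ i ∈ Finset.Icc 1 (2 ^ m), ∑ j ∈ Finset.Icc 1 (2 ^ n),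
          ∫ ω, (if b (2 ^ (m + n)) < |X i j ω| then |X i j ω| else 0) ≤
        ε * ∑ s ∈ Finset.Icc 1 m, ∑ t ∈ Finset.Icc 1 n, lam m n s t) →
      (6 * ∑ s ∈ Finset.Icc 1 m, ∑ t ∈ Finset.Icc 1 n,
          (2 : ℝ) ^ (s + t) * b (2 ^ (s + t)) *
            maxNN (2 ^ m - 1) (2 ^ n - 1)
              (fun i j => (volume {ω | b (2 ^ (s + t - 2)) < |X i j ω|}).toReal) ≤
        ε * ∑ s ∈ Finset.Icc 1 m, ∑ t ∈ Finset.Icc 1 n, lam m n s t) →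
      (volume {ω | 6 * (∑ s ∈ Finset.Icc 1 m, ∑ t ∈ Finset.Icc 1 n, lam m n s t) * ε ≤
          maxDS (fun i j => X i j ω - ∫ ω', X i j ω') (2 ^ m - 1) (2 ^ n - 1)}).toReal ≤
        (∑ i ∈ Finset.Icc 1 (2 ^ m), ∑ j ∈ Finset.Icc 1 (2 ^ n),
          (volume {ω | b (2 ^ (m + n)) < |X i j ω|}).toReal) +
        C * ε ^ (-(2 * q)) *
          ∑ s ∈ Finset.Icc 1 m, ∑ t ∈ Finset.Icc 1 n,
            (2 : ℝ) ^ (m + n) * lam m n s t ^ (-(2 * q)) *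
              (maxNN (2 ^ m - 1) (2 ^ n - 1)
                  (fun i j => ∫ ω, |truncTwo X b (s + t) i j ω| ^ (2 * q)) +
                (2 : ℝ) ^ (((s + t : ℕ) : ℝ) * (q - 1)) *
                  maxNN (2 ^ m - 1) (2 ^ n - 1)
                    (fun i j => (∫ ω, truncTwo X b (s + t) i j ω ^ 2) ^ q)) := by
  refine ⟨20 * |C₀| * 2 ^ (2 * q), ?_⟩
  intro Ω _ _ X hX hXi hC b hbm hb lam hlam ε hε m n hm hn htail hbias
  set a := ∑ s ∈ Finset.Icc 1 m, ∑ t ∈ Finset.Icc 1 n, lam m n s t with ha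
  have hlam' : ∀ s ∈ Finset.Icc 1 m, ∀ t ∈ Finset.Icc 1 n, 0 < lam m n s t := by
    intro s hs t ht
    rw [Finset.mem_Icc] at hs ht
    exact hlam m n s t hs.1 hs.2 ht.1 ht.2
  have ha0 : 0 < a := by
    have h1 : (1 : ℕ) ∈ Finset.Icc 1 m := by simpa using hm
    have h2 : (1 : ℕ) ∈ Finset.Icc 1 n := by simpa using hn
    exact Finset.sum_pos (fun s hs => Finset.sum_pos (fun t ht => hlam' s hs t ht) ⟨1, h2⟩) ⟨1, h1⟩
  let tailEv : ℕ → ℕ → Set Ω := fun i j => {ω | b (2 ^ (m + n)) < |X i j ω|}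
  have hsub : {ω | 6 * a * ε ≤
      maxDS (fun i j => X i j ω - ∫ ω', X i j ω') (2 ^ m - 1) (2 ^ n - 1)} ⊆
      (⋃ i ∈ Finset.Icc 1 (2 ^ m), ⋃ j ∈ Finset.Icc 1 (2 ^ n), tailEv i j) ∪
      (⋃ s ∈ Finset.Icc 1 m, ⋃ t ∈ Finset.Icc 1 n, ⋃ k ∈ Finset.range (2 ^ (m - s + 1)),
        ⋃ l ∈ Finset.range (2 ^ (n - t + 1)), badEv X b (ε * lam m n s t / 2) s t k l) := by
    intro ω hω
    by_contra hcon
    simp only [Set.mem_union, Set.mem_iUnion, not_or, not_exists] at hcon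
    obtain ⟨hno1, hno2⟩ := hcon
    obtain ⟨⟨u, v⟩, huv, hle⟩ := exists_of_le_maxNN (by positivity) hω
    simp only [Finset.mem_product, Finset.mem_Icc] at huv
    have h2m : 0 < 2 ^ m := by positivity
    have h2n : 0 < 2 ^ n := by positivity
    have hu : u < 2 ^ m := by omega
    have hv : v < 2 ^ n := by omega
    have h1 := clamped_sum_le hX hbm hb hε hlam' (ω := ω) hn hu hv
      (fun s hs t ht k hk l hl => hno2 s hs t ht k (Finset.mem_range.2 hk) l (Finset.mem_range.2 hl))
    have h2 := truncation_cost hX hXi (hb _ Nat.one_le_two_pow : 0 < b (2 ^ (m + n))).le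
      (ω := ω) (M := 2 ^ m) (N := 2 ^ n) hu.le hv.le
      (fun i hi j hj => not_lt.1 (hno1 i hi j hj))
    rw [Finset.sum_product'
      (f := fun i j => clampTwo (b (2 ^ (m + n))) (X i j ω) -
        ∫ ω', clampTwo (b (2 ^ (m + n))) (X i j ω'))] at h1
    rw [← ha] at h1
    have : 0 < ε * a := by positivity
    linarith
  refine (measureReal_mono (μ := (volume : Measure Ω)) hsub).trans
    ((measureReal_union_le _ _).trans (add_le_add ?_ ?_))
  · refine (measureReal_biUnion_finset_le _ _).trans (Finset.sum_le_sum fun i _ => ?_)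
    exact measureReal_biUnion_finset_le _ _
  · rw [Finset.mul_sum]
    refine (measureReal_biUnion_finset_le _ _).trans (Finset.sum_le_sum fun s hs => ?_)
    rw [Finset.mul_sum]
    refine (measureReal_biUnion_finset_le _ _).trans (Finset.sum_le_sum fun t ht => ?_)
    have hs' := Finset.mem_Icc.1 hs
    have ht' := Finset.mem_Icc.1 ht
    refine le_trans ?_ (sum_badEv_le hq hX hC hbm hb hε (hlam' s hs t ht) hs'.1 hs'.2 ht'.1 ht'.2)
    refine (measureReal_biUnion_finset_le _ _).trans (Finset.sum_le_sum fun k _ => ?_)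
    exact measureReal_biUnion_finset_le _ _
end
end

section
/- Let p > 0, let {X_λ : λ ∈ Λ} be a family of random variables, let L : [0,∞) → (0,∞) be a slowly varying function, and let L̃ be a de Bruijn conjugate of L. If the family { |X_λ|^p L(|X_λ|^p) : λ ∈ Λ } is uniformly integrable, then there exists a random variable X whose distribution function is F(x) = 1 − sup_{λ∈Λ} P(|X_λ| > x) such that {X_λ} is stochastically dominated by X, and x · P( |X| > x^{1/p} L̃(x)^{1/p} ) → 0 as x → ∞. -/
/-! The proof has two ingredients.

*Regularity of `y ↦ y L(y)`.* In logarithmic coordinates a slowly varying function `L` becomes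
`h t = log (L (exp t))` with `h (t + v) - h t → 0` for every `v`. Convergence of the measures of
the exceptional sets of `v` makes this convergence uniform over `v ∈ [0, 1]`
(`exists_forall_abs_sub_lt`), so that `h` varies by at most `1/2` per unit step far out.
Hence `y L(y)` is almost increasing (`SlowlyVarying.exp_neg_one_mul_le`) and tends to infinity
(`SlowlyVarying.tendsto_mul_self`).

*Uniform Markov inequality.* Uniform integrability of `Y_λ` gives `K P(|Y_λ| ≥ K) → 0`
uniformly in `λ` (`UnifInt.exists_forall_mul_le`). With `Y_λ = |X_λ|^p L(|X_λ|^p)`: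
* because `y L(y) → ∞`, the tails `sup_λ P(|X_λ| > x)` tend to `0`, so, being right continuous,
  one minus this supremum is the distribution function of a probability measure, concentrated
  on `[0, ∞)`;
* if `|X_λ|^p > s = x L̃(x)`, then `Y_λ ≥ e⁻¹ s L(s)`, and
  `s L(s) = x L̃(x) L(x L̃(x)) ∼ x`, so `x P(|X_λ|^p > s)` is controlled by
  `K P(Y_λ ≥ K)` with `K = x / (2e)`. -/

open MeasureTheory ProbabilityTheory Finset Filter
open scoped NNReal ENNReal

noncomputable section

/-! ### Slowly varying functions -/

/-- Local uniformity in Karamata's uniform convergence theorem, additive form. -/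
lemma exists_forall_abs_sub_lt {h : ℝ → ℝ} (hm : Measurable h)
    (hlim : ∀ v, Tendsto (fun t => h (t + v) - h t) atTop (nhds 0)) :
    ∃ T, ∀ t, T ≤ t → ∀ u, 0 ≤ u → u ≤ 1 → |h (t + u) - h t| < 1 / 2 := by
  -- `B t` is the set of shifts in `[0, 2]` that are exceptional at `t`; its measure tends to `0`.
  set B : ℝ → Set ℝ := fun t => Set.Icc 0 2 ∩ {v | 1 / 4 ≤ |h (t + v) - h t|} with hB
  have hBm : ∀ t, MeasurableSet (B t) := fun t =>
    measurableSet_Icc.inter (measurableSet_le measurable_const (by fun_prop))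
  have hBlim : Tendsto (fun t => volume (B t)) atTop (nhds (volume (∅ : Set ℝ))) := by
    refine tendsto_measure_of_ae_tendsto_indicator atTop MeasurableSet.empty hBm
      (measurableSet_Icc (a := (0 : ℝ)) (b := 2)) (by simp)
      (Eventually.of_forall fun t => Set.inter_subset_left) (ae_of_all _ fun v => ?_)
    have h1 := (hlim v).abs
    rw [abs_zero] at h1
    filter_upwards [h1.eventually_lt_const (show (0 : ℝ) < 1 / 4 by norm_num)] with t ht
    simp only [Set.mem_empty_iff_false, iff_false]
    exact fun hv => absurd hv.2 (not_le.mpr ht)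
  rw [measure_empty] at hBlim
  obtain ⟨T, hT⟩ := eventually_atTop.1
    (hBlim.eventually_lt_const (show (0 : ℝ≥0∞) < 1 / 2 by simp))
  refine ⟨T, fun t ht u hu0 hu1 => ?_⟩
  by_contra! hcon
  -- Each `v ∈ [1, 2]` is exceptional for `t`, or `v - u` is exceptional for `t + u`.
  have hsub : Set.Icc (1 : ℝ) 2 ⊆ B t ∪ (fun v => v + -u) ⁻¹' B (t + u) := by
    rintro v ⟨hv1, hv2⟩
    by_contra hv
    simp only [hB, Set.mem_union, Set.mem_inter_iff, Set.mem_preimage, Set.mem_Icc,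
      Set.mem_ofPred_eq, not_or, not_and, not_le] at hv
    have h1 := hv.1 ⟨by linarith, hv2⟩
    have h2 := hv.2 ⟨by linarith, by linarith⟩
    rw [show t + u + (v + -u) = t + v by ring] at h2
    rw [abs_lt] at h1 h2
    have : |h (t + u) - h t| < 1 / 2 := abs_lt.2 ⟨by linarith, by linarith⟩
    linarith
  have hle := (measure_mono hsub).trans (measure_union_le (μ := volume) _ _)
  rw [measure_preimage_add_right, Real.volume_Icc] at hle
  have hlt := ENNReal.add_lt_add (hT t ht) (hT (t + u) (by linarith))
  rw [ENNReal.add_halves] at hlt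
  norm_num at hle
  exact absurd hle (not_le.mpr hlt)

/-- A crude Potter bound, in logarithmic form. -/
lemma SlowlyVarying.log_lower {L : ℝ → ℝ} (hL : SlowlyVarying L) :
    ∃ s₀, 0 < s₀ ∧ ∀ s, s₀ ≤ s → ∀ y, s ≤ y →
      Real.log (s * L s) + (Real.log y - Real.log s) / 2 - 1 / 2 ≤ Real.log (y * L y) := by
  obtain ⟨hm, hpos, hlim⟩ := hL
  obtain ⟨T, hT⟩ := exists_forall_abs_sub_lt (h := fun t => Real.log (L (Real.exp t)))
    (by fun_prop) (by
      intro v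
      have h1 := ((hlim (Real.exp v) (Real.exp_pos v)).comp Real.tendsto_exp_atTop).log
        one_ne_zero
      rw [Real.log_one] at h1
      refine h1.congr fun t => ?_
      simp only [Function.comp]
      rw [Real.log_div (hpos _ (by positivity)).ne' (hpos _ (by positivity)).ne', Real.exp_add,
        mul_comm])
  -- Unit steps are chained: the logarithm of `L` drops by at most `1 / 2` in each.
  have key : ∀ n : ℕ, ∀ t, T ≤ t → ∀ u : ℝ, 0 ≤ u → u ≤ n →
      Real.log (L (Real.exp t)) - (u + 1) / 2 ≤ Real.log (L (Real.exp (t + u))) := by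
    intro n
    induction n with
    | zero =>
      intro t ht u hu0 hu
      obtain rfl : u = 0 := le_antisymm (by simpa using hu) hu0
      simp
    | succ n ih =>
      intro t ht u hu0 hu
      push_cast at hu
      rcases le_total u 1 with h1 | h1
      · have := (abs_lt.1 (hT t ht u hu0 h1)).1
        linarith
      · have h2 := ih (t + 1) (by linarith) (u - 1) (by linarith) (by linarith)
        rw [show t + 1 + (u - 1) = t + u by ring] at h2
        have := (abs_lt.1 (hT t ht 1 zero_le_one le_rfl)).1
        linarith
  refine ⟨Real.exp T, Real.exp_pos T, fun s hs y hy => ?_⟩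
  have hs0 : 0 < s := (Real.exp_pos T).trans_le hs
  have hy0 : 0 < y := hs0.trans_le hy
  have hlog : Real.log s ≤ Real.log y := Real.log_le_log hs0 hy
  have h := key ⌈Real.log y - Real.log s⌉₊ (Real.log s) ((Real.le_log_iff_exp_le hs0).2 hs)
    (Real.log y - Real.log s) (by linarith) (Nat.le_ceil _)
  rw [add_sub_cancel, Real.exp_log hs0, Real.exp_log hy0] at h
  rw [Real.log_mul hs0.ne' (hpos s hs0.le).ne', Real.log_mul hy0.ne' (hpos y hy0.le).ne']
  linarith

lemma SlowlyVarying.exp_neg_one_mul_le {L : ℝ → ℝ} (hL : SlowlyVarying L) :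
    ∃ s₀, 0 < s₀ ∧ ∀ s, s₀ ≤ s → ∀ y, s ≤ y → Real.exp (-1) * (s * L s) ≤ y * L y := by
  obtain ⟨s₀, hs₀, h⟩ := hL.log_lower
  refine ⟨s₀, hs₀, fun s hs y hy => ?_⟩
  have hs0 : 0 < s := hs₀.trans_le hs
  have hy0 : 0 < y := hs0.trans_le hy
  have hsL : 0 < s * L s := mul_pos hs0 (hL.2.1 s hs0.le)
  have hyL : 0 < y * L y := mul_pos hy0 (hL.2.1 y hy0.le)
  have hlog : Real.log s ≤ Real.log y := Real.log_le_log hs0 hy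
  rw [← Real.log_le_log_iff (by positivity) hyL, Real.log_mul (Real.exp_pos _).ne' hsL.ne',
    Real.log_exp]
  linarith [h s hs y hy]

lemma SlowlyVarying.tendsto_mul_self {L : ℝ → ℝ} (hL : SlowlyVarying L) :
    Tendsto (fun y => y * L y) atTop atTop := by
  obtain ⟨s₀, hs₀, h⟩ := hL.log_lower
  have h1 : Tendsto (fun y => Real.log (s₀ * L s₀) + (Real.log y - Real.log s₀) / 2 - 1 / 2)
      atTop atTop := by
    have h2 := (tendsto_atTop_add_const_right atTop (Real.log (s₀ * L s₀) - Real.log s₀ / 2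
      - 1 / 2) (Real.tendsto_log_atTop.atTop_div_const (show (0 : ℝ) < 2 by norm_num)))
    exact h2.congr fun y => by ring
  have h3 : Tendsto (fun y => Real.log (y * L y)) atTop atTop :=
    tendsto_atTop_mono' atTop (eventually_atTop.2 ⟨s₀, fun y hy => h s₀ le_rfl y hy⟩) h1
  refine (Real.tendsto_exp_atTop.comp h3).congr' ?_
  filter_upwards [eventually_gt_atTop 0] with y hy
  exact Real.exp_log (mul_pos hy (hL.2.1 y hy.le))

/-! ### Uniform Markov inequality -/

/-- Uniform weak-type smallness of the tails of a uniformly integrable family. -/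
lemma UnifInt.exists_forall_mul_le {Ω : Type*} [MeasureSpace Ω]
    [IsProbabilityMeasure (volume : Measure Ω)] {Λ : Type*} {Y : Λ → Ω → ℝ} (hY : UnifInt Y)
    {ε : ℝ} (hε : 0 < ε) :
    ∃ K₀, 0 < K₀ ∧ ∀ K, K₀ ≤ K → ∀ l, K * volume.real {ω | K ≤ |Y l ω|} ≤ ε := by
  obtain ⟨hint, hY⟩ := hY
  obtain ⟨a, ha⟩ := hY ε hε
  refine ⟨max a 0 + 1, by positivity, fun K hK l => ?_⟩
  have haK : a < K := by linarith [le_max_left a 0]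
  have hK0 : 0 < K := by linarith [le_max_right a 0]
  have hi : Integrable fun ω => if a < |Y l ω| then |Y l ω| else 0 := by
    have hs : NullMeasurableSet {ω | a < |Y l ω|} (volume : Measure Ω) :=
      nullMeasurableSet_lt aemeasurable_const (hint l).abs.aemeasurable
    refine ((hint l).abs.indicator₀ hs).congr (ae_of_all _ fun ω => ?_)
    simp [Set.indicator_apply]
  refine le_trans ?_ (ha l)
  refine le_trans ?_ (mul_meas_ge_le_integral_of_nonneg (ae_of_all _ fun ω => ?_) hi K)
  · refine mul_le_mul_of_nonneg_left (measureReal_mono fun ω hω => ?_) hK0.le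
    have h1 : K ≤ |Y l ω| := hω
    simp only [Set.mem_ofPred_eq]
    rwa [if_pos (haK.trans_le h1)]
  · simp only [Pi.zero_apply]
    split_ifs <;> positivity

/-! ### The measure with a given uniform tail -/

/-- The uniform tail function `x ↦ sup_λ P(|X_λ| > x)`. -/
def supTail {Ω : Type*} [MeasureSpace Ω] {Λ : Type*} (X : Λ → Ω → ℝ) (x : ℝ) : ℝ≥0∞ :=
  ⨆ l, volume {ω | x < |X l ω|}

section supTail

variable {Ω : Type*} [MeasureSpace Ω] {Λ : Type*} (X : Λ → Ω → ℝ)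

lemma supTail_antitone : Antitone (supTail X) := fun _ _ hxy =>
  iSup_mono fun _ => measure_mono fun _ hω => lt_of_le_of_lt hxy hω

lemma supTail_le_one [IsProbabilityMeasure (volume : Measure Ω)] (x : ℝ) : supTail X x ≤ 1 :=
  iSup_le fun _ => prob_le_one

lemma supTail_of_neg [IsProbabilityMeasure (volume : Measure Ω)] [Nonempty Λ] {x : ℝ}
    (hx : x < 0) : supTail X x = 1 := by
  have : ∀ l, {ω | x < |X l ω|} = Set.univ := fun l =>
    Set.eq_univ_of_forall fun ω => hx.trans_le (abs_nonneg _)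
  simp [supTail, this]

/-- A supremum of right-continuous antitone functions is right continuous. -/
lemma tendsto_supTail (x : ℝ) :
    Tendsto (supTail X) (nhdsWithin x (Set.Ici x)) (nhds (supTail X x)) := by
  refine tendsto_order.2 ⟨fun a ha => ?_, fun a ha => ?_⟩
  · obtain ⟨l, hl⟩ := lt_iSup_iff.1 ha
    have hU : {ω | x < |X l ω|} = ⋃ n : ℕ, {ω | x + 1 / ((n : ℝ) + 1) < |X l ω|} := by
      ext ω
      simp only [Set.mem_ofPred_eq, Set.mem_iUnion]
      constructor
      · intro h
        obtain ⟨n, hn⟩ := exists_nat_one_div_lt (sub_pos.2 h)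
        exact ⟨n, by linarith⟩
      · rintro ⟨n, hn⟩
        have : (0 : ℝ) < 1 / ((n : ℝ) + 1) := by positivity
        linarith
    have hmono : Monotone fun n : ℕ => {ω | x + 1 / ((n : ℝ) + 1) < |X l ω|} := by
      intro m n hmn ω hω
      have : 1 / ((n : ℝ) + 1) ≤ 1 / ((m : ℝ) + 1) := Nat.one_div_le_one_div hmn
      have h2 : x + 1 / ((m : ℝ) + 1) < |X l ω| := hω
      show x + 1 / ((n : ℝ) + 1) < |X l ω|
      linarith
    rw [hU, hmono.measure_iUnion] at hl
    obtain ⟨n, hn⟩ := lt_iSup_iff.1 hl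
    have hpos : (0 : ℝ) < 1 / ((n : ℝ) + 1) := by positivity
    filter_upwards [mem_nhdsWithin_of_mem_nhds (Iio_mem_nhds (lt_add_of_pos_right x hpos))]
      with y hy
    exact (hn.trans_le (le_iSup (fun l => volume {ω | x + 1 / ((n : ℝ) + 1) < |X l ω|}) l)
      ).trans_le (supTail_antitone X (le_of_lt hy))
  · filter_upwards [self_mem_nhdsWithin] with y hy
    exact (supTail_antitone X hy).trans_lt ha

variable [IsProbabilityMeasure (volume : Measure Ω)]

lemma supTail_ne_top (x : ℝ) : supTail X x ≠ ∞ :=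
  ((supTail_le_one X x).trans_lt ENNReal.one_lt_top).ne

/-- The function `x ↦ 1 - sup_λ P(|X_λ| > x)` as a Stieltjes function. -/
def tailStieltjes : StieltjesFunction ℝ where
  toFun x := 1 - (supTail X x).toReal
  mono' := fun x _ hxy => sub_le_sub_left
    (ENNReal.toReal_mono (supTail_ne_top X x) (supTail_antitone X hxy)) 1
  right_continuous' x := tendsto_const_nhds.sub
    ((ENNReal.tendsto_toReal (supTail_ne_top X x)).comp (tendsto_supTail X x))

/-- If the uniform tail vanishes at infinity, then one minus it is a distribution function, and
the corresponding measure is concentrated on `[0, ∞)`. -/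
lemma exists_measure_supTail [Nonempty Λ] (htop : Tendsto (supTail X) atTop (nhds 0)) :
    ∃ μ' : Measure ℝ, IsProbabilityMeasure μ' ∧ (∀ x, μ' (Set.Iic x) = 1 - supTail X x) ∧
      ∀ x, μ' {y | x < |y|} = supTail X x := by
  have hbot : Tendsto (tailStieltjes X) atBot (nhds 0) := by
    refine tendsto_const_nhds.congr' ?_
    filter_upwards [eventually_lt_atBot 0] with x hx
    show (0 : ℝ) = 1 - (supTail X x).toReal
    simp [supTail_of_neg X hx]
  have htop' : Tendsto (tailStieltjes X) atTop (nhds 1) := by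
    have h := tendsto_const_nhds (x := (1 : ℝ)).sub
      ((ENNReal.tendsto_toReal ENNReal.zero_ne_top).comp htop)
    rw [ENNReal.toReal_zero, sub_zero] at h
    exact h
  have hprob := (tailStieltjes X).isProbabilityMeasure hbot htop'
  have hIic : ∀ x, (tailStieltjes X).measure (Set.Iic x) = 1 - supTail X x := by
    intro x
    rw [(tailStieltjes X).measure_Iic hbot x]
    show ENNReal.ofReal (1 - (supTail X x).toReal - 0) = _
    rw [sub_zero, ENNReal.ofReal_sub _ ENNReal.toReal_nonneg, ENNReal.ofReal_one,
      ENNReal.ofReal_toReal (supTail_ne_top X x)]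
  have hIoi : ∀ x, (tailStieltjes X).measure (Set.Ioi x) = supTail X x := by
    intro x
    rw [← Set.compl_Iic, prob_compl_eq_one_sub measurableSet_Iic, hIic,
      ENNReal.sub_sub_cancel ENNReal.one_ne_top (supTail_le_one X x)]
  have hIio : (tailStieltjes X).measure (Set.Iio 0) = 0 := by
    have hU : Set.Iio (0 : ℝ) = ⋃ n : ℕ, Set.Iic (-(1 / ((n : ℝ) + 1))) := by
      ext y
      simp only [Set.mem_Iio, Set.mem_iUnion, Set.mem_Iic]
      constructor
      · intro h
        obtain ⟨n, hn⟩ := exists_nat_one_div_lt (neg_pos.2 h)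
        exact ⟨n, by linarith⟩
      · rintro ⟨n, hn⟩
        have : (0 : ℝ) < 1 / ((n : ℝ) + 1) := by positivity
        linarith
    rw [hU, measure_iUnion_null_iff]
    intro n
    have : -(1 / ((n : ℝ) + 1)) < 0 := neg_neg_of_pos (by positivity)
    rw [hIic, supTail_of_neg X this, tsub_self]
  refine ⟨(tailStieltjes X).measure, hprob, hIic, fun x => ?_⟩
  rw [← hIoi x]
  have hae : ∀ᵐ y ∂(tailStieltjes X).measure, 0 ≤ y := by
    rw [ae_iff]
    exact measure_mono_null (fun y hy => not_le.1 hy) hIio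
  refine measure_congr ?_
  filter_upwards [hae] with y hy
  exact propext (by
    show x < |y| ↔ x < y
    rw [abs_of_nonneg hy])

end supTail

/-! ### Domination -/

/-- If `{|X_λ|^p L(|X_λ|^p)}` is uniformly integrable, then there is a random
variable (given by its distribution `μ'` on `ℝ`) whose distribution function is
`F(x) = 1 - sup_λ P(|X_λ| > x)`, which stochastically dominates the family and
satisfies `x P(|X| > x^{1/p} L̃(x)^{1/p}) → 0` as `x → ∞`. -/
theorem uniform_integrability_implies_domination
    {Ω : Type*} [MeasureSpace Ω] [IsProbabilityMeasure (volume : Measure Ω)]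
    {Λ : Type*} [Nonempty Λ] (p : ℝ) (hp : 0 < p)
    (X : Λ → Ω → ℝ) (hmeas : ∀ l, Measurable (X l))
    (L Lt : ℝ → ℝ) (hL : SlowlyVarying L) (hconj : DeBruijnConjugate L Lt)
    (hui : UnifInt fun l ω => |X l ω| ^ p * L (|X l ω| ^ p)) :
    ∃ μ' : Measure ℝ, IsProbabilityMeasure μ' ∧
      (∀ x : ℝ, μ' (Set.Iic x) = 1 - ⨆ l, volume {ω | x < |X l ω|}) ∧
      (∀ x : ℝ, ∀ l, volume {ω | x < |X l ω|} ≤ μ' {y : ℝ | x < |y|}) ∧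
      Tendsto (fun x : ℝ =>
          x * (μ' {y : ℝ | x ^ (1 / p) * Lt x ^ (1 / p) < |y|}).toReal)
        atTop (nhds 0) := by
  obtain ⟨s₀, hs₀, hquasi⟩ := hL.exp_neg_one_mul_le
  have hY : ∀ l ω, |(|X l ω| ^ p * L (|X l ω| ^ p))| = |X l ω| ^ p * L (|X l ω| ^ p) := by
    intro l ω
    have h0 : 0 ≤ |X l ω| ^ p := by positivity
    exact abs_of_nonneg (mul_nonneg h0 (hL.2.1 _ h0).le)
  have htop : Tendsto (supTail X) atTop (nhds 0) := by
    refine ENNReal.tendsto_nhds_zero.2 fun ε hε => ?_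
    rcases eq_or_ne ε ∞ with rfl | hεtop
    · exact Eventually.of_forall fun _ => le_top
    have hε' : 0 < ε.toReal := ENNReal.toReal_pos hε.ne' hεtop
    obtain ⟨K₀, hK₀, hK⟩ := hui.exists_forall_mul_le hε'
    set K := max K₀ 1
    obtain ⟨y₀, hy₀⟩ := eventually_atTop.1 (hL.tendsto_mul_self.eventually_ge_atTop K)
    filter_upwards [(tendsto_rpow_atTop hp).eventually_ge_atTop y₀, eventually_ge_atTop 0]
      with t ht ht0
    refine iSup_le fun l => ?_
    rw [← ENNReal.ofReal_toReal hεtop]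
    refine ENNReal.le_ofReal_iff_toReal_le (measure_ne_top _ _) hε'.le |>.2 ?_
    have h1 := hK K (le_max_left _ _) l
    refine (measureReal_mono (s₂ := {ω | K ≤ |(|X l ω| ^ p * L (|X l ω| ^ p))|})
      (fun ω hω => ?_)).trans (le_trans ?_ h1)
    · have hω' : t < |X l ω| := hω
      show K ≤ |(|X l ω| ^ p * L (|X l ω| ^ p))|
      rw [hY]
      exact hy₀ _ (ht.trans (Real.rpow_le_rpow ht0 hω'.le hp.le))
    · exact le_mul_of_one_le_left measureReal_nonneg (le_max_right _ _)
  obtain ⟨μ', hprob, hIic, htail⟩ := exists_measure_supTail X htop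
  refine ⟨μ', hprob, hIic, fun x l => ?_, ?_⟩
  · rw [htail]
    exact le_iSup (fun l => volume {ω | x < |X l ω|}) l
  obtain ⟨hLt, -, hLtL⟩ := hconj
  simp_rw [htail]
  refine squeeze_zero' (g := fun x => x * (supTail X (x ^ (1 / p) * Lt x ^ (1 / p))).toReal)
    ?_ (Eventually.of_forall fun x => le_rfl) ?_
  · filter_upwards [eventually_ge_atTop 0] with x hx using mul_nonneg hx ENNReal.toReal_nonneg
  rw [Metric.tendsto_nhds]
  intro ε hε
  have hc : 0 < Real.exp (-1) / 2 := by positivity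
  obtain ⟨K₀, hK₀, hK⟩ := hui.exists_forall_mul_le (mul_pos hc (half_pos hε))
  filter_upwards [hLt.tendsto_mul_self.eventually_ge_atTop s₀, eventually_gt_atTop 0,
    (tendsto_id.const_mul_atTop hc).eventually_ge_atTop K₀,
    hLtL.eventually_const_lt (show (1 / 2 : ℝ) < 1 by norm_num)] with x hs hx hxK hhalf
  have hLtx : 0 < Lt x := hLt.2.1 x hx.le
  -- `s L(s) = x L̃(x) L(x L̃(x)) ≥ x / 2` for `s = x L̃(x)`.
  have hsL : x / 2 ≤ x * Lt x * L (x * Lt x) := by nlinarith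
  have hbound : supTail X (x ^ (1 / p) * Lt x ^ (1 / p)) ≤ ENNReal.ofReal (ε / 2 / x) := by
    refine iSup_le fun l => ?_
    refine ENNReal.le_ofReal_iff_toReal_le (measure_ne_top _ _) (by positivity) |>.2 ?_
    have h1 := hK _ hxK l
    simp only [id] at h1
    rw [mul_assoc] at h1
    rw [le_div_iff₀ hx, mul_comm]
    refine le_trans ?_ (le_of_mul_le_mul_left h1 hc)
    refine mul_le_mul_of_nonneg_left (measureReal_mono fun ω hω => ?_) hx.le
    have hω' : x ^ (1 / p) * Lt x ^ (1 / p) < |X l ω| := hω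
    show _ ≤ |(|X l ω| ^ p * L (|X l ω| ^ p))|
    rw [hY]
    have h2 : x * Lt x ≤ |X l ω| ^ p := by
      rw [← Real.mul_rpow hx.le hLtx.le] at hω'
      have h3 := Real.rpow_le_rpow (by positivity) hω'.le hp.le
      rwa [← Real.rpow_mul (by positivity), one_div_mul_cancel hp.ne', Real.rpow_one] at h3
    refine le_trans ?_ (hquasi _ hs _ h2)
    nlinarith [Real.exp_pos (-1)]
  have h4 := ENNReal.toReal_mono ENNReal.ofReal_ne_top hbound
  rw [ENNReal.toReal_ofReal (by positivity), le_div_iff₀ hx, mul_comm] at h4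
  rw [Real.dist_eq, sub_zero, abs_of_nonneg (mul_nonneg hx.le ENNReal.toReal_nonneg)]
  linarith
end
end

section
/- Let p ≥ 1, α > 1/2, let ν be a positive integer, and let {X_{m,n} : m ≥ 1, n ≥ 1} be a double array of random variables satisfying Condition (H_{2q}) with q = 1 if 1 ≤ p < 2 and q > (αp−1)/(2α−1) if p ≥ 2. If sup_{m≥1, n≥1} E( |X_{m,n}|^p (log|X_{m,n}|) log_ν^{(2)}|X_{m,n}| ) < ∞, then for every ε > 0, ∑_{m=1}^∞ ∑_{n=1}^∞ (mn)^{αp−2} P( max_{1≤u≤m, 1≤v≤n} |∑_{i=1}^{u} ∑_{j=1}^{v} (X_{i,j} − E X_{i,j})| > ε (mn)^{α} ) < ∞. -/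
/-!
When `α p < 1` the weights alone are summable, so let `α p ≥ 1`. Put `ψ = rlog · logNu2 ν` and
`lev α l = 2^(α l)`. The moment hypothesis gives `E |X|^p 1(|X| > lev α l) ≤ κ_l := M / ψ (lev α l)`,
and `∑ (l + 1) κ_l` is comparable to `∑ 1 / logNu2 ν (2^(α l))`, which converges by Cauchy
condensation (`summable_inv_logNu2`, `summable_rate`). This is the only role of the iterated
logarithms: the rest of the argument uses `∑ (l + 1) κ_l < ∞`.

*Reduction to nonnegative fields.* `X` is the difference of its positive and negative parts. A
truncated positive part is a nondecreasing function of `X`, and a truncated negative part is minus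
such a function, so Condition (H_{2q}) controls the centred sums of both (`goodField_signedPart`).

*Chaining.* Let `Y ≥ 0` be such a field. Partial sums over `[0, u) × [0, v)` with `u ≤ 2^M`,
`v ≤ 2^N` are split into dyadic rectangles, where a rectangle of size `2^s × 2^t` uses the
truncation of `Y` at the level `lev α (s + t)`. Passing to a coarser rectangle changes the truncation
level. The increments are nonnegative, so the change summed over part of a rectangle is at most its
sum over the whole rectangle, up to the mean, and again only dyadic rectangles occur. Hence the
maximal sum is bounded by `24 ∑ λ(s,t)` plus the means lost by truncation, as soon as every centred
sum over a dyadic `2^s × 2^t` rectangle is at most `λ(s,t)` (`chain_two`, applied in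
`GoodField.partial_sum_le`). No maximal inequality enters, so no logarithmic factor is lost.

*Probabilities.* Markov at order `2q` bounds the probability that some rectangle is bad
(`GoodField.prob_partial_sum_le`). Choosing `λ(s,t)` proportional to `2^(α (M+N)) θ^(M-s+N-t)` with
a suitable `θ < 1` keeps the sum of thresholds below `ε 2^(α (M+N))`, and the weighted sum over
`(M, N)` becomes the convolution of a geometric sequence on `ℕ × ℕ` with `w (s + t)`. It is finite
because `∑ (l + 1) w l < ∞` (`summable_conv_two`), where `w` comes from the moment bound
`GoodField.exists_blockBound`; that is where the condition on `q` is used, to make the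
`|I|^q (E f²)^q` term of Condition (H_{2q}) decay geometrically when `p ≥ 2`. Finally, the double
series over `(m, n)` is compared with the dyadic one.
-/

open MeasureTheory ProbabilityTheory Finset Filter
open scoped NNReal ENNReal

noncomputable section

/-! ### Dyadic chaining -/

/-- Chaining in one parameter: `f s` is used on dyadic intervals of length `2^s`, `β s` bounds
its sums over these intervals, and `ρ s` bounds the sums of `f (s + 1) - f s` over their initial
segments. The bound for initial segments follows by halving, inducting on `s`. -/
theorem chain_one (f : ℕ → ℕ → ℝ) (β ρ : ℕ → ℝ) (N : ℕ)
    (hβ : ∀ s ≤ N, ∀ k < 2 ^ (N - s),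
      |∑ i ∈ Finset.Ico (k * 2 ^ s) ((k + 1) * 2 ^ s), f s i| ≤ β s)
    (hρ : ∀ s < N, ∀ k < 2 ^ (N - s), ∀ u, k * 2 ^ s ≤ u → u ≤ (k + 1) * 2 ^ s →
      |∑ i ∈ Finset.Ico (k * 2 ^ s) u, (f (s + 1) i - f s i)| ≤ ρ s) :
    ∀ s ≤ N, ∀ k < 2 ^ (N - s), ∀ u, k * 2 ^ s ≤ u → u ≤ (k + 1) * 2 ^ s →
      |∑ i ∈ Finset.Ico (k * 2 ^ s) u, f s i| ≤ β 0 + ∑ r ∈ Finset.range s, (β r + 2 * ρ r) := by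
  intro s
  induction s with
  | zero =>
    intro hs k hk u h1 h2
    simp only [Finset.range_zero, Finset.sum_empty, add_zero]
    have h := hβ 0 hs k hk
    rcases Nat.lt_or_ge (k * 2 ^ 0) u with h3 | h3
    · have : u = (k + 1) * 2 ^ 0 := by simp at *; omega
      rw [this]; exact h
    · rw [Finset.Ico_eq_empty (by omega)]
      simpa using (abs_nonneg _).trans h
  | succ s ih =>
    intro hs k hk u h1 h2
    have hN : N - s = (N - (s + 1)) + 1 := by omega
    have hk0 : 2 * k < 2 ^ (N - s) := by rw [hN, pow_succ]; omega
    have hk1 : 2 * k + 1 < 2 ^ (N - s) := by rw [hN, pow_succ]; omega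
    have e1 : k * 2 ^ (s + 1) = 2 * k * 2 ^ s := by ring
    have e2 : (k + 1) * 2 ^ (s + 1) = (2 * k + 1 + 1) * 2 ^ s := by ring
    have e3 : 2 * k * 2 ^ s ≤ (2 * k + 1) * 2 ^ s := Nat.mul_le_mul_right _ (by omega)
    rw [e1] at h1 ⊢
    rw [e2] at h2
    rw [Finset.sum_range_succ]
    have hsplit : ∀ A : Finset ℕ, ∑ i ∈ A, f (s + 1) i =
        ∑ i ∈ A, f s i + ∑ i ∈ A, (f (s + 1) i - f s i) := by
      intro A; rw [← Finset.sum_add_distrib]; simp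
    have hb := (abs_nonneg _).trans (hβ s (by omega) (2 * k) hk0)
    have hr := (abs_nonneg _).trans (hρ s (by omega) (2 * k) hk0 _ le_rfl e3)
    rcases Nat.le_total u ((2 * k + 1) * 2 ^ s) with h3 | h3
    · have a1 := ih (by omega) (2 * k) hk0 u h1 h3
      have a2 := hρ s (by omega) (2 * k) hk0 u h1 h3
      rw [hsplit]
      refine (abs_add_le _ _).trans ?_
      linarith
    · rw [← Finset.sum_Ico_consecutive _ e3 h3, hsplit, hsplit]
      have a1 := ih (by omega) (2 * k + 1) hk1 u h3 h2
      have a2 := hρ s (by omega) (2 * k + 1) hk1 u h3 h2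
      have a3 := hβ s (by omega) (2 * k) hk0
      have a4 := hρ s (by omega) (2 * k) hk0 _ e3 le_rfl
      refine (abs_add_le _ _).trans ?_
      have b1 := abs_add_le (∑ i ∈ Finset.Ico (2 * k * 2 ^ s) ((2 * k + 1) * 2 ^ s), f s i)
        (∑ i ∈ Finset.Ico (2 * k * 2 ^ s) ((2 * k + 1) * 2 ^ s), (f (s + 1) i - f s i))
      have b2 := abs_add_le (∑ i ∈ Finset.Ico ((2 * k + 1) * 2 ^ s) u, f s i)
        (∑ i ∈ Finset.Ico ((2 * k + 1) * 2 ^ s) u, (f (s + 1) i - f s i))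
      linarith

/-- For nonnegative variables, a centred sum over a subset is controlled by the one over the
whole set, at the cost of the total mean. -/
theorem abs_sum_sub_le_of_subset {ι : Type*} {A B : Finset ι} (hAB : A ⊆ B) (Z m : ι → ℝ)
    (hZ : ∀ i, 0 ≤ Z i) (hm : ∀ i, 0 ≤ m i) :
    |∑ i ∈ A, (Z i - m i)| ≤ |∑ i ∈ B, (Z i - m i)| + ∑ i ∈ B, m i := by
  simp only [Finset.sum_sub_distrib]
  have h1 := Finset.sum_le_sum_of_subset_of_nonneg hAB (fun i _ _ => hZ i)
  have h2 := Finset.sum_le_sum_of_subset_of_nonneg hAB (fun i _ _ => hm i)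
  have h3 : 0 ≤ ∑ i ∈ A, Z i := Finset.sum_nonneg fun i _ => hZ i
  have h4 : 0 ≤ ∑ i ∈ A, m i := Finset.sum_nonneg fun i _ => hm i
  have h5 := le_abs_self (∑ i ∈ B, Z i - ∑ i ∈ B, m i)
  have h6 := abs_nonneg (∑ i ∈ B, Z i - ∑ i ∈ B, m i)
  rw [abs_le]
  constructor <;> linarith

/-- The dyadic interval `[k 2^s, (k+1) 2^s)`. -/
def dyad (s k : ℕ) : Finset ℕ := Finset.Ico (k * 2 ^ s) ((k + 1) * 2 ^ s)

theorem card_dyad (s k : ℕ) : (dyad s k).card = 2 ^ s := by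
  simp [dyad, add_mul]

/-- Chaining in two parameters: `F l` stands for the centred truncation used on rectangles of area
`2^l`, `Z l ≥ 0` for the increment between consecutive truncations and `m l` for its mean. Bounds on
the sums over dyadic rectangles alone imply a bound on all partial sums. `chain_one` is applied to
the columns of each strip of rows, and then to the rows. -/
theorem chain_two (F Z m : ℕ → ℕ → ℕ → ℝ) (lam : ℕ → ℕ → ℝ) (μ : ℕ → ℝ) (M N : ℕ)
    (hF : ∀ l i j, F (l + 1) i j - F l i j = Z l i j - m l i j)
    (hZ : ∀ l i j, 0 ≤ Z l i j) (hm : ∀ l i j, 0 ≤ m l i j) (hmμ : ∀ l i j, m l i j ≤ μ l)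
    (h0 : ∀ s ≤ M, ∀ t ≤ N, ∀ k < 2 ^ (M - s), ∀ k' < 2 ^ (N - t),
      |∑ x ∈ dyad s k ×ˢ dyad t k', F (s + t) x.1 x.2| ≤ lam s t)
    (h1 : ∀ s ≤ M, ∀ t ≤ N, ∀ k < 2 ^ (M - s), ∀ k' < 2 ^ (N - t),
      |∑ x ∈ dyad s k ×ˢ dyad t k', F (s + t + 1) x.1 x.2| ≤ lam s t)
    (u v : ℕ) (hu : u ≤ 2 ^ M) (hv : v ≤ 2 ^ N) :
    |∑ i ∈ Finset.range u, ∑ j ∈ Finset.range v, F (M + N) i j| ≤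
      ∑ s ∈ Finset.range (M + 1), ∑ t ∈ Finset.range (N + 1),
        (24 * lam s t + 8 * (2 ^ (s + t) * μ (s + t))) := by
  have hμ : ∀ l, 0 ≤ μ l := fun l => (hm l 0 0).trans (hmμ l 0 0)
  have hlam : ∀ s ≤ M, ∀ t ≤ N, 0 ≤ lam s t := fun s hs t ht =>
    (abs_nonneg _).trans (h0 s hs t ht 0 (by positivity) 0 (by positivity))
  -- enlarging a set of indices inside a dyadic rectangle costs only the mean over the rectangle
  have hres : ∀ s ≤ M, ∀ t ≤ N, ∀ k < 2 ^ (M - s), ∀ k' < 2 ^ (N - t), ∀ A : Finset (ℕ × ℕ),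
      A ⊆ dyad s k ×ˢ dyad t k' →
      |∑ x ∈ A, (F (s + t + 1) x.1 x.2 - F (s + t) x.1 x.2)| ≤
        2 * lam s t + 2 ^ (s + t) * μ (s + t) := by
    intro s hs t ht k hk k' hk' A hA
    have e := abs_sum_sub_le_of_subset hA (fun x => Z (s + t) x.1 x.2) (fun x => m (s + t) x.1 x.2)
      (fun x => hZ _ _ _) (fun x => hm _ _ _)
    simp only [← hF] at e
    have e2 : ∑ x ∈ dyad s k ×ˢ dyad t k', m (s + t) x.1 x.2 ≤ 2 ^ (s + t) * μ (s + t) := by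
      refine (Finset.sum_le_card_nsmul _ _ _ (fun x _ => hmμ (s + t) x.1 x.2)).trans ?_
      rw [Finset.card_product, card_dyad, card_dyad, nsmul_eq_mul, ← pow_add]
      push_cast
      exact le_rfl
    have a0 := h0 s hs t ht k hk k' hk'
    have a1 := h1 s hs t ht k hk k' hk'
    rw [Finset.sum_sub_distrib] at e
    rw [Finset.sum_sub_distrib] at e ⊢
    have e3 := abs_sub (∑ x ∈ dyad s k ×ˢ dyad t k', F (s + t + 1) x.1 x.2)
      (∑ x ∈ dyad s k ×ˢ dyad t k', F (s + t) x.1 x.2)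
    linarith
  set B : ℕ → ℝ := fun s => ∑ t ∈ Finset.range (N + 1),
    (6 * lam s t + 2 * (2 ^ (s + t) * μ (s + t))) with hB
  have hterm : ∀ s ≤ M, ∀ t ∈ Finset.range (N + 1),
      0 ≤ 6 * lam s t + 2 * (2 ^ (s + t) * μ (s + t)) := by
    intro s hs t ht
    have := hlam s hs t (by simpa [Nat.lt_succ_iff] using ht)
    have := mul_nonneg (pow_nonneg (zero_le_two (α := ℝ)) (s + t)) (hμ (s + t))
    positivity
  have hB0 : ∀ s ≤ M, 0 ≤ B s := fun s hs => Finset.sum_nonneg (hterm s hs)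
  -- the strip over one dyadic interval of rows
  have hstrip : ∀ s ≤ M, ∀ k < 2 ^ (M - s),
      |∑ i ∈ dyad s k, ∑ j ∈ Finset.range v, F (s + N) i j| ≤ B s := by
    intro s hs k hk
    have key := chain_one (fun t j => ∑ i ∈ dyad s k, F (s + t) i j) (fun t => lam s t)
      (fun t => 2 * lam s t + 2 ^ (s + t) * μ (s + t)) N ?_ ?_ N le_rfl 0 (by positivity) v
      (by simp) (by simpa using hv)
    · rw [Finset.sum_comm]
      simp only [zero_mul, ← Finset.range_eq_Ico] at key
      refine key.trans ?_
      have hl0 : lam s 0 ≤ ∑ t ∈ Finset.range (N + 1), lam s t :=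
        Finset.single_le_sum (f := fun t => lam s t)
          (fun t ht => hlam s hs t (by simpa [Nat.lt_succ_iff] using ht)) (by simp)
      have h2 : ∑ t ∈ Finset.range N, (lam s t + 2 * (2 * lam s t + 2 ^ (s + t) * μ (s + t))) ≤
          ∑ t ∈ Finset.range (N + 1),
            (lam s t + 2 * (2 * lam s t + 2 ^ (s + t) * μ (s + t))) := by
        refine Finset.sum_le_sum_of_subset_of_nonneg (by simp) fun t ht _ => ?_
        have := hlam s hs t (by simpa [Nat.lt_succ_iff] using ht)
        have := mul_nonneg (pow_nonneg (zero_le_two (α := ℝ)) (s + t)) (hμ (s + t))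
        positivity
      refine (add_le_add hl0 h2).trans (le_of_eq ?_)
      rw [← Finset.sum_add_distrib, hB]
      exact Finset.sum_congr rfl fun t _ => by ring
    · intro t ht k' hk'
      have := h0 s hs t ht k hk k' hk'
      rw [Finset.sum_product_right] at this
      exact this
    · intro t ht k' hk' w hw1 hw2
      have := hres s hs t ht.le k hk k' hk' (dyad s k ×ˢ Finset.Ico (k' * 2 ^ t) w)
        (Finset.product_subset_product_right (Finset.Ico_subset_Ico le_rfl hw2))
      rw [Finset.sum_product_right] at this
      simp only [← Finset.sum_sub_distrib]
      exact this
  have key := chain_one (fun s i => ∑ j ∈ Finset.range v, F (s + N) i j) B B M hstrip ?_ M le_rfl 0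
    (by positivity) u (by simp) (by simpa using hu)
  · simp only [zero_mul, ← Finset.range_eq_Ico] at key
    refine key.trans ?_
    have hl0 : B 0 ≤ ∑ t ∈ Finset.range (M + 1), B t :=
      Finset.single_le_sum (f := B)
        (fun t ht => hB0 t (by simpa [Nat.lt_succ_iff] using ht)) (by simp)
    have h2 : ∑ t ∈ Finset.range M, (B t + 2 * B t) ≤
        ∑ t ∈ Finset.range (M + 1), (B t + 2 * B t) := by
      refine Finset.sum_le_sum_of_subset_of_nonneg (by simp) fun t ht _ => ?_
      have := hB0 t (by simpa [Nat.lt_succ_iff] using ht)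
      positivity
    refine (add_le_add hl0 h2).trans (le_of_eq ?_)
    rw [← Finset.sum_add_distrib]
    refine Finset.sum_congr rfl fun s _ => ?_
    rw [hB]
    simp only
    rw [Finset.mul_sum, ← Finset.sum_add_distrib, ← Finset.sum_add_distrib]
    exact Finset.sum_congr rfl fun t _ => by ring
  · intro s hs k hk w hw1 hw2
    have := hres s hs.le N le_rfl k hk 0 (by positivity)
      (Finset.Ico (k * 2 ^ s) w ×ˢ Finset.range v)
      (Finset.product_subset_product (Finset.Ico_subset_Ico le_rfl hw2) (by
        rw [dyad, Finset.range_eq_Ico]; simpa using hv))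
    rw [Finset.sum_product] at this
    simp only [← Finset.sum_sub_distrib]
    have e : s + 1 + N = s + N + 1 := by ring
    rw [e]
    refine this.trans (le_trans ?_ (Finset.single_le_sum (hterm s hs.le)
      (Finset.mem_range.2 (Nat.lt_succ_self N))))
    have := hlam s hs.le N le_rfl
    have := mul_nonneg (pow_nonneg (zero_le_two (α := ℝ)) (s + N)) (hμ (s + N))
    linarith

/-! ### Double series and convolutions -/

/-- A series whose terms depend on `g b` only is summed by grouping the indices with equal `g b`;
`w` bounds the sizes of the fibres. -/
theorem summable_of_fibers {β γ : Type*} [DecidableEq γ] (f : β → ℝ) (g : β → γ) (w h : γ → ℝ)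
    (hf : ∀ b, 0 ≤ f b) (hh : ∀ c, 0 ≤ h c) (hfh : ∀ b, f b ≤ h (g b))
    (hw : ∀ (u : Finset β) c, ((u.filter fun b => g b = c).card : ℝ) ≤ w c)
    (hs : Summable fun c => w c * h c) : Summable f := by
  have hw0 : ∀ c, 0 ≤ w c := fun c => le_trans (by positivity) (hw ∅ c)
  refine summable_of_sum_le hf (c := ∑' c, w c * h c) fun u => ?_
  rw [← Finset.sum_fiberwise_of_maps_to (t := u.image g) (g := g)
    (fun b hb => Finset.mem_image_of_mem g hb)]
  refine le_trans (Finset.sum_le_sum fun c _ => ?_)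
    (hs.sum_le_tsum (u.image g) fun c _ => mul_nonneg (hw0 c) (hh c))
  refine le_trans (Finset.sum_le_card_nsmul _ _ (h c) fun b hb => ?_) ?_
  · have := hfh b
    rwa [(Finset.mem_filter.1 hb).2] at this
  · rw [nsmul_eq_mul]
    exact mul_le_mul_of_nonneg_right (hw u c) (hh c)

theorem summable_add_index (w : ℕ → ℝ) (hw : ∀ l, 0 ≤ w l)
    (hs : Summable fun l : ℕ => ((l : ℝ) + 1) * w l) :
    Summable fun k : ℕ × ℕ => w (k.1 + k.2) := by
  refine summable_of_fibers _ (fun k : ℕ × ℕ => k.1 + k.2) (fun l => (l : ℝ) + 1) w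
    (fun _ => hw _) hw (fun _ => le_rfl) (fun u c => ?_) hs
  have : (u.filter fun b => b.1 + b.2 = c) ⊆ Finset.HasAntidiagonal.antidiagonal c := by
    intro b hb
    exact Finset.HasAntidiagonal.mem_antidiagonal.2 (Finset.mem_filter.1 hb).2
  have := Finset.card_le_card this
  rw [Finset.Nat.card_antidiagonal] at this
  exact_mod_cast this

/-- The convolution on `ℕ × ℕ` of `w (s + t)` with a geometric sequence is summable. -/
theorem summable_conv_two (w : ℕ → ℝ) (hw : ∀ l, 0 ≤ w l)
    (hs : Summable fun l : ℕ => ((l : ℝ) + 1) * w l) (x : ℝ) (hx0 : 0 ≤ x) (hx1 : x < 1) :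
    Summable fun k : ℕ × ℕ => ∑ s ∈ Finset.range (k.1 + 1), ∑ t ∈ Finset.range (k.2 + 1),
      w (s + t) * x ^ (k.1 - s + (k.2 - t)) := by
  have h1 := summable_add_index w hw hs
  have hg := summable_geometric_of_lt_one hx0 hx1
  have h2 : Summable fun k : ℕ × ℕ => x ^ (k.1 + k.2) := by
    simp only [pow_add]
    exact hg.mul_of_nonneg hg (fun _ => by positivity) (fun _ => by positivity)
  have h3 : Summable fun y : (ℕ × ℕ) × (ℕ × ℕ) => w (y.1.1 + y.1.2) * x ^ (y.2.1 + y.2.2) :=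
    h1.mul_of_nonneg h2 (fun _ => hw _) (fun _ => by positivity)
  refine summable_of_sum_le (c := ∑' y : (ℕ × ℕ) × (ℕ × ℕ), w (y.1.1 + y.1.2) * x ^ (y.2.1 + y.2.2))
    (fun k => Finset.sum_nonneg fun s _ => Finset.sum_nonneg fun t _ =>
      mul_nonneg (hw _) (by positivity)) fun u => ?_
  simp only [← Finset.sum_product']
  rw [Finset.sum_sigma']
  have hinj : Set.InjOn
      (fun z : (_ : ℕ × ℕ) × (ℕ × ℕ) => ((z.2, (z.1.1 - z.2.1, z.1.2 - z.2.2)) :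
        (ℕ × ℕ) × (ℕ × ℕ)))
      (u.sigma fun k => Finset.range (k.1 + 1) ×ˢ Finset.range (k.2 + 1) :
        Finset ((_ : ℕ × ℕ) × (ℕ × ℕ))) := by
    rintro ⟨⟨a, b⟩, ⟨c, d⟩⟩ h ⟨⟨a', b'⟩, ⟨c', d'⟩⟩ h' e
    simp at h h' e
    obtain ⟨⟨rfl, rfl⟩, e1, e2⟩ := e
    have : a = a' := by omega
    have : b = b' := by omega
    subst_vars
    rfl
  rw [← Finset.sum_image (f := fun y : (ℕ × ℕ) × (ℕ × ℕ) =>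
    w (y.1.1 + y.1.2) * x ^ (y.2.1 + y.2.2)) hinj]
  exact h3.sum_le_tsum _ fun y _ => mul_nonneg (hw _) (by positivity)

/-- Convolution with a geometric sequence preserves summability against `l + 1`, by
`l + 1 ≤ (j + 1) (l - j + 1)`. -/
theorem summable_conv_one (κ : ℕ → ℝ) (hκ : ∀ l, 0 ≤ κ l)
    (hs : Summable fun l : ℕ => ((l : ℝ) + 1) * κ l) (x : ℝ) (hx0 : 0 ≤ x) (hx1 : x < 1) :
    Summable fun l : ℕ => ((l : ℝ) + 1) * ∑ j ∈ Finset.range (l + 1), κ j * x ^ (l - j) := by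
  have hg : Summable fun n : ℕ => ((n : ℝ) + 1) * x ^ n := by
    have h1 := summable_pow_mul_geometric_of_norm_lt_one (R := ℝ) 1
      (r := x) (by rwa [Real.norm_eq_abs, abs_of_nonneg hx0])
    have h2 := summable_geometric_of_lt_one hx0 hx1
    simpa [add_mul] using h1.add h2
  have h := summable_norm_sum_mul_range_of_summable_norm (f := fun l : ℕ => ((l : ℝ) + 1) * κ l)
    (g := fun n : ℕ => ((n : ℝ) + 1) * x ^ n) hs.norm hg.norm
  refine Summable.of_nonneg_of_le (fun l => ?_) (fun l => ?_) h
  · exact mul_nonneg (by positivity) (Finset.sum_nonneg fun j _ =>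
      mul_nonneg (hκ j) (by positivity))
  · refine le_trans ?_ (le_abs_self _)
    rw [Finset.mul_sum]
    refine Finset.sum_le_sum fun j hj => ?_
    have hj' : j ≤ l := by simpa [Nat.lt_succ_iff] using hj
    have e : ((l : ℝ) + 1) ≤ ((j : ℝ) + 1) * (((l - j : ℕ) : ℝ) + 1) := by
      rw [Nat.cast_sub hj']
      have : (0 : ℝ) ≤ j * ((l : ℝ) - j) :=
        mul_nonneg (by positivity) (sub_nonneg.2 (by exact_mod_cast hj'))
      nlinarith
    have : 0 ≤ κ j * x ^ (l - j) := mul_nonneg (hκ j) (by positivity)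
    nlinarith [mul_le_mul_of_nonneg_right e this]

/-! ### Iterated logarithms -/

theorem rlog_mono : Monotone rlog := fun x y h =>
  Real.log_le_log (by positivity) (max_le_max h le_rfl)

theorem log_two_le_rlog (x : ℝ) : Real.log 2 ≤ rlog x :=
  Real.log_le_log (by norm_num) (le_max_right _ _)

theorem rlog_pos (x : ℝ) : 0 < rlog x := (Real.log_pos (by norm_num)).trans_le (log_two_le_rlog x)

theorem itlog_mono : ∀ k, Monotone (itlog k)
  | 0 => monotone_id
  | k + 1 => rlog_mono.comp (itlog_mono k)

theorem itlog_pos {k : ℕ} (hk : 1 ≤ k) (x : ℝ) : 0 < itlog k x := by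
  obtain ⟨k, rfl⟩ := Nat.exists_eq_add_of_le' hk
  exact rlog_pos _

theorem logNu2_pos {ν : ℕ} (hν : 1 ≤ ν) (x : ℝ) : 0 < logNu2 ν x :=
  mul_pos (Finset.prod_pos fun _ hk => itlog_pos (Finset.mem_Icc.1 hk).1 x) (itlog_pos hν x)

theorem logNu2_mono {ν : ℕ} (hν : 1 ≤ ν) : Monotone (logNu2 ν) := fun x y h =>
  mul_le_mul (Finset.prod_le_prod (fun _ hk => (itlog_pos (Finset.mem_Icc.1 hk).1 x).le)
    fun k _ => itlog_mono k h) (itlog_mono ν h) (itlog_pos hν x).le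
    (Finset.prod_nonneg fun _ hk => (itlog_pos (Finset.mem_Icc.1 hk).1 y).le)

theorem itlog_succ' (k : ℕ) (x : ℝ) : itlog (k + 1) x = itlog k (rlog x) := by
  induction k with
  | zero => rfl
  | succ k ih => exact congrArg rlog ih

theorem logNu2_succ (ν : ℕ) (x : ℝ) : logNu2 (ν + 1) x = rlog x * logNu2 ν (rlog x) := by
  unfold logNu2
  have : ∏ k ∈ Finset.Icc 1 (ν + 1), itlog k x = rlog x * ∏ k ∈ Finset.Icc 1 ν, itlog k (rlog x) := by
    induction ν with
    | zero => simp [itlog]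
    | succ ν ih =>
      rw [Finset.prod_Icc_succ_top (by omega), ih, Finset.prod_Icc_succ_top (by omega),
        itlog_succ' (ν + 1), mul_assoc]
  rw [this, itlog_succ', mul_assoc]

theorem measurable_rlog : Measurable rlog := rlog_mono.measurable

theorem measurable_logNu2 {ν : ℕ} (hν : 1 ≤ ν) : Measurable (logNu2 ν) :=
  (logNu2_mono hν).measurable

theorem rlog_two_rpow_ge (x : ℝ) : x * Real.log 2 ≤ rlog ((2 : ℝ) ^ x) := by
  rw [← Real.log_rpow (by norm_num)]
  exact Real.log_le_log (by positivity) (le_max_left _ _)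

/-- Cauchy condensation turns the series for `ν + 1` into the one for `ν`. -/
theorem summable_inv_logNu2 (ν : ℕ) (hν : 1 ≤ ν) : ∀ a : ℝ, 0 < a →
    Summable fun K : ℕ => (logNu2 ν ((2 : ℝ) ^ (a * K)))⁻¹ := by
  have hl2 : 0 < Real.log 2 := Real.log_pos (by norm_num)
  induction ν, hν using Nat.le_induction with
  | base =>
    intro a ha
    have h := ((Real.summable_nat_pow_inv (p := 2)).2 (by norm_num)).mul_left ((a * Real.log 2) ^ 2)⁻¹
    refine Summable.of_norm_bounded_eventually_nat h ?_
    filter_upwards [eventually_gt_atTop 0] with K hK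
    have hK' : (0 : ℝ) < K := by exact_mod_cast hK
    rw [Real.norm_eq_abs, abs_of_pos (inv_pos.2 (logNu2_pos le_rfl _)), ← mul_inv, ← mul_pow]
    have e : logNu2 1 ((2 : ℝ) ^ (a * K)) = (rlog ((2 : ℝ) ^ (a * K))) ^ 2 := by
      simp [logNu2, itlog, sq]
    rw [e]
    have := rlog_two_rpow_ge (a * K)
    refine inv_anti₀ (by positivity) (pow_le_pow_left₀ (by positivity) ?_ 2)
    linarith
  | succ ν hν ih =>
    intro a ha
    have hpos : ∀ x, 0 < (logNu2 (ν + 1) x)⁻¹ := fun x => inv_pos.2 (logNu2_pos (by omega) x)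
    refine (summable_condensed_iff_of_nonneg (fun n => (hpos _).le) ?_).1 ?_
    · intro m n _ hmn
      refine inv_anti₀ (logNu2_pos (by omega) _) (logNu2_mono (by omega) ?_)
      refine Real.rpow_le_rpow_of_exponent_le (by norm_num) ?_
      have : (m : ℝ) ≤ n := by exact_mod_cast hmn
      gcongr
    · have h := (ih (1 / 2) (by norm_num)).mul_left (a * Real.log 2)⁻¹
      refine Summable.of_norm_bounded_eventually_nat h ?_
      have hlim : Tendsto (fun j : ℕ => (2 : ℝ) ^ ((1 / 2 : ℝ) * j)) atTop atTop := by
        have : ∀ j : ℕ, (2 : ℝ) ^ ((1 / 2 : ℝ) * j) = ((2 : ℝ) ^ (1 / 2 : ℝ)) ^ j := fun j => by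
          rw [Real.rpow_mul (by norm_num), Real.rpow_natCast]
        simp only [this]
        exact tendsto_pow_atTop_atTop_of_one_lt (Real.one_lt_rpow (by norm_num) (by norm_num))
      filter_upwards [hlim.eventually_ge_atTop (a * Real.log 2)⁻¹] with j hj
      have hge : (2 : ℝ) ^ ((1 / 2 : ℝ) * j) ≤ a * Real.log 2 * 2 ^ j := by
        have e : (2 : ℝ) ^ j = (2 : ℝ) ^ ((1 / 2 : ℝ) * j) * (2 : ℝ) ^ ((1 / 2 : ℝ) * j) := by
          rw [← Real.rpow_add (by norm_num), ← Real.rpow_natCast]; congr 1; ring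
        rw [e, ← mul_assoc]
        refine le_mul_of_one_le_left (by positivity) ?_
        rwa [inv_le_iff_one_le_mul₀' (by positivity)] at hj
      have hr := rlog_two_rpow_ge (a * (2 : ℝ) ^ j)
      push_cast
      rw [Real.norm_eq_abs, abs_of_pos (mul_pos (by positivity) (hpos _)), logNu2_succ, mul_inv,
        ← mul_assoc]
      have hr' : a * Real.log 2 * 2 ^ j ≤ rlog ((2 : ℝ) ^ (a * (2 : ℝ) ^ j)) := by linarith
      refine mul_le_mul ?_ (inv_anti₀ (logNu2_pos hν _) (logNu2_mono hν (hge.trans hr')))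
        (inv_pos.2 (logNu2_pos hν _)).le (by positivity)
      rw [← div_eq_mul_inv, div_le_iff₀ (rlog_pos _), inv_mul_eq_div, le_div_iff₀ (by positivity)]
      linarith

/-! ### Truncated nonnegative fields -/

/-- The truncation level `2^(α l)` attached to rectangles of area `2^l`. -/
def lev (α : ℝ) (l : ℕ) : ℝ := (2 : ℝ) ^ (α * l)

theorem lev_pos (α : ℝ) (l : ℕ) : 0 < lev α l := Real.rpow_pos_of_pos (by norm_num) _

theorem lev_zero (α : ℝ) : lev α 0 = 1 := by simp [lev]

theorem lev_mono {α : ℝ} (hα : 0 ≤ α) : Monotone (lev α) := fun m n h =>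
  Real.rpow_le_rpow_of_exponent_le (by norm_num)
    (mul_le_mul_of_nonneg_left (by exact_mod_cast h) hα)

/-- The contribution of `{y > lev α l}` to the `p`-th moment. -/
def tailp (p α : ℝ) (l : ℕ) (y : ℝ) : ℝ := if lev α l < y then y ^ p else 0

/-- A nonnegative random field on `ℕ × ℕ` whose `p`-th powers are uniformly integrable at rate
`κ`, and whose truncations `min Y c` satisfy the moment inequality of order `2q` with
constant `C`. -/
structure GoodField {Ω : Type*} [MeasureSpace Ω] (p α q C : ℝ) (κ : ℕ → ℝ)
    (Y : ℕ → ℕ → Ω → ℝ) : Prop where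
  meas : ∀ i j, Measurable (Y i j)
  nonneg : ∀ i j ω, 0 ≤ Y i j ω
  integ : ∀ i j, Integrable fun ω => Y i j ω ^ p
  tail : ∀ l i j, ∫ ω, tailp p α l (Y i j ω) ≤ κ l
  moment : ∀ B : Finset (ℕ × ℕ), B.Nonempty → ∀ c : ℝ, 0 ≤ c → ∀ A A' : ℝ,
    (∀ x ∈ B, ∫ ω, (min (Y x.1 x.2 ω) c) ^ (2 * q) ≤ A) →
    (∀ x ∈ B, ∫ ω, (min (Y x.1 x.2 ω) c) ^ 2 ≤ A') →
    ∫ ω, |∑ x ∈ B, (min (Y x.1 x.2 ω) c - ∫ ω', min (Y x.1 x.2 ω') c)| ^ (2 * q) ≤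
      C * ((B.card : ℝ) * A + (B.card : ℝ) ^ q * A' ^ q)

theorem tailp_nonneg (p α : ℝ) (l : ℕ) {y : ℝ} (hy : 0 ≤ y) : 0 ≤ tailp p α l y := by
  unfold tailp; split_ifs <;> positivity

theorem integrable_of_bdd {Ω : Type*} [MeasureSpace Ω] [IsProbabilityMeasure (volume : Measure Ω)]
    {f : Ω → ℝ} (hf : Measurable f) (K : ℝ) (h : ∀ ω, |f ω| ≤ K) : Integrable f :=
  Integrable.of_bound hf.aestronglyMeasurable K (Eventually.of_forall h)

/-- Bound for the `r`-th moment of a variable truncated at level `lev α l`. -/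
def trMom (p α : ℝ) (κ : ℕ → ℝ) (r : ℝ) (l : ℕ) : ℝ :=
  1 + ∑ j ∈ Finset.range l, lev α (j + 1) ^ r * (lev α j ^ (-p) * κ j)

namespace GoodField

variable {Ω : Type*} [MeasureSpace Ω] {p α q C : ℝ} {κ : ℕ → ℝ} {Y : ℕ → ℕ → Ω → ℝ}

theorem κ_nonneg (h : GoodField p α q C κ Y) (l : ℕ) : 0 ≤ κ l :=
  (integral_nonneg fun ω => tailp_nonneg p α l (h.nonneg 0 0 ω)).trans (h.tail l 0 0)

theorem integrable_tailp (h : GoodField p α q C κ Y) (l i j : ℕ) :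
    Integrable fun ω => tailp p α l (Y i j ω) := by
  have e : (fun ω => tailp p α l (Y i j ω)) =
      {ω | lev α l < Y i j ω}.indicator fun ω => Y i j ω ^ p := by
    ext ω; simp [tailp, Set.indicator_apply]
  rw [e]
  exact (h.integ i j).indicator (measurableSet_lt measurable_const (h.meas i j))

/-- Markov at order `p`, on the tail only. -/
theorem prob_le [IsProbabilityMeasure (volume : Measure Ω)] (h : GoodField p α q C κ Y)
    (hp : 0 ≤ p) (l i j : ℕ) :
    (volume : Measure Ω).real {ω | lev α l < Y i j ω} ≤ lev α l ^ (-p) * κ l := by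
  have hm : MeasurableSet {ω | lev α l < Y i j ω} := measurableSet_lt measurable_const (h.meas i j)
  rw [← integral_indicator_one hm]
  refine le_trans ?_ (mul_le_mul_of_nonneg_left (h.tail l i j)
    (Real.rpow_nonneg (lev_pos α l).le _))
  rw [← integral_const_mul]
  refine integral_mono ((integrable_const 1).indicator hm) ((h.integrable_tailp l i j).const_mul _)
    fun ω => ?_
  by_cases hω : lev α l < Y i j ω
  · have := Real.rpow_le_rpow (lev_pos α l).le hω.le hp
    simp only [Set.indicator_apply, Set.mem_ofPred_eq, hω, if_true, tailp, Pi.one_apply]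
    rw [Real.rpow_neg (lev_pos α l).le, inv_mul_eq_div, le_div_iff₀ (Real.rpow_pos_of_pos
      (lev_pos α l) p)]
    linarith
  · simp [hω, tailp]

theorem integrable_min [IsProbabilityMeasure (volume : Measure Ω)] (h : GoodField p α q C κ Y)
    {c : ℝ} (hc : 0 ≤ c) (i j : ℕ) : Integrable fun ω => min (Y i j ω) c :=
  integrable_of_bdd ((h.meas i j).min measurable_const) c fun ω => by
    rw [abs_of_nonneg (le_min (h.nonneg i j ω) hc)]; exact min_le_right _ _

theorem integrable_min_rpow [IsProbabilityMeasure (volume : Measure Ω)]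
    (h : GoodField p α q C κ Y) {c : ℝ} (hc : 0 ≤ c) {r : ℝ} (hr : 0 ≤ r) (i j : ℕ) :
    Integrable fun ω => (min (Y i j ω) c) ^ r :=
  integrable_of_bdd (((h.meas i j).min measurable_const).pow_const r) (c ^ r) fun ω => by
    have := le_min (h.nonneg i j ω) hc
    rw [abs_of_nonneg (Real.rpow_nonneg this _)]
    exact Real.rpow_le_rpow this (min_le_right _ _) hr

/-- Raising the truncation level from `lev α l` to `lev α (l + 1)` adds at most
`lev α (l + 1) ^ r * P(Y > lev α l)` to the `r`-th moment. -/
theorem moment_le_trMom [IsProbabilityMeasure (volume : Measure Ω)] (h : GoodField p α q C κ Y)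
    (hp : 0 ≤ p) (hα : 0 ≤ α) {r : ℝ} (hr : 0 ≤ r) (i j : ℕ) :
    ∀ l, ∫ ω, (min (Y i j ω) (lev α l)) ^ r ≤ trMom p α κ r l := by
  intro l
  induction l with
  | zero =>
    simp only [trMom, Finset.range_zero, Finset.sum_empty, add_zero, lev_zero]
    refine (integral_mono (h.integrable_min_rpow zero_le_one hr i j) (integrable_const 1)
      fun ω => ?_).trans (by simp)
    exact Real.rpow_le_one (le_min (h.nonneg i j ω) zero_le_one) (min_le_right _ _) hr
  | succ l ih =>
    have hc : 0 ≤ lev α (l + 1) ^ r * lev α l ^ (-p) :=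
      mul_nonneg (Real.rpow_nonneg (lev_pos α _).le _) (Real.rpow_nonneg (lev_pos α _).le _)
    have e : trMom p α κ r (l + 1) =
        trMom p α κ r l + lev α (l + 1) ^ r * lev α l ^ (-p) * κ l := by
      simp only [trMom, Finset.sum_range_succ]; ring
    rw [e]
    refine le_trans ?_ (add_le_add ih (mul_le_mul_of_nonneg_left (h.tail l i j) hc))
    have hi := h.integrable_min_rpow (lev_pos α l).le hr i j
    rw [← integral_const_mul, ← integral_add hi ((h.integrable_tailp l i j).const_mul _)]
    refine integral_mono (h.integrable_min_rpow (lev_pos α _).le hr i j)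
      (hi.add ((h.integrable_tailp l i j).const_mul _)) fun ω => ?_
    have hy := h.nonneg i j ω
    simp only
    by_cases hω : lev α l < Y i j ω
    · have h1 := Real.rpow_le_rpow (lev_pos α l).le hω.le hp
      have h2 : (min (Y i j ω) (lev α (l + 1))) ^ r ≤ lev α (l + 1) ^ r :=
        Real.rpow_le_rpow (le_min hy (lev_pos α _).le) (min_le_right _ _) hr
      have h3 : 0 ≤ (min (Y i j ω) (lev α l)) ^ r :=
        Real.rpow_nonneg (le_min hy (lev_pos α _).le) _
      have h4 : 1 ≤ lev α l ^ (-p) * Y i j ω ^ p := by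
        rw [Real.rpow_neg (lev_pos α l).le, inv_mul_eq_div, le_div_iff₀ (Real.rpow_pos_of_pos
          (lev_pos α l) p)]
        linarith
      have h5 := mul_le_mul_of_nonneg_left h4 (Real.rpow_nonneg (lev_pos α (l + 1)).le r)
      simp only [tailp, hω, if_true]
      linarith
    · have h1 : Y i j ω ≤ lev α l := not_lt.1 hω
      have h2 : lev α l ≤ lev α (l + 1) := lev_mono hα (Nat.le_succ l)
      simp [tailp, hω, min_eq_left h1, min_eq_left (h1.trans h2)]

theorem sq_moment_le [IsProbabilityMeasure (volume : Measure Ω)] (h : GoodField p α q C κ Y)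
    (hp : 2 ≤ p) {c : ℝ} (hc : 0 ≤ c) (i j : ℕ) :
    ∫ ω, (min (Y i j ω) c) ^ 2 ≤ 1 + κ 0 := by
  have hi : Integrable fun ω => (min (Y i j ω) c) ^ 2 := by
    simpa using h.integrable_min_rpow hc (r := 2) (by norm_num) i j
  refine le_trans ?_ (add_le_add_right (h.tail 0 i j) 1)
  have e : (1 : ℝ) = ∫ _ : Ω, (1 : ℝ) := by simp
  conv_rhs => rw [e]
  rw [← integral_add (integrable_const 1) (h.integrable_tailp 0 i j)]
  refine integral_mono hi ((integrable_const 1).add (h.integrable_tailp 0 i j)) fun ω => ?_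
  have hy := h.nonneg i j ω
  have h0 : (min (Y i j ω) c) ^ 2 ≤ Y i j ω ^ 2 :=
    pow_le_pow_left₀ (le_min hy hc) (min_le_left _ _) 2
  refine h0.trans ?_
  simp only [tailp, lev_zero]
  split_ifs with hω
  · have : Y i j ω ^ 2 ≤ Y i j ω ^ p := by
      rw [← Real.rpow_natCast]
      exact Real.rpow_le_rpow_of_exponent_le hω.le (by exact_mod_cast hp)
    linarith
  · nlinarith [not_lt.1 hω]

/-- The mean lost by truncating, over a rectangle of area `2^l`, is of smaller order than the
truncation level. -/
theorem mean_le [IsProbabilityMeasure (volume : Measure Ω)] (h : GoodField p α q C κ Y)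
    (hp : 1 ≤ p) (hαp : 1 ≤ α * p) (l i j : ℕ) (W : Ω → ℝ) (hW : ∀ ω, W ω ≤ Y i j ω) :
    2 ^ l * ∫ ω, (W ω - min (W ω) (lev α l)) ≤ lev α l * κ l := by
  have hl := lev_pos α l
  have h1 : ∫ ω, (W ω - min (W ω) (lev α l)) ≤ lev α l ^ (1 - p) * κ l := by
    refine le_trans ?_ (mul_le_mul_of_nonneg_left (h.tail l i j) (Real.rpow_nonneg hl.le _))
    rw [← integral_const_mul]
    refine integral_mono_of_nonneg (Eventually.of_forall fun ω => sub_nonneg.2 (min_le_left _ _))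
      ((h.integrable_tailp l i j).const_mul _) (Eventually.of_forall fun ω => ?_)
    simp only [tailp]
    have hw := hW ω
    have hy0 := h.nonneg i j ω
    split_ifs with hω
    · have hy : 0 < Y i j ω := hl.trans hω
      have e : Y i j ω = Y i j ω ^ (1 - p) * Y i j ω ^ p := by
        rw [← Real.rpow_add hy]; simp
      have e2 : Y i j ω ^ (1 - p) ≤ lev α l ^ (1 - p) :=
        Real.rpow_le_rpow_of_nonpos hl hω.le (by linarith)
      have e3 := mul_le_mul_of_nonneg_right e2 (Real.rpow_nonneg hy.le p)
      rcases le_total (W ω) (lev α l) with h4 | h4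
      · rw [min_eq_left h4, sub_self]
        exact mul_nonneg (Real.rpow_nonneg hl.le _) (Real.rpow_nonneg hy.le p)
      · rw [min_eq_right h4]; linarith
    · rw [min_eq_left (hw.trans (not_lt.1 hω))]; simp
  have h2 : (2 : ℝ) ^ l * lev α l ^ (1 - p) ≤ lev α l := by
    unfold lev
    rw [← Real.rpow_natCast, ← Real.rpow_mul (by norm_num), ← Real.rpow_add (by norm_num)]
    refine Real.rpow_le_rpow_of_exponent_le (by norm_num) ?_
    have : (0 : ℝ) ≤ l := by positivity
    nlinarith
  calc _ ≤ 2 ^ l * (lev α l ^ (1 - p) * κ l) := by gcongr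
    _ = (2 ^ l * lev α l ^ (1 - p)) * κ l := by ring
    _ ≤ _ := mul_le_mul_of_nonneg_right h2 (h.κ_nonneg l)

end GoodField

theorem trMom_mono (p α : ℝ) {κ : ℕ → ℝ} (hκ : ∀ l, 0 ≤ κ l) (r : ℝ) :
    Monotone (trMom p α κ r) := fun m n h => by
  unfold trMom
  have := Finset.sum_le_sum_of_subset_of_nonneg
    (f := fun j => lev α (j + 1) ^ r * (lev α j ^ (-p) * κ j)) (Finset.range_mono h) fun j _ _ =>
    mul_nonneg (Real.rpow_nonneg (lev_pos α _).le _)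
      (mul_nonneg (Real.rpow_nonneg (lev_pos α _).le _) (hκ j))
  linarith

theorem trMom_nonneg (p α : ℝ) {κ : ℕ → ℝ} (hκ : ∀ l, 0 ≤ κ l) (r : ℝ) (l : ℕ) :
    0 ≤ trMom p α κ r l := by
  refine le_trans ?_ (trMom_mono p α hκ r (Nat.zero_le l))
  simp [trMom]

/-- For `r > p`, the truncated `r`-th moments normalised by `2^(α (r - p) l)` inherit the
summability of `κ`: they are the convolution of `κ` with a geometric sequence. -/
theorem summable_trMom {p α r : ℝ} (hα : 0 < α) (hpr : p < r) {κ : ℕ → ℝ} (hκ : ∀ l, 0 ≤ κ l)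
    (hs : Summable fun l : ℕ => ((l : ℝ) + 1) * κ l) :
    Summable fun l : ℕ => ((l : ℝ) + 1) *
      ((2 : ℝ) ^ (α * (p - r) * l) * trMom p α κ r (l + 1)) := by
  set x : ℝ := (2 : ℝ) ^ (α * (p - r)) with hx
  have hx0 : 0 < x := Real.rpow_pos_of_pos (by norm_num) _
  have hx1 : x < 1 := Real.rpow_lt_one_of_one_lt_of_neg (by norm_num) (by nlinarith)
  have hg : Summable fun n : ℕ => ((n : ℝ) + 1) * x ^ n := by
    have h1 := summable_pow_mul_geometric_of_norm_lt_one (R := ℝ) 1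
      (r := x) (by rwa [Real.norm_eq_abs, abs_of_nonneg hx0.le])
    have h2 := summable_geometric_of_lt_one hx0.le hx1
    simpa [add_mul] using h1.add h2
  refine (hg.add ((summable_conv_one κ hκ hs x hx0.le hx1).mul_left ((2 : ℝ) ^ (α * r)))).congr
    fun l => ?_
  have e : (2 : ℝ) ^ (α * (p - r) * l) = x ^ l := by
    rw [Real.rpow_mul (by norm_num), Real.rpow_natCast]
  rw [e, trMom, mul_add (x ^ l), mul_one, mul_add, Finset.mul_sum, Finset.mul_sum, Finset.mul_sum,
    Finset.mul_sum]
  congr 1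
  refine Finset.sum_congr rfl fun j hj => ?_
  have hj' : j ≤ l := by simpa [Nat.lt_succ_iff] using hj
  have e1 : x ^ (l - j) * x ^ j = x ^ l := by rw [← pow_add]; congr 1; omega
  have e2 : x ^ j * (lev α (j + 1) ^ r * lev α j ^ (-p)) = (2 : ℝ) ^ (α * r) := by
    unfold lev
    rw [hx, ← Real.rpow_natCast, ← Real.rpow_mul (by norm_num), ← Real.rpow_mul (by norm_num),
      ← Real.rpow_mul (by norm_num), ← Real.rpow_add (by norm_num), ← Real.rpow_add (by norm_num)]
    congr 1
    push_cast
    ring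
  rw [← e1, ← e2]
  ring

/-- Uniform bound for the `2q`-th moments of centred sums over rectangles of area `2^l`. -/
theorem GoodField.exists_blockBound {Ω : Type*} [MeasureSpace Ω]
    [IsProbabilityMeasure (volume : Measure Ω)] {p α q C : ℝ} {κ : ℕ → ℝ} {Y : ℕ → ℕ → Ω → ℝ}
    (h : GoodField p α q C κ Y) (hp : 1 ≤ p) (hα : 1 / 2 < α) (hC : 0 ≤ C)
    (hq1 : 1 ≤ q) (hq2 : p < 2 → q = 1) (hq3 : 2 ≤ p → (α * p - 1) / (2 * α - 1) < q)
    (hs : Summable fun l : ℕ => ((l : ℝ) + 1) * κ l) :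
    p < 2 * q ∧ ∃ D : ℕ → ℝ, (∀ l, 0 ≤ D l) ∧
      (Summable fun l : ℕ => ((l : ℝ) + 1) *
        ((2 : ℝ) ^ ((α * p - 1 - 2 * q * α) * l) * D l)) ∧
      ∀ (l l' : ℕ), l' ≤ l + 1 → ∀ B : Finset (ℕ × ℕ), B.card = 2 ^ l →
        ∫ ω, |∑ x ∈ B, (min (Y x.1 x.2 ω) (lev α l') -
          ∫ ω', min (Y x.1 x.2 ω') (lev α l'))| ^ (2 * q) ≤ D l := by
  have hκ := h.κ_nonneg
  have hα0 : 0 < α := by linarith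
  have h2q : 0 ≤ 2 * q := by linarith
  have hne : ∀ (l : ℕ) (B : Finset (ℕ × ℕ)), B.card = 2 ^ l → B.Nonempty := fun l B hB =>
    Finset.card_pos.1 (by rw [hB]; positivity)
  rcases lt_or_ge p 2 with hp2 | hp2
  · obtain rfl := hq2 hp2
    refine ⟨by linarith, fun l => C * (2 * (2 ^ l * trMom p α κ (2 * 1) (l + 1))), fun l =>
      mul_nonneg hC (mul_nonneg zero_le_two (mul_nonneg (by positivity)
        (trMom_nonneg p α hκ _ _))), ?_, ?_⟩
    · refine ((summable_trMom (p := p) (r := 2 * 1) hα0 (by linarith) hκ hs).mul_left (2 * C)).congr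
        fun l => ?_
      have : (2 : ℝ) ^ (α * (p - 2 * 1) * l) = (2 : ℝ) ^ ((α * p - 1 - 2 * 1 * α) * l) * 2 ^ l := by
        rw [← Real.rpow_natCast 2 l, ← Real.rpow_add (by norm_num)]; congr 1; ring
      rw [this]; ring
    · intro l l' hl B hB
      have hm : ∀ x ∈ B, ∫ ω, (min (Y x.1 x.2 ω) (lev α l')) ^ ((2 : ℝ) * 1) ≤
          trMom p α κ (2 * 1) (l + 1) := fun x _ =>
        (h.moment_le_trMom (by linarith) hα0.le h2q x.1 x.2 l').trans (trMom_mono p α hκ _ hl)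
      refine (h.moment B (hne l B hB) (lev α l') (lev_pos α l').le _
        (trMom p α κ (2 * 1) (l + 1)) hm fun x hx => ?_).trans (le_of_eq ?_)
      · have := hm x hx
        simpa using this
      · rw [hB, Real.rpow_one, Real.rpow_one]; push_cast; ring
  · have hq := hq3 hp2
    rw [div_lt_iff₀ (by linarith)] at hq
    have hpq : p < 2 * q := by
      by_contra hcon
      have : q * (2 * α - 1) ≤ p / 2 * (2 * α - 1) :=
        mul_le_mul_of_nonneg_right (by linarith) (by linarith)
      nlinarith
    have hV : 0 ≤ (1 + κ 0) ^ q := Real.rpow_nonneg (by linarith [hκ 0]) _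
    refine ⟨hpq, fun l => C * (2 ^ l * trMom p α κ (2 * q) (l + 1) +
      ((2 : ℝ) ^ l) ^ q * (1 + κ 0) ^ q), fun l =>
      mul_nonneg hC (add_nonneg (mul_nonneg (by positivity)
        (trMom_nonneg p α hκ _ _)) (mul_nonneg (by positivity) hV)), ?_, ?_⟩
    · set y : ℝ := (2 : ℝ) ^ (α * p - 1 - 2 * q * α + q) with hy
      have hy0 : 0 < y := Real.rpow_pos_of_pos (by norm_num) _
      have hy1 : y < 1 := Real.rpow_lt_one_of_one_lt_of_neg (by norm_num) (by nlinarith)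
      have hg : Summable fun n : ℕ => ((n : ℝ) + 1) * y ^ n := by
        have h1 := summable_pow_mul_geometric_of_norm_lt_one (R := ℝ) 1
          (r := y) (by rwa [Real.norm_eq_abs, abs_of_nonneg hy0.le])
        have h2 := summable_geometric_of_lt_one hy0.le hy1
        simpa [add_mul] using h1.add h2
      refine (((summable_trMom (r := 2 * q) hα0 hpq hκ hs).mul_left C).add
        (hg.mul_left (C * (1 + κ 0) ^ q))).congr fun l => ?_
      have e1 : (2 : ℝ) ^ (α * (p - 2 * q) * l) =
          (2 : ℝ) ^ ((α * p - 1 - 2 * q * α) * l) * 2 ^ l := by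
        rw [← Real.rpow_natCast 2 l, ← Real.rpow_add (by norm_num)]; congr 1; ring
      have e2 : y ^ l = (2 : ℝ) ^ ((α * p - 1 - 2 * q * α) * l) * ((2 : ℝ) ^ l) ^ q := by
        rw [hy, ← Real.rpow_natCast, ← Real.rpow_natCast 2 l, ← Real.rpow_mul (by norm_num),
          ← Real.rpow_mul (by norm_num), ← Real.rpow_add (by norm_num)]; congr 1; ring
      rw [e1, e2]; ring
    · intro l l' hl B hB
      refine (h.moment B (hne l B hB) (lev α l') (lev_pos α l').le _ _ (fun x _ =>
        (h.moment_le_trMom (by linarith) hα0.le h2q x.1 x.2 l').trans (trMom_mono p α hκ _ hl))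
        (fun x _ => h.sq_moment_le hp2 (lev_pos α l').le x.1 x.2)).trans (le_of_eq ?_)
      rw [hB]; push_cast; ring

/-! ### Maximal probabilities for nonnegative fields -/

theorem measureReal_lt_abs_le {Ω : Type*} [MeasureSpace Ω]
    [IsProbabilityMeasure (volume : Measure Ω)] {f : Ω → ℝ} {r x D : ℝ} (hr : 0 < r) (hx : 0 < x)
    (hf : Integrable fun ω => |f ω| ^ r) (hD : ∫ ω, |f ω| ^ r ≤ D) :
    (volume : Measure Ω).real {ω | x < |f ω|} ≤ D / x ^ r := by
  rw [le_div_iff₀ (Real.rpow_pos_of_pos hx r), mul_comm]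
  refine le_trans ?_ ((mul_meas_ge_le_integral_of_nonneg
    (Eventually.of_forall fun ω => Real.rpow_nonneg (abs_nonneg (f ω)) r) hf (x ^ r)).trans hD)
  refine mul_le_mul_of_nonneg_left (measureReal_mono fun ω hω => ?_) (by positivity)
  exact Real.rpow_le_rpow hx.le (le_of_lt hω) hr.le

namespace GoodField

variable {Ω : Type*} [MeasureSpace Ω] [IsProbabilityMeasure (volume : Measure Ω)]
  {p α q C : ℝ} {κ : ℕ → ℝ} {Y : ℕ → ℕ → Ω → ℝ}

theorem integrable (h : GoodField p α q C κ Y) (hp : 1 ≤ p) (i j : ℕ) : Integrable (Y i j) := by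
  refine Integrable.mono' ((integrable_const (1 : ℝ)).add (h.integ i j))
    (h.meas i j).aestronglyMeasurable (Eventually.of_forall fun ω => ?_)
  have hy := h.nonneg i j ω
  rw [Real.norm_eq_abs, abs_of_nonneg hy, Pi.add_apply]
  rcases le_total (Y i j ω) 1 with h1 | h1
  · linarith [Real.rpow_nonneg hy p]
  · have := Real.rpow_le_rpow_of_exponent_le h1 hp
    rw [Real.rpow_one] at this
    linarith

theorem integrable_block (h : GoodField p α q C κ Y) (hq : 0 ≤ q) {c : ℝ} (hc : 0 ≤ c)
    (B : Finset (ℕ × ℕ)) :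
    Integrable fun ω => |∑ x ∈ B, (min (Y x.1 x.2 ω) c - ∫ ω', min (Y x.1 x.2 ω') c)| ^ (2 * q) := by
  have hmeas : Measurable fun ω =>
      ∑ x ∈ B, (min (Y x.1 x.2 ω) c - ∫ ω', min (Y x.1 x.2 ω') c) :=
    Finset.measurable_sum _ fun x _ => ((h.meas x.1 x.2).min measurable_const).sub_const _
  refine integrable_of_bdd (hmeas.abs.pow_const _)
    ((∑ x ∈ B, (c + |∫ ω', min (Y x.1 x.2 ω') c|)) ^ (2 * q)) fun ω => ?_
  rw [abs_of_nonneg (Real.rpow_nonneg (abs_nonneg _) _)]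
  refine Real.rpow_le_rpow (abs_nonneg _) ((Finset.abs_sum_le_sum_abs _ _).trans
    (Finset.sum_le_sum fun x _ => (abs_sub _ _).trans (add_le_add_left ?_ _))) (by linarith)
  rw [abs_of_nonneg (le_min (h.nonneg _ _ ω) hc)]
  exact min_le_right _ _

/-- On the event that no variable exceeds the top truncation level and that all dyadic blocks are
small, every partial sum is small. -/
theorem partial_sum_le (h : GoodField p α q C κ Y) (hp : 1 ≤ p) (hα : 0 ≤ α) (hαp : 1 ≤ α * p)
    (M N : ℕ) (lam : ℕ → ℕ → ℝ) (ω : Ω)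
    (hY : ∀ i < 2 ^ M, ∀ j < 2 ^ N, Y i j ω ≤ lev α (M + N))
    (hb : ∀ s ≤ M, ∀ t ≤ N, ∀ k < 2 ^ (M - s), ∀ k' < 2 ^ (N - t), ∀ l', l' = s + t ∨ l' = s + t + 1 →
      |∑ x ∈ dyad s k ×ˢ dyad t k', (min (Y x.1 x.2 ω) (lev α l') -
        ∫ ω', min (Y x.1 x.2 ω') (lev α l'))| ≤ lam s t)
    (u v : ℕ) (hu : u ≤ 2 ^ M) (hv : v ≤ 2 ^ N) :
    |∑ i ∈ Finset.range u, ∑ j ∈ Finset.range v, (Y i j ω - ∫ ω', Y i j ω')| ≤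
      ∑ s ∈ Finset.range (M + 1), ∑ t ∈ Finset.range (N + 1),
        (24 * lam s t + 8 * (lev α (s + t) * κ (s + t))) + lev α (M + N) * κ (M + N) := by
  have hmin : ∀ l i j ω, min (min (Y i j ω) (lev α (l + 1))) (lev α l) = min (Y i j ω) (lev α l) :=
    fun l i j ω => by rw [min_assoc, min_eq_right (lev_mono hα (Nat.le_succ l))]
  have hint : ∀ l i j, Integrable fun ω => min (Y i j ω) (lev α l) := fun l i j =>
    h.integrable_min (lev_pos α l).le i j
  have key := chain_two
    (fun l i j => min (Y i j ω) (lev α l) - ∫ ω', min (Y i j ω') (lev α l))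
    (fun l i j => min (Y i j ω) (lev α (l + 1)) - min (Y i j ω) (lev α l))
    (fun l i j => ∫ ω', (min (Y i j ω') (lev α (l + 1)) - min (Y i j ω') (lev α l)))
    lam (fun l => lev α l * κ l / 2 ^ l) M N ?_ ?_ ?_ ?_ ?_ ?_ u v hu hv
  · have e1 : ∀ i ∈ Finset.range u, ∀ j ∈ Finset.range v, Y i j ω - ∫ ω', Y i j ω' =
        (min (Y i j ω) (lev α (M + N)) - ∫ ω', min (Y i j ω') (lev α (M + N))) -
          ∫ ω', (Y i j ω' - min (Y i j ω') (lev α (M + N))) := by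
      intro i hi j hj
      rw [integral_sub (h.integrable hp i j) (hint _ i j), min_eq_left (hY i
        ((Finset.mem_range.1 hi).trans_le hu) j ((Finset.mem_range.1 hj).trans_le hv))]
      ring
    rw [Finset.sum_congr rfl fun i hi => Finset.sum_congr rfl (e1 i hi)]
    rw [Finset.sum_congr rfl fun i _ => Finset.sum_sub_distrib _ _, Finset.sum_sub_distrib]
    refine (abs_sub _ _).trans (add_le_add (key.trans (le_of_eq ?_)) ?_)
    · refine Finset.sum_congr rfl fun s _ => Finset.sum_congr rfl fun t _ => ?_
      rw [mul_div_cancel₀ _ (by positivity)]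
    · have hL := mul_nonneg (lev_pos α (M + N)).le (h.κ_nonneg (M + N))
      have h0 : ∀ i j, 0 ≤ ∫ ω', (Y i j ω' - min (Y i j ω') (lev α (M + N))) := fun i j =>
        integral_nonneg fun ω => sub_nonneg.2 (min_le_left _ _)
      rw [abs_of_nonneg (Finset.sum_nonneg fun i _ => Finset.sum_nonneg fun j _ => h0 i j),
        ← Finset.sum_product']
      refine (Finset.sum_le_card_nsmul _ _ (lev α (M + N) * κ (M + N) / 2 ^ (M + N))
        fun x _ => ?_).trans ?_
      · rw [le_div_iff₀ (by positivity), mul_comm]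
        exact h.mean_le hp hαp (M + N) x.1 x.2 (Y x.1 x.2) fun _ => le_rfl
      · rw [nsmul_eq_mul, Finset.card_product, Finset.card_range, Finset.card_range, mul_div_assoc',
          div_le_iff₀ (by positivity), mul_comm]
        refine mul_le_mul_of_nonneg_left ?_ hL
        rw [pow_add]
        exact_mod_cast Nat.mul_le_mul hu hv
  · intro l i j
    rw [integral_sub (hint _ i j) (hint _ i j)]
    ring
  · exact fun l i j => sub_nonneg.2 (min_le_min_left _ (lev_mono hα (Nat.le_succ l)))
  · exact fun l i j => integral_nonneg fun ω =>
      sub_nonneg.2 (min_le_min_left _ (lev_mono hα (Nat.le_succ l)))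
  · intro l i j
    rw [le_div_iff₀ (by positivity), mul_comm]
    have := h.mean_le hp hαp l i j (fun ω => min (Y i j ω) (lev α (l + 1)))
      fun ω => min_le_left _ _
    simpa only [hmin] using this
  · exact fun s hs t ht k hk k' hk' => hb s hs t ht k hk k' hk' _ (Or.inl rfl)
  · exact fun s hs t ht k hk k' hk' => hb s hs t ht k hk k' hk' _ (Or.inr rfl)

/-- The maximal probability is bounded by that of some variable exceeding the top level, plus
those of the bad dyadic rectangles. The factor `2` accounts for the two truncation levels `s + t` and
`s + t + 1` at which each rectangle is used. -/
theorem prob_partial_sum_le (h : GoodField p α q C κ Y) (hp : 1 ≤ p) (hα : 0 ≤ α)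
    (hαp : 1 ≤ α * p) (hq : 0 < q) (D : ℕ → ℝ)
    (hD : ∀ (l l' : ℕ), l' ≤ l + 1 → ∀ B : Finset (ℕ × ℕ), B.card = 2 ^ l →
        ∫ ω, |∑ x ∈ B, (min (Y x.1 x.2 ω) (lev α l') -
          ∫ ω', min (Y x.1 x.2 ω') (lev α l'))| ^ (2 * q) ≤ D l)
    (M N : ℕ) (lam : ℕ → ℕ → ℝ) (hlam : ∀ s t, 0 < lam s t) (y : ℝ)
    (hy : ∑ s ∈ Finset.range (M + 1), ∑ t ∈ Finset.range (N + 1),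
        (24 * lam s t + 8 * (lev α (s + t) * κ (s + t))) + lev α (M + N) * κ (M + N) ≤ y) :
    (volume : Measure Ω).real {ω | ∃ u ≤ 2 ^ M, ∃ v ≤ 2 ^ N,
      y < |∑ i ∈ Finset.range u, ∑ j ∈ Finset.range v, (Y i j ω - ∫ ω', Y i j ω')|} ≤
    2 ^ (M + N) * (lev α (M + N) ^ (-p) * κ (M + N)) +
      ∑ s ∈ Finset.range (M + 1), ∑ t ∈ Finset.range (N + 1),
        2 ^ (M - s + (N - t)) * (2 * (D (s + t) / lam s t ^ (2 * q))) := by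
  let E (s t k k' l' : ℕ) : Set Ω := {ω | lam s t <
    |∑ x ∈ dyad s k ×ˢ dyad t k', (min (Y x.1 x.2 ω) (lev α l') -
        ∫ ω', min (Y x.1 x.2 ω') (lev α l'))|}
  have hE : ∀ s t k k' l', l' ≤ s + t + 1 →
      (volume : Measure Ω).real (E s t k k' l') ≤ D (s + t) / lam s t ^ (2 * q) := by
    intro s t k k' l' hl
    refine measureReal_lt_abs_le (by linarith) (hlam s t)
      (h.integrable_block hq.le (lev_pos α l').le _) (hD (s + t) l' hl _ ?_)
    rw [Finset.card_product, card_dyad, card_dyad, pow_add]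
  have hsub : {ω | ∃ u ≤ 2 ^ M, ∃ v ≤ 2 ^ N,
      y < |∑ i ∈ Finset.range u, ∑ j ∈ Finset.range v, (Y i j ω - ∫ ω', Y i j ω')|} ⊆
      (⋃ x ∈ Finset.range (2 ^ M) ×ˢ Finset.range (2 ^ N), {ω | lev α (M + N) < Y x.1 x.2 ω}) ∪
      ⋃ s ∈ Finset.range (M + 1), ⋃ t ∈ Finset.range (N + 1),
        ⋃ x ∈ Finset.range (2 ^ (M - s)) ×ˢ Finset.range (2 ^ (N - t)),
          (E s t x.1 x.2 (s + t) ∪ E s t x.1 x.2 (s + t + 1)) := by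
    rintro ω ⟨u, hu, v, hv, hω⟩
    by_contra hcon
    rw [Set.mem_union, not_or] at hcon
    obtain ⟨c1, c2⟩ := hcon
    refine absurd hω (not_lt.2 ((h.partial_sum_le hp hα hαp M N lam ω ?_ ?_ u v hu hv).trans hy))
    · intro i hi j hj
      by_contra hlt
      exact c1 (Set.mem_biUnion (x := (i, j)) (by simpa using ⟨hi, hj⟩) (not_le.1 hlt))
    · intro s hs t ht k hk k' hk' l' hl'
      by_contra hlt
      refine c2 (Set.mem_biUnion (x := s) (by simpa [Nat.lt_succ_iff] using hs)
        (Set.mem_biUnion (x := t) (by simpa [Nat.lt_succ_iff] using ht)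
        (Set.mem_biUnion (x := (k, k')) (by simpa using ⟨hk, hk'⟩) ?_)))
      rcases hl' with rfl | rfl
      · exact Or.inl (not_le.1 hlt)
      · exact Or.inr (not_le.1 hlt)
  refine (measureReal_mono hsub).trans ((measureReal_union_le _ _).trans (add_le_add ?_ ?_))
  · refine (measureReal_biUnion_finset_le _ _).trans ((Finset.sum_le_card_nsmul _ _ _
      fun x _ => h.prob_le (by linarith) (M + N) x.1 x.2).trans (le_of_eq ?_))
    rw [nsmul_eq_mul, Finset.card_product, Finset.card_range, Finset.card_range, ← pow_add]
    push_cast; rfl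
  · refine (measureReal_biUnion_finset_le _ _).trans (Finset.sum_le_sum fun s _ =>
      (measureReal_biUnion_finset_le _ _).trans (Finset.sum_le_sum fun t _ =>
      (measureReal_biUnion_finset_le _ _).trans ((Finset.sum_le_card_nsmul _ _
        (2 * (D (s + t) / lam s t ^ (2 * q))) fun x _ =>
      (measureReal_union_le _ _).trans ?_).trans (le_of_eq ?_))))
    · have h1 := hE s t x.1 x.2 (s + t) (by omega)
      have h2 := hE s t x.1 x.2 (s + t + 1) le_rfl
      linarith
    · rw [nsmul_eq_mul, Finset.card_product, Finset.card_range, Finset.card_range, ← pow_add]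
      push_cast; rfl

end GoodField

theorem sum_geom_reflect_le {x : ℝ} (hx0 : 0 ≤ x) (hx1 : x < 1) (M : ℕ) :
    ∑ s ∈ Finset.range (M + 1), x ^ (M - s) ≤ (1 - x)⁻¹ := by
  have := Finset.sum_range_reflect (fun s => x ^ s) (M + 1)
  simp only [Nat.add_sub_cancel] at this
  rw [this, ← tsum_geometric_of_lt_one hx0 hx1]
  exact (summable_geometric_of_lt_one hx0 hx1).sum_le_tsum _ fun _ _ => by positivity

/-- The dyadic form of the theorem for nonnegative fields. -/
theorem GoodField.summable_dyadic {Ω : Type*} [MeasureSpace Ω]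
    [IsProbabilityMeasure (volume : Measure Ω)] {p α q C : ℝ} {κ : ℕ → ℝ} {Y : ℕ → ℕ → Ω → ℝ}
    (h : GoodField p α q C κ Y) (hp : 1 ≤ p) (hα : 1 / 2 < α) (hαp : 1 ≤ α * p) (hC : 0 ≤ C)
    (hq1 : 1 ≤ q) (hq2 : p < 2 → q = 1) (hq3 : 2 ≤ p → (α * p - 1) / (2 * α - 1) < q)
    (hs : Summable fun l : ℕ => ((l : ℝ) + 1) * κ l) (ε : ℝ) (hε : 0 < ε) :
    Summable fun k : ℕ × ℕ => (2 : ℝ) ^ ((α * p - 1) * ((k.1 + k.2 : ℕ) : ℝ)) *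
      (volume : Measure Ω).real {ω | ∃ u ≤ 2 ^ k.1, ∃ v ≤ 2 ^ k.2,
        ε * lev α (k.1 + k.2) <
          |∑ i ∈ Finset.range u, ∑ j ∈ Finset.range v, (Y i j ω - ∫ ω', Y i j ω')|} := by
  obtain ⟨hpq, D, hD0, hDs, hD⟩ := h.exists_blockBound hp hα hC hq1 hq2 hq3 hs
  have hα0 : 0 < α := by linarith
  have hq0 : 0 < q := by linarith
  have hκ := h.κ_nonneg
  -- the exponent of geometric decay of the thresholds towards small blocks; any positive number
  -- below `α (2q - p) / (2q)` would do
  obtain ⟨δ, hδ⟩ : ∃ δ, δ = α * (2 * q - p) / (4 * q) := ⟨_, rfl⟩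
  have hδ0 : 0 < δ := by
    rw [hδ]; exact div_pos (mul_pos hα0 (by linarith)) (by linarith)
  have hδq : 2 * q * δ = α * (2 * q - p) / 2 := by rw [hδ]; field_simp; ring
  set θ : ℝ := (2 : ℝ) ^ (-δ) with hθ
  have hθ0 : 0 < θ := Real.rpow_pos_of_pos (by norm_num) _
  have hθ1 : θ < 1 := Real.rpow_lt_one_of_one_lt_of_neg (by norm_num) (by linarith)
  set ρ : ℝ := (2 : ℝ) ^ (α * p - 2 * q * α + 2 * q * δ) with hρ
  have hρ0 : 0 < ρ := Real.rpow_pos_of_pos (by norm_num) _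
  have hρ1 : ρ < 1 := Real.rpow_lt_one_of_one_lt_of_neg (by norm_num) (by rw [hδq]; nlinarith)
  set γ : ℝ := (2 : ℝ) ^ (-α) with hγ
  have hγ0 : 0 < γ := Real.rpow_pos_of_pos (by norm_num) _
  have hγ1 : γ < 1 := Real.rpow_lt_one_of_one_lt_of_neg (by norm_num) (by linarith)
  set η : ℝ := ε * (1 - θ) ^ 2 / 48 with hη
  have hη0 : 0 < η := by have := sub_pos.2 hθ1; positivity
  set w : ℕ → ℝ := fun l => (2 : ℝ) ^ ((α * p - 1 - 2 * q * α) * l) * D l with hw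
  have hw0 : ∀ l, 0 ≤ w l := fun l => mul_nonneg (by positivity) (hD0 l)
  have hconv := summable_conv_two κ hκ hs γ hγ0.le hγ1
  have hmain := ((summable_conv_two w hw0 hDs ρ hρ0.le hρ1).mul_left (2 / η ^ (2 * q))).add
    (summable_add_index κ hκ hs)
  refine Summable.of_norm_bounded_eventually hmain ?_
  filter_upwards [hconv.tendsto_cofinite_zero.eventually (gt_mem_nhds (show (0 : ℝ) < ε / 18 by
    positivity))] with ⟨M, N⟩ hMN
  simp only at hMN ⊢
  have hle : ∀ s ∈ Finset.range (M + 1), s ≤ M := fun s hs => by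
    simpa [Nat.lt_succ_iff] using hs
  have hle' : ∀ s ∈ Finset.range (N + 1), s ≤ N := fun s hs => by
    simpa [Nat.lt_succ_iff] using hs
  have hcast : ∀ s t, s ≤ M → t ≤ N → (((M + N : ℕ) : ℝ)) =
      ((s + t : ℕ) : ℝ) + ((M - s + (N - t) : ℕ) : ℝ) := fun s t h1 h2 => by
    rw [← Nat.cast_add]; congr 1; omega
  have hlev : ∀ s t, s ≤ M → t ≤ N →
      lev α (s + t) = lev α (M + N) * γ ^ (M - s + (N - t)) := by
    intro s t h1 h2
    unfold lev
    rw [hcast s t h1 h2, hγ, ← Real.rpow_natCast, ← Real.rpow_mul (by norm_num),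
      ← Real.rpow_add (by norm_num)]
    congr 1; ring
  have hL := lev_pos α (M + N)
  have hP := h.prob_partial_sum_le hp hα0.le hαp hq0 D hD M N
    (fun s t => η * lev α (M + N) * θ ^ (M - s + (N - t)))
    (fun s t => by positivity) (ε * lev α (M + N)) ?_
  · rw [Real.norm_eq_abs, abs_of_nonneg (by positivity)]
    refine (mul_le_mul_of_nonneg_left hP (by positivity)).trans (le_of_eq ?_)
    rw [mul_add, add_comm]
    congr 1
    · rw [Finset.mul_sum, Finset.mul_sum]
      refine Finset.sum_congr rfl fun s hs' => ?_
      rw [Finset.mul_sum, Finset.mul_sum]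
      refine Finset.sum_congr rfl fun t ht' => ?_
      have e1 := hcast s t (hle s hs') (hle' t ht')
      generalize M - s + (N - t) = r at e1 ⊢
      have e2 : (η * lev α (M + N) * θ ^ r) ^ (2 * q) =
          η ^ (2 * q) * (2 : ℝ) ^ (2 * q * α * ((M + N : ℕ) : ℝ) - 2 * q * δ * r) := by
        rw [mul_assoc, Real.mul_rpow hη0.le (by positivity)]
        unfold lev
        rw [hθ, ← Real.rpow_natCast, ← Real.rpow_mul (by norm_num), ← Real.rpow_add (by norm_num),
          ← Real.rpow_mul (by norm_num)]
        congr 2; ring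
      have e3 : (2 : ℝ) ^ ((α * p - 1) * ((M + N : ℕ) : ℝ)) * 2 ^ r =
          (2 : ℝ) ^ ((α * p - 1 - 2 * q * α) * ((s + t : ℕ) : ℝ)) * ρ ^ r *
          (2 : ℝ) ^ (2 * q * α * ((M + N : ℕ) : ℝ) - 2 * q * δ * r) := by
        rw [hρ, ← Real.rpow_natCast, ← Real.rpow_natCast, ← Real.rpow_mul (by norm_num),
          ← Real.rpow_add (by norm_num), ← Real.rpow_add (by norm_num),
          ← Real.rpow_add (by norm_num), e1]
        congr 1; ring
      have h1 : η ^ (2 * q) ≠ 0 := (Real.rpow_pos_of_pos hη0 _).ne'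
      have h2 : (2 : ℝ) ^ (2 * q * α * ((M + N : ℕ) : ℝ) - 2 * q * δ * r) ≠ 0 :=
        (Real.rpow_pos_of_pos (by norm_num) _).ne'
      rw [e2, ← mul_assoc, e3, hw]
      field_simp
    · have e : (2 : ℝ) ^ ((α * p - 1) * ((M + N : ℕ) : ℝ)) * (2 ^ (M + N) *
          lev α (M + N) ^ (-p)) = 1 := by
        unfold lev
        rw [← Real.rpow_natCast 2 (M + N), ← Real.rpow_mul (by norm_num),
          ← Real.rpow_add (by norm_num), ← Real.rpow_add (by norm_num), ← Real.rpow_zero 2]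
        congr 1; ring
      rw [← mul_assoc (2 ^ (M + N)), ← mul_assoc, e, one_mul]
  · have e1 : ∑ s ∈ Finset.range (M + 1), ∑ t ∈ Finset.range (N + 1),
        (24 * (η * lev α (M + N) * θ ^ (M - s + (N - t))) + 8 * (lev α (s + t) * κ (s + t))) =
        24 * η * lev α (M + N) * ((∑ s ∈ Finset.range (M + 1), θ ^ (M - s)) *
          ∑ t ∈ Finset.range (N + 1), θ ^ (N - t)) +
        8 * lev α (M + N) * ∑ s ∈ Finset.range (M + 1), ∑ t ∈ Finset.range (N + 1),
          κ (s + t) * γ ^ (M - s + (N - t)) := by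
      rw [Finset.sum_mul_sum, Finset.mul_sum, Finset.mul_sum, ← Finset.sum_add_distrib]
      refine Finset.sum_congr rfl fun s hs' => ?_
      rw [Finset.mul_sum, Finset.mul_sum, ← Finset.sum_add_distrib]
      refine Finset.sum_congr rfl fun t ht' => ?_
      rw [hlev s t (hle s hs') (hle' t ht'), pow_add]
      ring
    have e2 : κ (M + N) ≤ ∑ s ∈ Finset.range (M + 1), ∑ t ∈ Finset.range (N + 1),
          κ (s + t) * γ ^ (M - s + (N - t)) := by
      have hn : ∀ s t, 0 ≤ κ (s + t) * γ ^ (M - s + (N - t)) := fun s t =>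
        mul_nonneg (hκ _) (by positivity)
      refine le_trans ?_ (Finset.single_le_sum (f := fun s => ∑ t ∈ Finset.range (N + 1),
          κ (s + t) * γ ^ (M - s + (N - t))) (fun s _ => Finset.sum_nonneg fun t _ => hn s t)
          (Finset.mem_range.2 (Nat.lt_succ_self M)))
      refine le_trans ?_ (Finset.single_le_sum (f := fun t =>
          κ (M + t) * γ ^ (M - M + (N - t))) (fun t _ => hn M t)
          (Finset.mem_range.2 (Nat.lt_succ_self N)))
      simp
    have g1 := sum_geom_reflect_le hθ0.le hθ1 M
    have g2 := sum_geom_reflect_le hθ0.le hθ1 N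
    have hpos : 0 < 1 - θ := sub_pos.2 hθ1
    have g3 : (∑ s ∈ Finset.range (M + 1), θ ^ (M - s)) * ∑ t ∈ Finset.range (N + 1), θ ^ (N - t) ≤
        (1 - θ)⁻¹ * (1 - θ)⁻¹ := mul_le_mul g1 g2 (Finset.sum_nonneg fun _ _ => by positivity)
          (by positivity)
    have g4 : 24 * η * lev α (M + N) * ((1 - θ)⁻¹ * (1 - θ)⁻¹) = ε / 2 * lev α (M + N) := by
      rw [hη]; field_simp; ring
    rw [e1]
    have g5 := mul_le_mul_of_nonneg_left g3 (show 0 ≤ 24 * η * lev α (M + N) by positivity)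
    have g6 := mul_le_mul_of_nonneg_left e2 hL.le
    have g7 := mul_le_mul_of_nonneg_left hMN.le hL.le
    linarith

/-! ### Signed parts and passage to dyadic indices -/

/-- The positive part (`σ = 1`) or negative part (`σ = -1`) of the field, reindexed to start
at `0`. -/
def signedPart {Ω : Type*} (σ : ℝ) (X : ℕ → ℕ → Ω → ℝ) (i j : ℕ) (ω : Ω) : ℝ :=
  max (σ * X (i + 1) (j + 1) ω) 0

/-- The rate at which moment bound `M` forces the tails of the `p`-th moments to vanish. -/
def rate (α : ℝ) (ν : ℕ) (M : ℝ) (l : ℕ) : ℝ :=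
  M * (rlog (lev α l) * logNu2 ν (lev α l))⁻¹

theorem summable_rate {α : ℝ} (hα : 0 < α) {ν : ℕ} (hν : 1 ≤ ν) (M : ℝ) :
    Summable fun l : ℕ => ((l : ℝ) + 1) * rate α ν M l := by
  have hl2 : 0 < Real.log 2 := Real.log_pos (by norm_num)
  have h : Summable fun l : ℕ => ((l : ℝ) + 1) * (rlog (lev α l) * logNu2 ν (lev α l))⁻¹ := by
    refine Summable.of_nonneg_of_le (fun l => ?_) (fun l => ?_)
      ((summable_inv_logNu2 ν hν α hα).mul_left ((α * Real.log 2)⁻¹ + (Real.log 2)⁻¹))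
    · have := rlog_pos (lev α l)
      have := logNu2_pos hν (lev α l)
      positivity
    · have h1 := rlog_two_rpow_ge (α * l)
      have h2 := log_two_le_rlog (lev α l)
      change _ ≤ rlog (lev α l) at h1
      rw [mul_inv, ← mul_assoc]
      refine mul_le_mul_of_nonneg_right ?_ (inv_pos.2 (logNu2_pos hν _)).le
      rw [← div_eq_mul_inv, div_le_iff₀ (rlog_pos _), add_mul]
      refine add_le_add ?_ ?_
      · rw [inv_mul_eq_div, le_div_iff₀ (by positivity)]; linarith
      · rw [inv_mul_eq_div, le_div_iff₀ (by positivity)]; linarith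
  refine (h.mul_left M).congr fun l => ?_
  rw [rate]; ring

/-- Both signed parts of `X` are good fields. Condition (H_{2q}) is applied to the nondecreasing
function `x ↦ σ min (max (σ x) 0) c`. -/
theorem goodField_signedPart {Ω : Type*} [MeasureSpace Ω]
    [IsProbabilityMeasure (volume : Measure Ω)] {p α q C M : ℝ} {ν : ℕ} {X : ℕ → ℕ → Ω → ℝ}
    {σ : ℝ} (hp : 1 ≤ p) (hν : 1 ≤ ν) (hq : 1 ≤ q) (hσ : σ = 1 ∨ σ = -1)
    (hmeas : ∀ m n : ℕ, 1 ≤ m → 1 ≤ n → Measurable (X m n))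
    (hC : CondHWith q C fun k : PIdx => X k.1.1 k.1.2)
    (hM : ∀ m n : ℕ, 1 ≤ m → 1 ≤ n →
      (Integrable fun ω => |X m n ω| ^ p * rlog |X m n ω| * logNu2 ν |X m n ω|) ∧
      ∫ ω, |X m n ω| ^ p * rlog |X m n ω| * logNu2 ν |X m n ω| ≤ M) :
    GoodField p α q (max C 0) (rate α ν M) (signedPart σ X) := by
  have hσ1 : |σ| = 1 := by rcases hσ with rfl | rfl <;> simp
  have hX : ∀ i j, Measurable (X (i + 1) (j + 1)) := fun i j => hmeas _ _ (by omega) (by omega)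
  have hY : ∀ i j, Measurable (signedPart σ X i j) := fun i j =>
    ((hX i j).const_mul σ).max measurable_const
  have hY0 : ∀ i j ω, 0 ≤ signedPart σ X i j ω := fun i j ω => le_max_right _ _
  have hYX : ∀ i j ω, signedPart σ X i j ω ≤ |X (i + 1) (j + 1) ω| := fun i j ω =>
    max_le ((le_abs_self _).trans (by rw [abs_mul, hσ1, one_mul])) (abs_nonneg _)
  let ψ : ℝ → ℝ := fun x => rlog x * logNu2 ν x
  have hψ0 : ∀ x, 0 < ψ x := fun x => mul_pos (rlog_pos x) (logNu2_pos hν x)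
  have hψm : Monotone ψ := fun x y hxy => mul_le_mul (rlog_mono hxy) (logNu2_mono hν hxy)
    (logNu2_pos hν x).le (rlog_pos y).le
  -- for `c ≤ |x|` the factor `ψ |x| / ψ c` is at least one
  have hdom : ∀ (i j : ℕ) (ω : Ω) (c : ℝ), c ≤ |X (i + 1) (j + 1) ω| →
      signedPart σ X i j ω ^ p ≤ (ψ c)⁻¹ * (|X (i + 1) (j + 1) ω| ^ p *
        rlog |X (i + 1) (j + 1) ω| * logNu2 ν |X (i + 1) (j + 1) ω|) := by
    intro i j ω c hc
    have h1 := Real.rpow_le_rpow (hY0 i j ω) (hYX i j ω) (by linarith : 0 ≤ p)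
    have h2 := hψm hc
    rw [inv_mul_eq_div, le_div_iff₀ (hψ0 c), mul_assoc]
    exact mul_le_mul h1 h2 (hψ0 c).le (by positivity)
  have hint : ∀ i j, Integrable fun ω => signedPart σ X i j ω ^ p := fun i j => by
    refine Integrable.mono' ((hM (i + 1) (j + 1) (by omega) (by omega)).1.const_mul (ψ 0)⁻¹)
      ((hY i j).pow_const p).aestronglyMeasurable (Eventually.of_forall fun ω => ?_)
    rw [Real.norm_eq_abs, abs_of_nonneg (Real.rpow_nonneg (hY0 i j ω) p)]
    exact hdom i j ω 0 (abs_nonneg _)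
  refine ⟨hY, hY0, hint, ?_, ?_⟩
  · intro l i j
    have hm := hM (i + 1) (j + 1) (by omega) (by omega)
    have : rate α ν M l = (ψ (lev α l))⁻¹ * M := mul_comm _ _
    rw [this]
    refine le_trans ?_ (mul_le_mul_of_nonneg_left hm.2 (inv_pos.2 (hψ0 _)).le)
    rw [← integral_const_mul]
    refine integral_mono_of_nonneg (Eventually.of_forall fun ω => tailp_nonneg p α l (hY0 i j ω))
      (hm.1.const_mul _) (Eventually.of_forall fun ω => ?_)
    simp only [tailp]
    split_ifs with hω
    · exact hdom i j ω _ (hω.le.trans (hYX i j ω))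
    · have h1 := rlog_pos |X (i + 1) (j + 1) ω|
      have h2 := logNu2_pos hν |X (i + 1) (j + 1) ω|
      have h3 := hψ0 (lev α l)
      positivity
  · intro B hB c hc A A' hA hA'
    let emb : ℕ × ℕ ↪ PIdx := ⟨fun x => ⟨(x.1 + 1, x.2 + 1), by omega, by omega⟩, fun x y e => by
      simp only [Subtype.mk.injEq, Prod.mk.injEq, Nat.add_right_cancel_iff] at e
      exact Prod.ext e.1 e.2⟩
    let f : PIdx → ℝ → ℝ := fun _ x => σ * min (max (σ * x) 0) c
    have hf : Monotone fun x : ℝ => σ * min (max (σ * x) 0) c := by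
      intro x y hxy
      rcases hσ with rfl | rfl
      · simp only [one_mul]
        exact min_le_min_right _ (max_le_max_right _ hxy)
      · simp only [neg_mul, one_mul]
        exact neg_le_neg (min_le_min_right _ (max_le_max_right _ (neg_le_neg hxy)))
    have hσsq : σ ^ 2 = 1 := by rw [← sq_abs, hσ1, one_pow]
    have hf0 : ∀ x, 0 ≤ min (max (σ * x) 0) c := fun x => le_min (le_max_right _ _) hc
    have hfabs : ∀ l x, |f l x| = min (max (σ * x) 0) c := fun l x => by
      rw [abs_mul, hσ1, one_mul, abs_of_nonneg (hf0 x)]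
    have hfle : ∀ l x, |f l x| ≤ c := fun l x => (hfabs l x).trans_le (min_le_right _ _)
    have hfmeas : ∀ l : PIdx, Measurable fun ω => f l (X l.1.1 l.1.2 ω) := fun l =>
      hf.measurable.comp (hmeas _ _ l.2.1 l.2.2)
    have hsum : ∀ ω, |∑ l ∈ B.map emb, (f l (X l.1.1 l.1.2 ω) - ∫ ω', f l (X l.1.1 l.1.2 ω'))| =
        |∑ x ∈ B, (min (signedPart σ X x.1 x.2 ω) c -
          ∫ ω', min (signedPart σ X x.1 x.2 ω') c)| := by
      intro ω
      rw [Finset.sum_map]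
      have : ∀ x ∈ B, f (emb x) (X (emb x).1.1 (emb x).1.2 ω) -
          ∫ ω', f (emb x) (X (emb x).1.1 (emb x).1.2 ω') =
          σ * (min (signedPart σ X x.1 x.2 ω) c -
          ∫ ω', min (signedPart σ X x.1 x.2 ω') c) := by
        intro x _
        rw [mul_sub, ← integral_const_mul]
        rfl
      rw [Finset.sum_congr rfl this, ← Finset.mul_sum, abs_mul, hσ1, one_mul]
    have key := hC (B.map emb) (hB.map) f (fun _ _ => hf)
      (fun l _ => integrable_of_bdd (hfmeas l) c fun ω => hfle l _)
      (fun l _ => integrable_of_bdd ((hfmeas l).pow_const 2) (c ^ 2) fun ω => by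
        rw [abs_pow]; exact pow_le_pow_left₀ (abs_nonneg _) (hfle l _) 2)
      (fun l _ => integrable_of_bdd ((hfmeas l).abs.pow_const _) (c ^ (2 * q)) fun ω => by
        rw [abs_of_nonneg (Real.rpow_nonneg (abs_nonneg _) _)]
        exact Real.rpow_le_rpow (abs_nonneg _) (hfle l _) (by linarith))
      (by
        refine integrable_of_bdd ((Finset.measurable_sum _ fun l _ =>
          (hfmeas l).sub_const _).abs.pow_const _)
          ((∑ l ∈ B.map emb, (c + |∫ ω', f l (X l.1.1 l.1.2 ω')|)) ^ (2 * q)) fun ω => ?_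
        rw [abs_of_nonneg (Real.rpow_nonneg (abs_nonneg _) _)]
        exact Real.rpow_le_rpow (abs_nonneg _) ((Finset.abs_sum_le_sum_abs _ _).trans
          (Finset.sum_le_sum fun l _ => (abs_sub _ _).trans (add_le_add_left (hfle l _) _)))
          (by linarith))
    simp only [hsum] at key
    refine key.trans ?_
    rw [Finset.card_map]
    have hs1 : (B.map emb).sup' hB.map (fun l => ∫ ω, |f l (X l.1.1 l.1.2 ω)| ^ (2 * q)) ≤ A := by
      refine Finset.sup'_le _ _ fun l hl => ?_
      obtain ⟨x, hx, rfl⟩ := Finset.mem_map.1 hl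
      simp only [hfabs]
      exact hA x hx
    have hs2 : (B.map emb).sup' hB.map (fun l => (∫ ω, (f l (X l.1.1 l.1.2 ω)) ^ 2) ^ q) ≤
        A' ^ q := by
      refine Finset.sup'_le _ _ fun l hl => ?_
      obtain ⟨x, hx, rfl⟩ := Finset.mem_map.1 hl
      refine Real.rpow_le_rpow (integral_nonneg fun ω => sq_nonneg _) ?_ (by linarith)
      refine le_trans (le_of_eq (integral_congr_ae (Eventually.of_forall fun ω => ?_))) (hA' x hx)
      simp only [f, mul_pow, hσsq, one_mul]
      rfl
    obtain ⟨x₀, hx₀⟩ := hB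
    have hs1' : 0 ≤ (B.map emb).sup' ⟨_, Finset.mem_map_of_mem emb hx₀⟩
        (fun l => ∫ ω, |f l (X l.1.1 l.1.2 ω)| ^ (2 * q)) :=
      (integral_nonneg fun ω => Real.rpow_nonneg (abs_nonneg _) _).trans
        (Finset.le_sup' (fun l => ∫ ω, |f l (X l.1.1 l.1.2 ω)| ^ (2 * q))
          (Finset.mem_map_of_mem emb hx₀))
    have hs2' : 0 ≤ (B.map emb).sup' ⟨_, Finset.mem_map_of_mem emb hx₀⟩
        (fun l => (∫ ω, (f l (X l.1.1 l.1.2 ω)) ^ 2) ^ q) :=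
      (Real.rpow_nonneg (integral_nonneg fun ω => sq_nonneg _) _).trans
        (Finset.le_sup' (fun l => (∫ ω, (f l (X l.1.1 l.1.2 ω)) ^ 2) ^ q)
          (Finset.mem_map_of_mem emb hx₀))
    refine mul_le_mul (le_max_left _ _) (add_le_add (mul_le_mul_of_nonneg_left hs1 (by positivity))
      (mul_le_mul_of_nonneg_left hs2 (by positivity))) ?_ (le_max_right _ _)
    exact add_nonneg (mul_nonneg (by positivity) hs1') (mul_nonneg (by positivity) hs2')

theorem exists_of_lt_maxDS {f : ℕ → ℕ → ℝ} {m n : ℕ} {x : ℝ} (hx : 0 ≤ x)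
    (h : x < maxDS f m n) : ∃ u ≤ m, ∃ v ≤ n,
      x < |∑ i ∈ Finset.Icc 1 u, ∑ j ∈ Finset.Icc 1 v, f i j| := by
  by_contra! hcon
  refine absurd h (not_lt.2 ?_)
  unfold maxDS maxNN
  rw [← Real.coe_toNNReal x hx, NNReal.coe_le_coe]
  refine Finset.sup_le fun y hy => Real.toNNReal_le_toNNReal ?_
  simp only [Finset.mem_product, Finset.mem_Icc] at hy
  exact hcon _ hy.1.2 _ hy.2.2

theorem sum_Icc_one_eq (f : ℕ → ℝ) (u : ℕ) :
    ∑ i ∈ Finset.Icc 1 u, f i = ∑ i ∈ Finset.range u, f (i + 1) := by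
  rw [Finset.range_eq_Ico, Finset.sum_Ico_add' f 0 u 1]
  rfl

theorem signed_sum_eq {Ω : Type*} [MeasureSpace Ω]
    [IsProbabilityMeasure (volume : Measure Ω)] {p α q C : ℝ} {κ : ℕ → ℝ} {X : ℕ → ℕ → Ω → ℝ}
    (hp : 1 ≤ p) (h₁ : GoodField p α q C κ (signedPart 1 X))
    (h₂ : GoodField p α q C κ (signedPart (-1) X)) {u v : ℕ} {ω : Ω} :
    ∑ i ∈ Finset.Icc 1 u, ∑ j ∈ Finset.Icc 1 v, (X i j ω - ∫ ω', X i j ω') =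
      ∑ i ∈ Finset.range u, ∑ j ∈ Finset.range v,
        (signedPart 1 X i j ω - ∫ ω', signedPart 1 X i j ω') -
      ∑ i ∈ Finset.range u, ∑ j ∈ Finset.range v,
        (signedPart (-1) X i j ω - ∫ ω', signedPart (-1) X i j ω') := by
  have hX : ∀ i j ω, X (i + 1) (j + 1) ω = signedPart 1 X i j ω - signedPart (-1) X i j ω := by
    intro i j ω
    simp only [signedPart, one_mul, neg_mul]
    rcases le_total (X (i + 1) (j + 1) ω) 0 with h | h
    · rw [max_eq_right h, max_eq_left (neg_nonneg.2 h)]; ring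
    · rw [max_eq_left h, max_eq_right (neg_nonpos.2 h)]; ring
  simp only [sum_Icc_one_eq, ← Finset.sum_sub_distrib]
  refine Finset.sum_congr rfl fun i _ => Finset.sum_congr rfl fun j _ => ?_
  simp only [hX]
  rw [integral_sub (h₁.integrable hp i j) (h₂.integrable hp i j)]
  ring

/-- There are at most `2^(a + b)` pairs of positive integers `(m, n)` with `2^a ≤ m < 2^(a + 1)` and
`2^b ≤ n < 2^(b + 1)`. -/
theorem card_log_fiber_le (s : Finset (ℕ × ℕ)) (c : ℕ × ℕ) :
    ((s.filter fun k => (Nat.log 2 (k.1 + 1), Nat.log 2 (k.2 + 1)) = c).card : ℝ) ≤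
      2 ^ (c.1 + c.2) := by
  have hsub : (s.filter fun k => (Nat.log 2 (k.1 + 1), Nat.log 2 (k.2 + 1)) = c) ⊆
      Finset.Ico (2 ^ c.1 - 1) (2 ^ (c.1 + 1) - 1) ×ˢ
        Finset.Ico (2 ^ c.2 - 1) (2 ^ (c.2 + 1) - 1) := by
    intro k hk
    obtain rfl := (Finset.mem_filter.1 hk).2
    have a1 := Nat.pow_log_le_self 2 (x := k.1 + 1) (by omega)
    have a2 := Nat.lt_pow_succ_log_self (b := 2) (by norm_num) (k.1 + 1)
    have b1 := Nat.pow_log_le_self 2 (x := k.2 + 1) (by omega)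
    have b2 := Nat.lt_pow_succ_log_self (b := 2) (by norm_num) (k.2 + 1)
    simp only [Finset.mem_product, Finset.mem_Ico]
    omega
  have := Finset.card_le_card hsub
  have e : ∀ a : ℕ, 2 ^ (a + 1) - 1 - (2 ^ a - 1) = 2 ^ a := fun a => by
    have := Nat.one_le_two_pow (n := a)
    rw [pow_succ]; omega
  rw [Finset.card_product, Nat.card_Ico, Nat.card_Ico, e, e, ← pow_add] at this
  exact_mod_cast this

theorem rpow_le_of_mem_dyadic {x : ℝ} {l : ℕ} (e : ℝ) (hx : 0 < x) (h1 : (2 : ℝ) ^ l ≤ x)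
    (h2 : x ≤ 4 * (2 : ℝ) ^ l) : x ^ e ≤ (4 : ℝ) ^ |e| * (2 : ℝ) ^ (e * (l : ℝ)) := by
  have hl : (0 : ℝ) < 2 ^ l := by positivity
  have hy1 : 1 ≤ x / 2 ^ l := (one_le_div hl).2 h1
  have hy2 : x / 2 ^ l ≤ 4 := (div_le_iff₀ hl).2 h2
  have e1 : (2 : ℝ) ^ (e * (l : ℝ)) = ((2 : ℝ) ^ l) ^ e := by
    rw [← Real.rpow_natCast, ← Real.rpow_mul (by norm_num), mul_comm]
  have e2 : x ^ e = (x / 2 ^ l) ^ e * ((2 : ℝ) ^ l) ^ e := by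
    rw [← Real.mul_rpow (by positivity) hl.le, div_mul_cancel₀ _ hl.ne']
  rw [e1, e2]
  refine mul_le_mul_of_nonneg_right ?_ (by positivity)
  exact (Real.rpow_le_rpow_of_exponent_le hy1 (le_abs_self e)).trans
    (Real.rpow_le_rpow (by positivity) hy2 (abs_nonneg e))

/-! ### Complete convergence -/

/-- Baum–Katz-type complete convergence theorem for dependent random fields under
a bounded moment condition. -/
theorem baum_katz_bounded_moments
    {Ω : Type*} [MeasureSpace Ω] [IsProbabilityMeasure (volume : Measure Ω)]
    (p α q : ℝ) (hp : 1 ≤ p) (hα : 1 / 2 < α) (ν : ℕ) (hν : 1 ≤ ν)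
    (hq1 : 1 ≤ q) (hq2 : p < 2 → q = 1) (hq3 : 2 ≤ p → (α * p - 1) / (2 * α - 1) < q)
    (X : ℕ → ℕ → Ω → ℝ)
    (hmeas : ∀ m n : ℕ, 1 ≤ m → 1 ≤ n → Measurable (X m n))
    (hH : CondH q fun k : PIdx => X k.1.1 k.1.2)
    (hmom : ∃ M : ℝ, ∀ m n : ℕ, 1 ≤ m → 1 ≤ n →
      (Integrable fun ω => |X m n ω| ^ p * rlog |X m n ω| * logNu2 ν |X m n ω|) ∧
      ∫ ω, |X m n ω| ^ p * rlog |X m n ω| * logNu2 ν |X m n ω| ≤ M) :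
    ∀ ε : ℝ, 0 < ε →
      Summable fun k : ℕ × ℕ =>
        (((k.1 + 1) * (k.2 + 1) : ℕ) : ℝ) ^ (α * p - 2) *
          (volume {ω | ε * (((k.1 + 1) * (k.2 + 1) : ℕ) : ℝ) ^ α <
            maxDS (fun i j => X i j ω - ∫ ω', X i j ω') (k.1 + 1) (k.2 + 1)}).toReal := by
  obtain ⟨M, hM⟩ := hmom
  obtain ⟨C, hC⟩ := hH
  intro ε hε
  have hα0 : 0 < α := by linarith
  rcases lt_or_ge (α * p) 1 with hαp | hαp
  · -- the weights alone are summable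
    have h1 : Summable fun n : ℕ => (((n + 1 : ℕ) : ℝ)) ^ (α * p - 2) :=
      (summable_nat_add_iff 1).2 (Real.summable_nat_rpow.2 (by linarith))
    refine Summable.of_nonneg_of_le (fun k => by positivity) (fun k => ?_)
      (h1.mul_of_nonneg h1 (fun _ => by positivity) (fun _ => by positivity))
    rw [Nat.cast_mul, Real.mul_rpow (by positivity) (by positivity)]
    exact mul_le_of_le_one_right (by positivity) measureReal_le_one
  have hκs := summable_rate hα0 hν M
  have hfield : ∀ σ : ℝ, σ = 1 ∨ σ = -1 →
      GoodField p α q (max C 0) (rate α ν M) (signedPart σ X) := fun σ hσ =>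
    goodField_signedPart hp hν hq1 hσ hmeas hC hM
  have hsum : ∀ σ : ℝ, σ = 1 ∨ σ = -1 → _ := fun σ hσ =>
    (hfield σ hσ).summable_dyadic hp hα hαp (le_max_right _ _) hq1 hq2 hq3 hκs
      (ε * (2 : ℝ) ^ (-(2 * α)) / 2) (by positivity)
  set Φ : ℝ → ℕ → ℕ → ℝ := fun σ a b => (volume : Measure Ω).real {ω | ∃ u ≤ 2 ^ a, ∃ v ≤ 2 ^ b,
        ε * (2 : ℝ) ^ (-(2 * α)) / 2 * lev α (a + b) <
          |∑ i ∈ Finset.range u, ∑ j ∈ Finset.range v,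
            (signedPart σ X i j ω - ∫ ω', signedPart σ X i j ω')|} with hΦ
  have hΦ0 : ∀ σ a b, 0 ≤ Φ σ a b := fun _ _ _ => measureReal_nonneg
  have hinj : Function.Injective fun k : ℕ × ℕ => (k.1 + 1, k.2 + 1) := fun k k' e => by
    simp only [Prod.mk.injEq, Nat.add_right_cancel_iff] at e
    exact Prod.ext e.1 e.2
  have hS := (((hsum 1 (Or.inl rfl)).add (hsum (-1) (Or.inr rfl))).comp_injective hinj).mul_left
    ((4 : ℝ) ^ |α * p - 2| * (2 : ℝ) ^ (-(2 * (α * p - 1))))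
  -- `m` and `n` lie in `[2^a, 2^(a+1))` and `[2^b, 2^(b+1))`, so the probability is compared with the
  -- dyadic one at `(a + 1, b + 1)`; the factor `2^(-2α) / 2` in the threshold makes up for the
  -- enlarged rectangle and for the two signed parts
  refine summable_of_fibers _ (fun k : ℕ × ℕ => (Nat.log 2 (k.1 + 1), Nat.log 2 (k.2 + 1)))
    (fun c => 2 ^ (c.1 + c.2))
    (fun c => (4 : ℝ) ^ |α * p - 2| * (2 : ℝ) ^ ((α * p - 2) * ((c.1 + c.2 : ℕ) : ℝ)) *
      (Φ 1 (c.1 + 1) (c.2 + 1) + Φ (-1) (c.1 + 1) (c.2 + 1)))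
    (fun k => by positivity) (fun c => mul_nonneg (by positivity)
      (add_nonneg (hΦ0 _ _ _) (hΦ0 _ _ _))) ?_ card_log_fiber_le (hS.congr fun c => ?_)
  · rintro ⟨m, n⟩
    obtain ⟨a, ha⟩ : ∃ a, a = Nat.log 2 (m + 1) := ⟨_, rfl⟩
    obtain ⟨b, hb⟩ : ∃ b, b = Nat.log 2 (n + 1) := ⟨_, rfl⟩
    simp only [← ha, ← hb]
    have ha1 : 2 ^ a ≤ m + 1 := by rw [ha]; exact Nat.pow_log_le_self 2 (by omega)
    have hb1 : 2 ^ b ≤ n + 1 := by rw [hb]; exact Nat.pow_log_le_self 2 (by omega)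
    have ha2 : m + 1 < 2 ^ (a + 1) := by rw [ha]; exact Nat.lt_pow_succ_log_self (by norm_num) _
    have hb2 : n + 1 < 2 ^ (b + 1) := by rw [hb]; exact Nat.lt_pow_succ_log_self (by norm_num) _
    have hx1 : (2 : ℝ) ^ (a + b) ≤ (((m + 1) * (n + 1) : ℕ) : ℝ) := by
      rw [pow_add]; exact_mod_cast Nat.mul_le_mul ha1 hb1
    have hx2 : (((m + 1) * (n + 1) : ℕ) : ℝ) ≤ 4 * (2 : ℝ) ^ (a + b) := by
      have : 4 * (2 : ℝ) ^ (a + b) = 2 ^ (a + 1) * 2 ^ (b + 1) := by ring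
      rw [this]; exact_mod_cast Nat.mul_le_mul ha2.le hb2.le
    have hthr : ε * (2 : ℝ) ^ (-(2 * α)) / 2 * lev α (a + 1 + (b + 1)) +
        ε * (2 : ℝ) ^ (-(2 * α)) / 2 * lev α (a + 1 + (b + 1)) ≤
        ε * (((m + 1) * (n + 1) : ℕ) : ℝ) ^ α := by
      have e : (2 : ℝ) ^ (-(2 * α)) * lev α (a + 1 + (b + 1)) = ((2 : ℝ) ^ (a + b)) ^ α := by
        unfold lev
        rw [← Real.rpow_natCast 2 (a + b), ← Real.rpow_mul (by norm_num),
          ← Real.rpow_add (by norm_num)]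
        congr 1; push_cast; ring
      have := mul_le_mul_of_nonneg_left (Real.rpow_le_rpow (by positivity) hx1 hα0.le) hε.le
      rw [← e] at this
      linarith
    refine mul_le_mul (rpow_le_of_mem_dyadic _ (by positivity) hx1 hx2) ?_
      ENNReal.toReal_nonneg (by positivity)
    refine le_trans (measureReal_mono ?_) (measureReal_union_le _ _)
    intro ω hω
    obtain ⟨u, hu, v, hv, huv⟩ := exists_of_lt_maxDS (by positivity) hω
    rw [signed_sum_eq hp (hfield 1 (Or.inl rfl)) (hfield (-1) (Or.inr rfl))] at huv
    have huv2 := huv.trans_le (abs_sub _ _)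
    have hu' : u ≤ 2 ^ (a + 1) := (show u ≤ m + 1 from hu).trans ha2.le
    have hv' : v ≤ 2 ^ (b + 1) := (show v ≤ n + 1 from hv).trans hb2.le
    by_contra hcon
    rw [Set.mem_union, not_or] at hcon
    have c1 := not_lt.1 fun hlt => hcon.1 ⟨u, hu', v, hv', hlt⟩
    have c2 := not_lt.1 fun hlt => hcon.2 ⟨u, hu', v, hv', hlt⟩
    linarith
  · simp only [Function.comp_apply]
    rw [← mul_add]
    have e : (2 : ℝ) ^ (-(2 * (α * p - 1))) *
        (2 : ℝ) ^ ((α * p - 1) * ((c.1 + 1 + (c.2 + 1) : ℕ) : ℝ)) =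
        2 ^ (c.1 + c.2) * (2 : ℝ) ^ ((α * p - 2) * ((c.1 + c.2 : ℕ) : ℝ)) := by
      rw [← Real.rpow_natCast 2 (c.1 + c.2), ← Real.rpow_add (by norm_num),
        ← Real.rpow_add (by norm_num)]
      congr 1; push_cast; ring
    rw [mul_assoc, ← mul_assoc ((2 : ℝ) ^ (-(2 * (α * p - 1)))), e]
    ring
end
end
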